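/- arXiv:2508.05980 — 3 statements merged into one kernel-verified Lean document; each statement's English description precedes it below -/
import Mathlib

section
/- Let s ≥ 2 and 2 ≤ r' ≤ s' be integers with s' − r' < s − 1. Let F : U → ℂ^{r'×s'} be a local orthogonal map in chart form from 𝒢(1,s) to 𝒢(r',s'), i.e. U ⊆ ℂ^{1×s} is open, connected, and contains a null point, F is holomorphic, and F(z)·F(w)ᴴ = I_{r'} for all z, w ∈ U with z·wᴴ = 1. Then F is constant on U. -/
open scoped BigOperators
open Matrix

noncomputable section

/-- Hermitian dot product of row vectors: `z ⬝ wᴴ`. -/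
def cdot {n : ℕ} (z w : Fin n → ℂ) : ℂ := ∑ i, z i * (starRingEnd ℂ) (w i)

/-- identity theorem along complex lines in a convex open set -/
lemma line_identity {E V : Type*} [NormedAddCommGroup E] [NormedSpace ℂ E]
    [NormedAddCommGroup V] [NormedSpace ℂ V] [CompleteSpace V]
    {B : Set E} (hB : IsOpen B) (hc : Convex ℝ B) {G : E → V} (hG : DifferentiableOn ℂ G B)
    {b : E} (hb : b ∈ B) {c : V} (hz : ∀ᶠ x in nhds b, G x = c) :
    ∀ x ∈ B, G x = c := by
  intro x hx
  let L : ℂ → E := fun t => b + t • (x - b)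
  have hLc : Continuous L := by fun_prop
  have hLd : Differentiable ℂ L := by fun_prop
  have hL0 : L 0 = b := by simp [L]
  have hL1 : L 1 = x := by simp [L]
  have hopen : IsOpen (L ⁻¹' B) := hB.preimage hLc
  have hconv : Convex ℝ (L ⁻¹' B) := by
    intro t ht u hu p q hp hq hpq
    have := hc ht hu hp hq hpq
    simp only [Set.mem_preimage] at *
    convert this using 1
    have h1 : (p : ℂ) + q = 1 := by exact_mod_cast hpq
    simp only [L, smul_add]
    rw [← Complex.coe_smul p b, ← Complex.coe_smul q b, ← Complex.coe_smul p (t • (x - b)),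
      ← Complex.coe_smul q (u • (x - b)), Complex.real_smul, Complex.real_smul]
    have : (q : ℂ) = 1 - p := by rw [← h1]; ring
    rw [this]
    module
  have hd : DifferentiableOn ℂ (G ∘ L) (L ⁻¹' B) :=
    hG.comp hLd.differentiableOn (fun t ht => ht)
  have ha : AnalyticOnNhd ℂ (G ∘ L) (L ⁻¹' B) := hd.analyticOnNhd hopen
  have h0 : (G ∘ L) =ᶠ[nhds 0] (fun _ => c) := by
    have : Filter.Tendsto L (nhds 0) (nhds b) := by
      have := hLc.tendsto 0
      rwa [hL0] at this
    exact this.eventually hz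
  have := ha.eqOn_of_preconnected_of_eventuallyEq (analyticOnNhd_const) hconv.isPreconnected
    (by simpa [hL0] using hb) h0
  have := this (x := 1) (by simpa [hL1] using hx)
  simpa [hL1] using this

lemma key {V ι : Type*} [NormedAddCommGroup V] [InnerProductSpace ℂ V] [FiniteDimensional ℂ V]
    [Fintype ι] (n : ℕ) : ∀ (E : Type) [NormedAddCommGroup E] [InnerProductSpace ℂ E]
    [FiniteDimensional ℂ E] (W : Submodule ℂ V) (G : E → ι → V) (ε : ℝ),
    Module.finrank ℂ W = n → n < Module.finrank ℂ E →
    0 < ε →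
    DifferentiableOn ℂ G (Metric.ball 0 ε) →
    (∀ a ∈ Metric.ball (0 : E) ε, ∀ p, G a p ∈ W) →
    (∀ a ∈ Metric.ball (0 : E) ε, ∀ b ∈ Metric.ball (0 : E) ε, inner ℂ a b = 0 →
      ∀ p q, inner ℂ (G a p) (G b q) = 0) →
    ∀ a ∈ Metric.ball (0 : E) ε, G a = 0 := by
  induction n using Nat.strong_induction_on with
  | _ n ih =>
  intro E _ _ _ W G ε hW hn hε hG hGW horth
  have : CompleteSpace V := FiniteDimensional.complete ℂ V
  -- for each `a` with `G a ≠ 0`, `G` vanishes on the orthogonal complement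
  have step : ∀ a ∈ Metric.ball (0 : E) ε, G a ≠ 0 →
      ∀ b ∈ Metric.ball (0 : E) ε, inner ℂ a b = 0 → G b = 0 := by
    intro a ha hGa b hb hab
    obtain ⟨p, hp⟩ : ∃ p, G a p ≠ 0 := by
      by_contra! h
      exact hGa (funext h)
    have ha0 : a ≠ 0 := by
      rintro rfl
      exact hp (inner_self_eq_zero.1 (horth 0 ha 0 ha (by simp) p p))
    let W' : Submodule ℂ V := W ⊓ (ℂ ∙ (G a p))ᗮ
    have hlt : W' < W := by
      refine lt_of_le_of_ne inf_le_left ?_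
      intro h
      have h1 : G a p ∈ W' := by rw [h]; exact hGW a ha p
      have h2 : G a p ∈ (ℂ ∙ (G a p))ᗮ := h1.2
      rw [Submodule.mem_orthogonal_singleton_iff_inner_right] at h2
      exact hp (inner_self_eq_zero.1 h2)
    have hfr : Module.finrank ℂ W' < n := hW ▸ Submodule.finrank_lt_finrank_of_lt hlt
    have hE' : Module.finrank ℂ ((ℂ ∙ a)ᗮ : Submodule ℂ E) + 1 = Module.finrank ℂ E := by
      have h1 := Submodule.finrank_add_finrank_orthogonal (ℂ ∙ a)
      rw [finrank_span_singleton ha0] at h1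
      omega
    have := ih _ hfr ((ℂ ∙ a)ᗮ : Submodule ℂ E) W' (fun x => G x) ε rfl (by omega) hε
      (hG.comp (Submodule.subtypeL _).differentiable.differentiableOn
        (fun x hx => by simpa using hx))
      (fun x hx q => ⟨hGW x (by simpa using hx) q, by
        refine (Submodule.mem_orthogonal_singleton_iff_inner_right).2 ?_
        exact horth a ha x (by simpa using hx)
          ((Submodule.mem_orthogonal_singleton_iff_inner_right).1 x.2) p q⟩)
      (fun x hx y hy hxy => horth x (by simpa using hx) y (by simpa using hy) hxy)
    exact this ⟨b, (Submodule.mem_orthogonal_singleton_iff_inner_right).2 hab⟩ (by simpa using hb)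
  by_contra! hcon
  obtain ⟨a, ha, hGa⟩ := hcon
  obtain ⟨p, hp⟩ : ∃ p, G a p ≠ 0 := by
    by_contra! h
    exact hGa (funext h)
  have hn0 : 0 < n := by
    rw [← hW]
    have : Nontrivial W := ⟨⟨⟨G a p, hGW a ha p⟩, 0, fun h => hp (congrArg Subtype.val h)⟩⟩
    exact Module.finrank_pos
  have hE' : Module.finrank ℂ E ≤ Module.finrank ℂ ((ℂ ∙ a)ᗮ : Submodule ℂ E) + 1 := by
    have h1 := Submodule.finrank_add_finrank_orthogonal (ℂ ∙ a)
    have h2 := finrank_span_le_card (R := ℂ) ({a} : Set E)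
    simp at h2
    omega
  obtain ⟨b₀, hb₀⟩ : ∃ b : ((ℂ ∙ a)ᗮ : Submodule ℂ E), b ≠ 0 := by
    have : Nontrivial ((ℂ ∙ a)ᗮ : Submodule ℂ E) :=
      Module.nontrivial_of_finrank_pos (R := ℂ) (by omega)
    exact exists_ne 0
  obtain ⟨b, hb, hb0, hab⟩ : ∃ b ∈ Metric.ball (0 : E) ε, b ≠ 0 ∧ inner ℂ a b = 0 := by
    have hb₀' : (b₀ : E) ≠ 0 := fun h => hb₀ (Subtype.ext h)
    have hpos : 0 < ‖(b₀ : E)‖ := norm_pos_iff.2 hb₀'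
    have hab : inner ℂ a (b₀ : E) = 0 :=
      (Submodule.mem_orthogonal_singleton_iff_inner_right).1 b₀.2
    refine ⟨((ε / 2 / ‖(b₀ : E)‖ : ℝ) : ℂ) • (b₀ : E), ?_, ?_, ?_⟩
    · rw [mem_ball_zero_iff, norm_smul, Complex.norm_real, Real.norm_of_nonneg (by positivity),
        div_mul_cancel₀ _ hpos.ne']
      linarith
    · refine smul_ne_zero ?_ hb₀'
      exact_mod_cast (by positivity : ε / 2 / ‖(b₀ : E)‖ ≠ 0)
    · rw [inner_smul_right, hab, mul_zero]
  -- the projection of `a` orthogonally to `x`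
  let P : E → E := fun x => a - ((inner ℂ x a) / (inner ℂ x x)) • x
  have hbb : inner ℂ b b ≠ (0 : ℂ) := fun h => hb0 (inner_self_eq_zero.1 h)
  have hPb : P b = a := by
    have : inner ℂ b a = (0 : ℂ) := inner_eq_zero_symm.1 hab
    simp [P, this]
  have hPc : ContinuousAt P b := by
    have h1 : ContinuousAt (fun x : E => (inner ℂ x a : ℂ)) b := by fun_prop
    have h2 : ContinuousAt (fun x : E => (inner ℂ x x : ℂ)) b := by fun_prop
    exact continuousAt_const.sub ((h1.div h2 hbb).smul continuousAt_id)
  have hev : ∀ᶠ y in nhds a, y ∈ Metric.ball (0 : E) ε ∧ G y ≠ 0 := by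
    refine (Metric.isOpen_ball.eventually_mem ha).and ?_
    exact ((hG a ha).differentiableAt (Metric.isOpen_ball.mem_nhds ha)).continuousAt.eventually_ne hGa
  have hz : ∀ᶠ x in nhds b, G x = 0 := by
    have h1 : ∀ᶠ x in nhds b, P x ∈ Metric.ball (0 : E) ε ∧ G (P x) ≠ 0 := by
      have : Filter.Tendsto P (nhds b) (nhds a) := by
        have h := hPc.tendsto
        rwa [hPb] at h
      exact this.eventually hev
    filter_upwards [h1, Metric.isOpen_ball.eventually_mem hb, isOpen_ne.eventually_mem hb0]
      with x hx hxb hx0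
    refine step _ hx.1 hx.2 x hxb ?_
    have hxx : inner ℂ x x ≠ (0 : ℂ) := fun h => hx0 (inner_self_eq_zero.1 h)
    rw [inner_eq_zero_symm]
    simp only [P, inner_sub_right, inner_smul_right]
    field_simp
    ring
  exact hGa (line_identity Metric.isOpen_ball (convex_ball _ _) hG hb hz a ha)

lemma null_const {E V ι : Type} [NormedAddCommGroup E] [InnerProductSpace ℂ E]
    [FiniteDimensional ℂ E] [NormedAddCommGroup V] [InnerProductSpace ℂ V] [FiniteDimensional ℂ V]
    [Fintype ι] [DecidableEq ι] {U : Set E} {Φ : E → ι → V}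
    (hΦ : DifferentiableOn ℂ Φ U)
    (horth : ∀ z ∈ U, ∀ w ∈ U, inner ℂ w z = 1 →
      ∀ p q, inner ℂ (Φ w q) (Φ z p) = if p = q then 1 else 0)
    (hdim : Module.finrank ℂ V + 1 < Module.finrank ℂ E + Fintype.card ι)
    {z : E} (hz : ‖z‖ = 1) {ρ : ℝ} (hρ : 0 < ρ) (hU : Metric.ball z ρ ⊆ U)
    {a : E} (ha : ‖a‖ < ρ) (haz : inner ℂ z a = 0) : Φ (z + a) = Φ z := by
  have hzz : inner ℂ z z = (1 : ℂ) := by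
    rw [inner_self_eq_norm_sq_to_K, hz]; simp
  have hzU : z ∈ U := hU (Metric.mem_ball_self hρ)
  have hz0 : z ≠ 0 := by rintro rfl; simp at hz
  have hmem : ∀ x : E, ‖x‖ < ρ → z + x ∈ U := fun x hx => hU (by simpa using hx)
  have hon : Orthonormal ℂ (Φ z) := by
    rw [orthonormal_iff_ite]
    intro i j
    rw [horth z hzU z hzU hzz j i]
    simp [eq_comm]
  let S := Submodule.span ℂ (Set.range (Φ z))
  have hS : Module.finrank ℂ S = Fintype.card ι := finrank_span_eq_card hon.linearIndependent
  have hW := Submodule.finrank_add_finrank_orthogonal S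
  have hE' : Module.finrank ℂ ((ℂ ∙ z)ᗮ : Submodule ℂ E) + 1 = Module.finrank ℂ E := by
    have h1 := Submodule.finrank_add_finrank_orthogonal (ℂ ∙ z)
    rw [finrank_span_singleton hz0] at h1
    omega
  have hin : ∀ x : ((ℂ ∙ z)ᗮ : Submodule ℂ E), inner ℂ z (x : E) = 0 := fun x =>
    (Submodule.mem_orthogonal_singleton_iff_inner_right).1 x.2
  have hin' : ∀ x : ((ℂ ∙ z)ᗮ : Submodule ℂ E), inner ℂ (x : E) z = 0 := fun x =>
    inner_eq_zero_symm.1 (hin x)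
  have := key _ ((ℂ ∙ z)ᗮ : Submodule ℂ E) Sᗮ (fun x => Φ (z + x) - Φ z) ρ rfl (by omega) hρ
    (by
      refine DifferentiableOn.sub_const (hΦ.comp ?_ ?_) _
      · exact ((Submodule.subtypeL _).differentiable.const_add z).differentiableOn
      · intro x hx
        exact hmem x (by simpa using hx))
    (by
      intro x hx p
      have hxU := hmem x (by simpa using hx)
      rw [Submodule.mem_orthogonal]
      intro u hu
      refine Submodule.span_induction ?_ ?_ ?_ ?_ hu
      · rintro _ ⟨q, rfl⟩
        rw [Pi.sub_apply, inner_sub_right, horth _ hxU _ hzU (by rw [inner_add_right, hzz, hin, add_zero]),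
          horth _ hzU _ hzU hzz, sub_self]
      · simp
      · intro u v _ _ h1 h2
        rw [inner_add_left, h1, h2, add_zero]
      · intro c u _ h1
        rw [inner_smul_left, h1, mul_zero])
    (by
      intro x hx y hy hxy p q
      have hxU := hmem x (by simpa using hx)
      have hyU := hmem y (by simpa using hy)
      have hxy' : inner ℂ (x : E) (y : E) = (0 : ℂ) := hxy
      rw [Pi.sub_apply, Pi.sub_apply, inner_sub_left, inner_sub_right, inner_sub_right,
        horth _ hyU _ hxU (by simp [inner_add_right, inner_add_left, hz, hin, hin', hxy']),
        horth _ hzU _ hxU (by simp [inner_add_left, hz, hin']),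
        horth _ hyU _ hzU (by simp [inner_add_right, hz, hin]),
        horth _ hzU _ hzU hzz]
      ring)
    ⟨a, (Submodule.mem_orthogonal_singleton_iff_inner_right).2 haz⟩ (by simpa using ha)
  exact sub_eq_zero.1 this

lemma abstract_const {E V ι : Type} [NormedAddCommGroup E] [InnerProductSpace ℂ E]
    [FiniteDimensional ℂ E] [NormedAddCommGroup V] [InnerProductSpace ℂ V] [FiniteDimensional ℂ V]
    [Fintype ι] [DecidableEq ι] {U : Set E} (hopen : IsOpen U) (hconn : IsPreconnected U)
    {Φ : E → ι → V}
    (hΦ : DifferentiableOn ℂ Φ U)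
    (horth : ∀ z ∈ U, ∀ w ∈ U, inner ℂ w z = 1 →
      ∀ p q, inner ℂ (Φ w q) (Φ z p) = if p = q then 1 else 0)
    (hdim : Module.finrank ℂ V + 1 < Module.finrank ℂ E + Fintype.card ι)
    (hE2 : 2 ≤ Module.finrank ℂ E)
    {z₀ : E} (hz₀U : z₀ ∈ U) (hz₀ : ‖z₀‖ = 1) : ∃ c, ∀ x ∈ U, Φ x = c := by
  have : CompleteSpace V := FiniteDimensional.complete ℂ V
  obtain ⟨ρ, hρ, hρ1, hρU⟩ : ∃ ρ : ℝ, 0 < ρ ∧ ρ ≤ 1 ∧ Metric.ball z₀ (3 * ρ) ⊆ U := by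
    obtain ⟨r, hr, hrU⟩ := Metric.isOpen_iff.1 hopen z₀ hz₀U
    refine ⟨min 1 (r / 3), by positivity, min_le_left _ _, ?_⟩
    refine (Metric.ball_subset_ball ?_).trans hrU
    have := min_le_right 1 (r / 3)
    linarith
  set η : ℝ := ρ ^ 2 / 3 with hη
  have hη0 : 0 < η := by positivity
  have hηρ : η < ρ := by nlinarith
  -- derivative vanishes slightly outside the sphere
  have hder : ∀ y ∈ Metric.ball z₀ η, 1 < ‖y‖ → fderiv ℂ Φ y = 0 := by
    intro y hy hy1
    have hyz : ‖y - z₀‖ < η := by simpa [dist_eq_norm] using hy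
    have hyU : y ∈ U := hρU (Metric.ball_subset_ball (by linarith) hy)
    have hyn : ‖y‖ < 1 + η := by
      have := norm_add_le z₀ (y - z₀)
      rw [add_sub_cancel, hz₀] at this
      linarith
    have hy0 : y ≠ 0 := by rintro rfl; simp at hy1; linarith
    have hdiff : DifferentiableAt ℂ Φ y := (hΦ y hyU).differentiableAt (hopen.mem_nhds hyU)
    -- tangent directions
    have htan : ∀ z : E, ‖z‖ = 1 → inner ℂ z y = 1 → ∀ v : E, inner ℂ z v = 0 →
        fderiv ℂ Φ y v = 0 := by
      intro z hz hzy v hv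
      have hzz : inner ℂ z z = (1 : ℂ) := by
        rw [inner_self_eq_norm_sq_to_K, hz]; simp
      have hperp : inner ℂ z (y - z) = (0 : ℂ) := by rw [inner_sub_right, hzy, hzz, sub_self]
      have hnorm : ‖y - z‖ < ρ := by
        have h1 := norm_add_sq_eq_norm_sq_add_norm_sq_of_inner_eq_zero z (y - z) hperp
        rw [add_sub_cancel, hz] at h1
        have : ‖y - z‖ ^ 2 < ρ ^ 2 := by nlinarith [norm_nonneg y]
        exact lt_of_pow_lt_pow_left₀ 2 hρ.le this
      have hzb : Metric.ball z ρ ⊆ U := by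
        refine subset_trans (Metric.ball_subset_ball' ?_) hρU
        have h1 : dist z z₀ ≤ dist z y + dist y z₀ := dist_triangle _ _ _
        rw [dist_comm z y, dist_eq_norm y z, dist_eq_norm y z₀] at h1
        linarith
      have hc : ∀ᶠ t : ℂ in nhds 0, Φ (y + t • v) = Φ z := by
        have hcont : Continuous fun t : ℂ => ‖(y - z) + t • v‖ := by fun_prop
        have : ∀ᶠ t : ℂ in nhds 0, ‖(y - z) + t • v‖ < ρ := by
          apply hcont.continuousAt.eventually_lt continuousAt_const
          simpa using hnorm
        filter_upwards [this] with t ht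
        have := null_const hΦ horth hdim hz hρ hzb ht
          (by rw [inner_add_right, inner_smul_right, hperp, hv]; simp)
        rw [← this]
        congr 1
        abel
      have h1 : HasDerivAt (fun t : ℂ => Φ (y + t • v)) (fderiv ℂ Φ y v) 0 :=
        (hdiff.hasFDerivAt.hasLineDerivAt v)
      have h2 : HasDerivAt (fun t : ℂ => Φ (y + t • v)) 0 0 :=
        (hasDerivAt_const (0 : ℂ) (Φ z)).congr_of_eventuallyEq hc
      exact h1.unique h2
    -- two null points
    obtain ⟨g, hg0, hgy, hgn⟩ : ∃ g : E, g ≠ 0 ∧ inner ℂ g y = 0 ∧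
        ‖g‖ ^ 2 = 1 - (‖y‖ ^ 2)⁻¹ := by
      have hE' : Module.finrank ℂ ((ℂ ∙ y)ᗮ : Submodule ℂ E) + 1 = Module.finrank ℂ E := by
        have h1 := Submodule.finrank_add_finrank_orthogonal (ℂ ∙ y)
        rw [finrank_span_singleton hy0] at h1
        omega
      obtain ⟨b₀, hb₀⟩ : ∃ b : ((ℂ ∙ y)ᗮ : Submodule ℂ E), b ≠ 0 := by
        have : Nontrivial ((ℂ ∙ y)ᗮ : Submodule ℂ E) :=
          Module.nontrivial_of_finrank_pos (R := ℂ) (by omega)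
        exact exists_ne 0
      have hb₀' : (b₀ : E) ≠ 0 := fun h => hb₀ (Subtype.ext h)
      have hpos : 0 < ‖(b₀ : E)‖ := norm_pos_iff.2 hb₀'
      have hab : inner ℂ (b₀ : E) y = 0 :=
        (Submodule.mem_orthogonal_singleton_iff_inner_left).1 b₀.2
      have hm : 0 < 1 - (‖y‖ ^ 2)⁻¹ := by
        have : (‖y‖ ^ 2)⁻¹ < 1 := inv_lt_one_of_one_lt₀ (by nlinarith)
        linarith
      have hsq : 0 < √(1 - (‖y‖ ^ 2)⁻¹) := Real.sqrt_pos.2 hm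
      refine ⟨((√(1 - (‖y‖ ^ 2)⁻¹) / ‖(b₀ : E)‖ : ℝ) : ℂ) • (b₀ : E), ?_, ?_, ?_⟩
      · refine smul_ne_zero ?_ hb₀'
        exact_mod_cast (by positivity : √(1 - (‖y‖ ^ 2)⁻¹) / ‖(b₀ : E)‖ ≠ 0)
      · rw [inner_smul_left, hab, mul_zero]
      · rw [norm_smul, Complex.norm_real, Real.norm_of_nonneg (by positivity),
          div_mul_cancel₀ _ hpos.ne', Real.sq_sqrt hm.le]
    have hyy : inner ℂ y y = ((‖y‖ ^ 2 : ℝ) : ℂ) := by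
      rw [inner_self_eq_norm_sq_to_K]; push_cast; rfl
    have hgg : inner ℂ g g = ((‖g‖ ^ 2 : ℝ) : ℂ) := by
      rw [inner_self_eq_norm_sq_to_K]; push_cast; rfl
    have hyg : inner ℂ y g = (0 : ℂ) := inner_eq_zero_symm.1 hgy
    have hypos : (‖y‖ ^ 2 : ℝ) ≠ 0 := by positivity
    have hyc : ((‖y‖ ^ 2 : ℝ) : ℂ) ≠ 0 := by exact_mod_cast hypos
    have hgc : ((‖g‖ ^ 2 : ℝ) : ℂ) ≠ 0 := by
      have : ‖g‖ ≠ 0 := norm_ne_zero_iff.2 hg0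
      exact_mod_cast pow_ne_zero 2 this
    set m : ℝ := ‖y‖ ^ 2 with hm
    set k : ℝ := ‖g‖ ^ 2 with hk
    have hz1 : ∀ σ : ℂ, σ = 1 ∨ σ = -1 →
        ‖((m⁻¹ : ℝ) : ℂ) • y + σ • g‖ = 1 ∧ inner ℂ (((m⁻¹ : ℝ) : ℂ) • y + σ • g) y = 1 := by
      intro σ hσ
      constructor
      · have h0 : inner ℂ (((m⁻¹ : ℝ) : ℂ) • y) (σ • g) = 0 := by
          rw [inner_smul_left, inner_smul_right, hyg]; simp
        have h1 := norm_add_sq_eq_norm_sq_add_norm_sq_of_inner_eq_zero _ _ h0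
        have hσ1 : ‖σ‖ = 1 := by rcases hσ with rfl | rfl <;> simp
        rw [norm_smul, norm_smul, hσ1, Complex.norm_real, Real.norm_of_nonneg (by positivity)] at h1
        have h2 : ‖((m⁻¹ : ℝ) : ℂ) • y + σ • g‖ ^ 2 = 1 := by
          have h3 : m⁻¹ * ‖y‖ * (m⁻¹ * ‖y‖) = m⁻¹ := by
            have : m⁻¹ * ‖y‖ * (m⁻¹ * ‖y‖) = m⁻¹ * m⁻¹ * m := by rw [hm]; ring
            rw [this]; field_simp
          rw [h3] at h1
          nlinarith
        nlinarith [norm_nonneg (((m⁻¹ : ℝ) : ℂ) • y + σ • g)]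
      · rw [inner_add_left, inner_smul_left, inner_smul_left, hyy, hgy, Complex.conj_ofReal]
        push_cast
        simp [hyc]
    obtain ⟨hp1, hp2⟩ := hz1 1 (Or.inl rfl)
    obtain ⟨hm1, hm2⟩ := hz1 (-1) (Or.inr rfl)
    set zp := ((m⁻¹ : ℝ) : ℂ) • y + (1 : ℂ) • g with hzp
    set zm := ((m⁻¹ : ℝ) : ℂ) • y + (-1 : ℂ) • g with hzm
    have hpg : inner ℂ zp g = (k : ℂ) := by
      rw [hzp, inner_add_left, inner_smul_left, inner_smul_left, hyg, hgg]; simp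
    have hmg : inner ℂ zm g = -(k : ℂ) := by
      rw [hzm, inner_add_left, inner_smul_left, inner_smul_left, hyg, hgg]; simp
    let x : E := g + (k : ℂ) • y
    have hxm : inner ℂ zm x = (0 : ℂ) := by
      simp only [x, inner_add_right, inner_smul_right, hmg, hm2]; ring
    have hxp : inner ℂ zp x = 2 * (k : ℂ) := by
      simp only [x, inner_add_right, inner_smul_right, hpg, hp2]; ring
    ext1 v
    have e1 := htan zp hp1 hp2 (v - (inner ℂ zp v / (2 * (k : ℂ))) • x) (by
      rw [inner_sub_right, inner_smul_right, hxp]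
      field_simp
      ring)
    have e2 := htan zm hm1 hm2 x hxm
    rw [map_sub, map_smul, e2, smul_zero, sub_zero] at e1
    simpa using e1
  -- a point just outside the sphere, with Φ locally constant
  obtain ⟨y₀, hy₀U, c, hc⟩ : ∃ y₀ ∈ U, ∃ c, ∀ᶠ x in nhds y₀, Φ x = c := by
    let y₀ : E := ((1 + η / 2 : ℝ) : ℂ) • z₀
    have hy1 : 1 < ‖y₀‖ := by
      simp only [y₀]
      rw [norm_smul, Complex.norm_real, Real.norm_of_nonneg (by positivity), hz₀]
      linarith
    have hy2 : y₀ ∈ Metric.ball z₀ η := by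
      have : y₀ - z₀ = ((η / 2 : ℝ) : ℂ) • z₀ := by
        simp only [y₀]; push_cast; module
      rw [mem_ball_iff_norm, this, norm_smul, Complex.norm_real,
        Real.norm_of_nonneg (by positivity), hz₀]
      linarith
    have hO : IsOpen (Metric.ball z₀ η ∩ {y | 1 < ‖y‖}) :=
      Metric.isOpen_ball.inter (isOpen_lt continuous_const continuous_norm)
    obtain ⟨r, hr, hrO⟩ := Metric.isOpen_iff.1 hO y₀ ⟨hy2, hy1⟩
    have hsub : Metric.ball z₀ η ⊆ U := (Metric.ball_subset_ball (by linarith)).trans hρU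
    refine ⟨y₀, hsub hy2, Φ y₀, ?_⟩
    filter_upwards [Metric.ball_mem_nhds y₀ hr] with x hx
    refine Metric.isOpen_ball.is_const_of_fderiv_eq_zero (𝕜 := ℂ) (s := Metric.ball y₀ r)
      (convex_ball _ _).isPreconnected ?_ ?_ hx (Metric.mem_ball_self hr)
    · exact hΦ.mono (fun u hu => hsub (hrO hu).1)
    · intro u hu
      exact hder u (hrO hu).1 (hrO hu).2
  refine ⟨c, ?_⟩
  have hsub : U ⊆ {y | ∀ᶠ x in nhds y, Φ x = c} := by
    refine hconn.subset_of_closure_inter_subset isOpen_setOfPred_eventually_nhds ⟨y₀, hy₀U, hc⟩ ?_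
    rintro y ⟨hy, hyU⟩
    obtain ⟨r, hr, hrU⟩ := Metric.isOpen_iff.1 hopen y hyU
    obtain ⟨b, hb, hyb⟩ := Metric.mem_closure_iff.1 hy r hr
    have := line_identity Metric.isOpen_ball (convex_ball y r) (hΦ.mono hrU)
      (b := b) (by rwa [Metric.mem_ball, dist_comm]) hb
    filter_upwards [Metric.ball_mem_nhds y hr] with x hx using this x hx
  intro x hx
  exact (hsub hx).self_of_nhds

/-- Let `s ≥ 2` and `2 ≤ r' ≤ s'` with `s' − r' < s − 1`.  A local
orthogonal map in chart form from `𝒢(1,s)` to `𝒢(r',s')` (a holomorphic `F` on an open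
connected `U ⊆ ℂ^{1×s}` containing a null point, with `F(z)·F(w)ᴴ = I` whenever
`z·wᴴ = 1`) is constant on `U`. -/
theorem constancy_small_codim
    (s r' s' : ℕ) (hs : 2 ≤ s) (hr' : 2 ≤ r') (hr's' : r' ≤ s')
    (hcodim : (s' : ℤ) - (r' : ℤ) < (s : ℤ) - 1)
    (U : Set (Fin s → ℂ)) (hopen : IsOpen U) (hconn : IsPreconnected U)
    (hnull : ∃ z ∈ U, cdot z z = 1)
    (F : (Fin s → ℂ) → Fin r' → Fin s' → ℂ)
    (hF : DifferentiableOn ℂ F U)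
    (horth : ∀ z ∈ U, ∀ w ∈ U, cdot z w = 1 →
      Matrix.of (F z) * (Matrix.of (F w))ᴴ = (1 : Matrix (Fin r') (Fin r') ℂ)) :
    ∀ z ∈ U, ∀ w ∈ U, F z = F w := by
  let e := EuclideanSpace.equiv (Fin s) ℂ
  let e' := EuclideanSpace.equiv (Fin s') ℂ
  let Φ : EuclideanSpace ℂ (Fin s) → Fin r' → EuclideanSpace ℂ (Fin s') :=
    fun x p => e'.symm (F (e x) p)
  have hin : ∀ (n : ℕ) (x y : EuclideanSpace ℂ (Fin n)), inner ℂ x y =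
      cdot (y : Fin n → ℂ) (x : Fin n → ℂ) := by
    intro n x y
    simp [cdot, PiLp.inner_apply]
  obtain ⟨z₀, hz₀U, hz₀⟩ := hnull
  have hn : ‖e.symm z₀‖ = 1 := by
    have h1 : inner ℂ (e.symm z₀) (e.symm z₀) = (1 : ℂ) := by
      rw [hin]; exact hz₀
    have h2 : ‖e.symm z₀‖ ^ 2 = 1 := by
      rw [← inner_self_eq_norm_sq (𝕜 := ℂ), h1]; simp
    nlinarith [norm_nonneg (e.symm z₀)]
  obtain ⟨c, hc⟩ := abstract_const (U := e ⁻¹' U) (Φ := Φ) (z₀ := e.symm z₀)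
    (hopen.preimage e.continuous)
    (by
      have : e ⁻¹' U = e.symm '' U := by
        ext x; constructor
        · intro h; exact ⟨e x, h, e.symm_apply_apply x⟩
        · rintro ⟨y, hy, rfl⟩; simpa using hy
      rw [this]
      exact hconn.image _ e.symm.continuous.continuousOn)
    (by
      rw [differentiableOn_pi]
      intro p
      have h1 : DifferentiableOn ℂ (fun x => F (e x)) (e ⁻¹' U) :=
        hF.comp e.differentiable.differentiableOn (fun x hx => hx)
      rw [differentiableOn_pi] at h1
      exact e'.symm.differentiable.comp_differentiableOn (h1 p))
    (by
      intro z hz w hw hzw p q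
      have := horth (e z) hz (e w) hw (by rw [hin] at hzw; exact hzw)
      have := congrFun (congrFun this p) q
      rw [Matrix.one_apply] at this
      rw [← this, hin]
      simp [cdot, Matrix.mul_apply, Φ, e'])
    (by simp; omega) (by simpa using hs) (by simpa using hz₀U) hn
  intro z hz w hw
  have h1 := hc (e.symm z) (by simpa using hz)
  have h2 := hc (e.symm w) (by simpa using hw)
  have h3 := h1.trans h2.symm
  funext p
  have := congrFun h3 p
  simpa [Φ] using this
end
end

section
/- Let s ≥ 2 and 2 ≤ r' ≤ s' be integers with s − 1 ≤ s' − r' < 2s − 2. Let F : U → ℂ^{r'×s'} be a nonconstant local orthogonal map in chart form from 𝒢(1,s) to 𝒢(r',s'). Then there exist a (1,s)-unitary matrix M ∈ GL(1+s, ℂ) and an (r',s')-unitary matrix M' ∈ GL(r'+s', ℂ) such that for every z ∈ U, rowSpan([I_{r'} | F(z)] · M') = rowSpan(Φ((1, z) · M)); i.e. after composing with automorphisms of 𝒢(1,s) and 𝒢(r',s'), F is the standard linear embedding [z₀, z] ↦ (I 0 I 0 0; 0 z₀ 0 z 0). -/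
open scoped BigOperators
open Matrix

noncomputable section

/-- Signature matrix `I_{a,b} = diag(I_a, −I_b)`. -/
def sigMat (a b : ℕ) : Matrix (Fin (a + b)) (Fin (a + b)) ℂ :=
  Matrix.diagonal fun i => if (i : ℕ) < a then (1 : ℂ) else -1

/-- Row span of a matrix: the ℂ-linear span of its rows. -/
def rowSpan {m n : ℕ} (A : Matrix (Fin m) (Fin n) ℂ) : Submodule ℂ (Fin n → ℂ) :=
  Submodule.span ℂ (Set.range fun i => A i)

/-- The chart matrix `[I_r | Z]`. -/
def chartMat (r s : ℕ) (Z : Matrix (Fin r) (Fin s) ℂ) : Matrix (Fin r) (Fin (r + s)) ℂ :=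
  Matrix.of fun i j =>
    if h : (j : ℕ) < r then (if (i : ℕ) = (j : ℕ) then 1 else 0)
    else Z i ⟨(j : ℕ) - r, by have := j.isLt; omega⟩

/-- The row vector `(1, z) ∈ ℂ^{1+s}`. -/
def onecons {s : ℕ} (z : Fin s → ℂ) : Fin (1 + s) → ℂ :=
  fun j => if h : (j : ℕ) = 0 then 1 else z ⟨(j : ℕ) - 1, by have := j.isLt; omega⟩

/-- For a row vector `v = (v₀, v₁, …, v_s) ∈ ℂ^{1+s}`, `Phi r' s' s v` is the
`r'×(r'+s')` matrix with column blocks of sizes `r'−1, 1, r'−1, s, s'−s−r'+1`, whose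
first `r'−1` rows form the block row `[I_{r'−1}, 0, I_{r'−1}, 0, 0]` and whose last row
is `[0, v₀, 0, (v₁,…,v_s), 0]`. -/
def Phi (r' s' s : ℕ) (v : Fin (1 + s) → ℂ) : Matrix (Fin r') (Fin (r' + s')) ℂ :=
  Matrix.of fun i j =>
    if (i : ℕ) < r' - 1 then
      if (j : ℕ) < r' - 1 then (if (i : ℕ) = (j : ℕ) then 1 else 0)
      else if r' ≤ (j : ℕ) ∧ (j : ℕ) < 2 * r' - 1 then
        (if (i : ℕ) = (j : ℕ) - r' then 1 else 0)
      else 0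
    else
      if (j : ℕ) = r' - 1 then v ⟨0, by omega⟩
      else if h : 2 * r' - 1 ≤ (j : ℕ) ∧ (j : ℕ) < 2 * r' - 1 + s then
        v ⟨(j : ℕ) - (2 * r' - 1) + 1, by omega⟩
      else 0


section part1
open Set Filter Topology

lemma cdot_add_left {n : ℕ} (x y w : Fin n → ℂ) : cdot (x + y) w = cdot x w + cdot y w := by
  simp [cdot, add_mul, Finset.sum_add_distrib]

lemma cdot_add_right {n : ℕ} (x y w : Fin n → ℂ) : cdot w (x + y) = cdot w x + cdot w y := by
  simp [cdot, mul_add, Finset.sum_add_distrib]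

lemma cdot_sub_left {n : ℕ} (x y w : Fin n → ℂ) : cdot (x - y) w = cdot x w - cdot y w := by
  simp [cdot, sub_mul, Finset.sum_sub_distrib]

lemma cdot_sub_right {n : ℕ} (x y w : Fin n → ℂ) : cdot w (x - y) = cdot w x - cdot w y := by
  simp [cdot, mul_sub, Finset.sum_sub_distrib]

lemma cdot_smul_left {n : ℕ} (c : ℂ) (x w : Fin n → ℂ) : cdot (c • x) w = c * cdot x w := by
  simp [cdot, Finset.mul_sum, mul_assoc]

lemma cdot_smul_right {n : ℕ} (c : ℂ) (x w : Fin n → ℂ) :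
    cdot w (c • x) = (starRingEnd ℂ) c * cdot w x := by
  simp only [cdot, Finset.mul_sum]
  refine Finset.sum_congr rfl fun i _ => ?_
  simp; ring

lemma cdot_conj {n : ℕ} (x w : Fin n → ℂ) : (starRingEnd ℂ) (cdot x w) = cdot w x := by
  simp [cdot, mul_comm]

lemma cdot_zero_left {n : ℕ} (w : Fin n → ℂ) : cdot 0 w = 0 := by simp [cdot]
lemma cdot_zero_right {n : ℕ} (w : Fin n → ℂ) : cdot w 0 = 0 := by simp [cdot]

lemma cdot_sum_left {n : ℕ} {ι : Type*} (S : Finset ι) (x : ι → Fin n → ℂ) (w : Fin n → ℂ) :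
    cdot (∑ i ∈ S, x i) w = ∑ i ∈ S, cdot (x i) w := by
  classical
  induction S using Finset.induction_on with
  | empty => simp [cdot_zero_left]
  | insert a S ha ih => simp [Finset.sum_insert ha, cdot_add_left, ih]

lemma cdot_sum_right {n : ℕ} {ι : Type*} (S : Finset ι) (x : ι → Fin n → ℂ) (w : Fin n → ℂ) :
    cdot w (∑ i ∈ S, x i) = ∑ i ∈ S, cdot w (x i) := by
  classical
  induction S using Finset.induction_on with
  | empty => simp [cdot_zero_right]
  | insert a S ha ih => simp [Finset.sum_insert ha, cdot_add_right, ih]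

/-- squared euclidean norm -/
def nsq {n : ℕ} (z : Fin n → ℂ) : ℝ := ∑ i, ‖z i‖ ^ 2

lemma cdot_self {n : ℕ} (z : Fin n → ℂ) : cdot z z = (nsq z : ℂ) := by
  simp only [cdot, nsq, Complex.mul_conj, Complex.normSq_eq_norm_sq]
  push_cast; rfl

lemma nsq_nonneg {n : ℕ} (z : Fin n → ℂ) : 0 ≤ nsq z :=
  Finset.sum_nonneg fun i _ => by positivity

lemma nsq_eq_zero {n : ℕ} {z : Fin n → ℂ} (h : nsq z = 0) : z = 0 := by
  unfold nsq at h
  rw [Finset.sum_eq_zero_iff_of_nonneg (fun i _ => by positivity)] at h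
  ext i
  have := h i (Finset.mem_univ _)
  simpa using this

lemma nsq_pos {n : ℕ} {z : Fin n → ℂ} (h : z ≠ 0) : 0 < nsq z :=
  lt_of_le_of_ne (nsq_nonneg z) fun h' => h (nsq_eq_zero h'.symm)

lemma cdot_self_eq_zero {n : ℕ} {z : Fin n → ℂ} (h : cdot z z = 0) : z = 0 := by
  rw [cdot_self] at h
  exact nsq_eq_zero (by exact_mod_cast h)

lemma nsq_eq_one {n : ℕ} {z : Fin n → ℂ} (h : cdot z z = 1) : nsq z = 1 := by
  rw [cdot_self] at h
  exact_mod_cast h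

lemma continuous_nsq {n : ℕ} : Continuous (nsq : (Fin n → ℂ) → ℝ) := by
  unfold nsq; fun_prop

/-- holomorphic along holomorphic curves -/
def CH {E : Type*} [NormedAddCommGroup E] [NormedSpace ℂ E] (V : Set E) (h : E → ℂ) : Prop :=
  ∀ (D : Set ℂ) (γ : ℂ → E), IsOpen D → DifferentiableOn ℂ γ D → MapsTo γ D V →
    DifferentiableOn ℂ (fun t => h (γ t)) D

lemma CH.of_diff {E : Type*} [NormedAddCommGroup E] [NormedSpace ℂ E] {V : Set E} {h : E → ℂ}
    (hh : DifferentiableOn ℂ h V) : CH V h :=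
  fun _ _ _ hγ hm => hh.comp hγ hm

lemma CH.mul {E : Type*} [NormedAddCommGroup E] [NormedSpace ℂ E] {V : Set E} {h g : E → ℂ}
    (hh : CH V h) (hg : CH V g) : CH V (fun x => h x * g x) :=
  fun D γ hD hγ hm => (hh D γ hD hγ hm).mul (hg D γ hD hγ hm)

lemma line_convex {E : Type*} [NormedAddCommGroup E] [NormedSpace ℂ E] {V : Set E}
    (hV : Convex ℝ V) (x y : E) : Convex ℝ {l : ℂ | x + l • y ∈ V} := by
  intro a ha b hb c d hc hd hcd
  have := hV ha hb hc hd hcd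
  have e : x + (c • a + d • b) • y = c • (x + a • y) + d • (x + b • y) := by
    have h1 : c • x + d • x = x := by rw [← add_smul, hcd, one_smul]
    rw [smul_add, smul_add, add_smul, smul_assoc, smul_assoc]
    nth_rewrite 1 [← h1]
    abel
  show x + (c • a + d • b) • y ∈ V
  rw [e]; exact this

lemma CH.identity {E : Type*} [NormedAddCommGroup E] [NormedSpace ℂ E] {U : Set E} {h : E → ℂ}
    (hU : IsOpen U) (hc : IsPreconnected U) (hh : CH U h) {x0 : E} (hx0 : x0 ∈ U)
    (h0 : ∀ᶠ x in 𝓝 x0, h x = 0) : ∀ x ∈ U, h x = 0 := by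
  set T : Set E := {x | ∀ᶠ y in 𝓝 x, h y = 0} with hT
  have hTo : IsOpen T := by
    rw [isOpen_iff_mem_nhds]
    intro x hx
    exact hx.eventually_nhds
  have key : U ⊆ T := by
    refine hc.subset_of_closure_inter_subset hTo ⟨x0, hx0, h0⟩ ?_
    rintro z ⟨hz, hzU⟩
    obtain ⟨ε, hε, hball⟩ := Metric.isOpen_iff.1 hU z hzU
    obtain ⟨t, htT, htz⟩ := Metric.mem_closure_iff.1 hz ε hε
    have ht : t ∈ Metric.ball z ε := by rwa [Metric.mem_ball, dist_comm]
    refine Filter.mem_of_superset (Metric.ball_mem_nhds z hε) ?_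
    intro w hw
    set γ : ℂ → E := fun l => t + l • (w - t) with hγ
    have hγd : Differentiable ℂ γ := by intro x; fun_prop
    set D := γ ⁻¹' (Metric.ball z ε) with hD
    have hDo : IsOpen D := Metric.isOpen_ball.preimage hγd.continuous
    have hDc : IsPreconnected D := (line_convex (convex_ball z ε) t (w - t)).isPreconnected
    have hd : DifferentiableOn ℂ (fun l => h (γ l)) D :=
      hh D γ hDo hγd.differentiableOn (fun l hl => hball hl)
    have h0D : (0 : ℂ) ∈ D := by simpa [hD, hγ] using ht
    have hz0 : (fun l => h (γ l)) =ᶠ[𝓝 0] 0 := by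
      have : Tendsto γ (𝓝 0) (𝓝 t) := by
        have := hγd.continuous.tendsto 0
        simpa [hγ] using this
      exact this.eventually htT
    have := (hd.analyticOnNhd hDo).eqOn_zero_of_preconnected_of_eventuallyEq_zero hDc h0D hz0
      (x := 1) (by simpa [hD, hγ] using hw)
    simpa [hγ] using this
  intro x hx
  exact (key hx).self_of_nhds

lemma freq_real {P : ℂ → Prop} (h : ∀ᶠ t : ℝ in 𝓝 0, P t) : ∃ᶠ z in 𝓝[≠] (0 : ℂ), P z := by
  have ht : Tendsto (fun t : ℝ => (t : ℂ)) (𝓝[≠] 0) (𝓝[≠] 0) := by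
    refine tendsto_nhdsWithin_iff.2 ⟨?_, ?_⟩
    · exact (Complex.continuous_ofReal.tendsto' 0 0 (by simp)).mono_left nhdsWithin_le_nhds
    · filter_upwards [self_mem_nhdsWithin] with t ht
      simpa using ht
  exact ht.frequently (h.filter_mono nhdsWithin_le_nhds).frequently

lemma exists_orth {s : ℕ} (hs : 2 ≤ s) (p : Fin s → ℂ) : ∃ ζ : Fin s → ℂ, ζ ≠ 0 ∧ cdot ζ p = 0 := by
  let f : (Fin s → ℂ) →ₗ[ℂ] ℂ :=
    { toFun := fun z => cdot z p
      map_add' := fun x y => cdot_add_left x y p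
      map_smul' := fun c x => cdot_smul_left c x p }
  have : LinearMap.ker f ≠ ⊥ := LinearMap.ker_ne_bot_of_finrank_lt (by simp; omega)
  obtain ⟨x, hx, hx0⟩ := (Submodule.ne_bot_iff _).1 this
  exact ⟨x, hx0, hx⟩

end part1

section part2
open Set Filter Topology

/-- Step 1 of the uniqueness lemma. -/
lemma lemB1 {s : ℕ} {V : Set (Fin s → ℂ)} (hV : IsOpen V)
    (hVc : Convex ℝ V) {h : (Fin s → ℂ) × (Fin s → ℂ) → ℂ} (hh : CH (V ×ˢ V) h)
    (h0 : ∀ z ∈ V, ∀ w ∈ V, cdot w w = 1 → cdot z w = 1 → h (z, w) = 0)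
    {z w : Fin s → ℂ} (hz : z ∈ V) (hw : w ∈ V) (hzw : cdot z w = 1) (hz1 : 1 < nsq z)
    (hu : w - ((nsq z : ℂ)⁻¹) • z ≠ 0)
    (hw0 : ((nsq z : ℂ)⁻¹) • z + ((√((1 - (nsq z)⁻¹) / nsq (w - ((nsq z : ℂ)⁻¹) • z)) : ℝ) : ℂ) •
      (w - ((nsq z : ℂ)⁻¹) • z) ∈ V) : h (z, w) = 0 := by
  set u := w - ((nsq z : ℂ)⁻¹) • z with hudef
  set l0 : ℝ := √((1 - (nsq z)⁻¹) / nsq u) with hl0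
  have hzne : (nsq z : ℂ) ≠ 0 := by
    have : nsq z ≠ 0 := by linarith
    exact_mod_cast this
  have hl0pos : 0 < l0 := by
    apply Real.sqrt_pos.2
    apply div_pos _ (nsq_pos hu)
    have := inv_lt_one_of_one_lt₀ hz1
    linarith
  have hl0sq : l0 ^ 2 * nsq u = 1 - (nsq z)⁻¹ := by
    rw [hl0, Real.sq_sqrt]
    · have := (nsq_pos hu).ne'
      field_simp
    · apply div_nonneg _ (nsq_nonneg u)
      have := inv_lt_one_of_one_lt₀ hz1
      linarith
  have hzu : cdot z u = 0 := by
    rw [hudef, cdot_sub_right, cdot_smul_right, hzw, cdot_self]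
    simp [hzne]
  have huz : cdot u z = 0 := by rw [← cdot_conj, hzu]; simp
  set γ : ℂ → (Fin s → ℂ) × (Fin s → ℂ) := fun l => (z, ((nsq z : ℂ)⁻¹) • z + l • u) with hγ
  set D : Set ℂ := {l | ((nsq z : ℂ)⁻¹) • z + l • u ∈ V} with hD
  have hγd : Differentiable ℂ γ := by intro x; fun_prop
  have hDo : IsOpen D := hV.preimage (by fun_prop)
  have hDc : IsPreconnected D := (line_convex hVc _ _).isPreconnected
  have hd : DifferentiableOn ℂ (fun l => h (γ l)) D :=
    hh D γ hDo hγd.differentiableOn (fun l hl => ⟨hz, hl⟩)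
  have hl0D : (l0 : ℂ) ∈ D := hw0
  have hcirc : ∀ l ∈ D, ‖l‖ = l0 → h (γ l) = 0 := by
    intro l hl hll
    apply h0 z hz _ hl
    · simp only [cdot_add_left, cdot_add_right, cdot_smul_left, cdot_smul_right, hzu, huz,
        cdot_self z, cdot_self u]
      have : l * (starRingEnd ℂ) l = ((l0 ^ 2 : ℝ) : ℂ) := by
        rw [Complex.mul_conj, Complex.normSq_eq_norm_sq, hll]
      have h2 : ((l0 ^ 2 : ℝ) : ℂ) * nsq u = 1 - (nsq z : ℂ)⁻¹ := by exact_mod_cast hl0sq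
      simp only [map_inv₀, Complex.conj_ofReal, mul_zero, add_zero, zero_add]
      have h3 : (nsq z : ℂ)⁻¹ * (nsq z : ℂ) = 1 := inv_mul_cancel₀ hzne
      linear_combination h2 + (nsq u : ℂ) * this + (nsq z : ℂ)⁻¹ * h3
    · simp only [cdot_add_right, cdot_smul_right, hzu, cdot_self]
      simp [hzne]
  have hfreq : ∃ᶠ l in 𝓝[≠] (l0 : ℂ), h (γ l) = 0 := by
    have hder : HasDerivAt (fun θ : ℂ => (l0 : ℂ) * Complex.exp (θ * Complex.I))
        ((l0 : ℂ) * (Complex.exp (0 * Complex.I) * (1 * Complex.I))) 0 :=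
      (((hasDerivAt_id (0 : ℂ)).mul_const Complex.I).cexp).const_mul _
    have ht := hder.tendsto_nhdsNE (by simp [hl0pos.ne'])
    have e0 : (l0 : ℂ) * Complex.exp (0 * Complex.I) = l0 := by simp
    rw [e0] at ht
    refine ht.frequently (freq_real ?_)
    have hcont : Tendsto (fun t : ℝ => (l0 : ℂ) * Complex.exp (t * Complex.I)) (𝓝 0) (𝓝 l0) := by
      refine Continuous.tendsto' (by fun_prop) _ _ (by simp)
    filter_upwards [hcont.eventually (hDo.mem_nhds hl0D)] with t ht
    refine hcirc _ ht ?_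
    rw [norm_mul, Complex.norm_exp_ofReal_mul_I]
    simp [abs_of_pos hl0pos]
  have := (hd.analyticOnNhd hDo).eqOn_zero_of_preconnected_of_frequently_eq_zero hDc hl0D hfreq
    (x := 1) (by simpa [hD, hudef] using hw)
  simpa [hγ, hudef] using this

lemma exp_two {η : ℝ} (hη : 0 < η) {g : ℂ → ℂ → ℂ}
    (h1 : ∀ y ∈ Metric.ball (0 : ℂ) η, DifferentiableOn ℂ (fun x => g x y) (Metric.ball 0 η))
    (h2 : ∀ x ∈ Metric.ball (0 : ℂ) η, DifferentiableOn ℂ (fun y => g x y) (Metric.ball 0 η))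
    (h0 : ∀ x y : ℝ, |x| < η → |y| < η → g x y = 0) :
    ∀ x ∈ Metric.ball (0 : ℂ) η, ∀ y ∈ Metric.ball (0 : ℂ) η, g x y = 0 := by
  have hpre : IsPreconnected (Metric.ball (0 : ℂ) η) := (convex_ball _ _).isPreconnected
  have h0m : (0 : ℂ) ∈ Metric.ball (0 : ℂ) η := by simpa using hη
  have hev : ∀ᶠ t : ℝ in 𝓝 0, |t| < η := by
    have := Metric.ball_mem_nhds (0 : ℝ) hη
    filter_upwards [this] with t ht
    simpa using ht
  have hA : ∀ x ∈ Metric.ball (0 : ℂ) η, ∀ y : ℝ, |y| < η → g x y = 0 := by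
    intro x hx y hy
    refine ((h1 y (by simpa using hy)).analyticOnNhd
      Metric.isOpen_ball).eqOn_zero_of_preconnected_of_frequently_eq_zero hpre h0m
      (freq_real ?_) hx
    filter_upwards [hev] with t ht using h0 t y ht hy
  intro x hx y hy
  refine ((h2 x hx).analyticOnNhd
      Metric.isOpen_ball).eqOn_zero_of_preconnected_of_frequently_eq_zero hpre h0m
      (freq_real ?_) hy
  filter_upwards [hev] with t ht using hA x hx t ht

lemma cont_cdot {n : ℕ} {X : Type*} [TopologicalSpace X] {f g : X → Fin n → ℂ} (hf : Continuous f)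
    (hg : Continuous g) : Continuous (fun x => cdot (f x) (g x)) := by
  unfold cdot; fun_prop

lemma lemB2 {s : ℕ} {V : Set (Fin s → ℂ)}
    {p zs : Fin s → ℂ} (hzsp : cdot zs p = 1)
    {h : (Fin s → ℂ) × (Fin s → ℂ) → ℂ} (hh : CH (V ×ˢ V) h)
    (hG : ∀ᶠ q in 𝓝 (zs, p), cdot q.1 q.2 = 1 → h q = 0)
    (e4 : ∀ᶠ q in 𝓝 (zs, p), q ∈ V ×ˢ V) : ∀ᶠ q in 𝓝 (zs, p), h q = 0 := by
  -- Step 2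
  let Ψ : ((Fin s → ℂ) × (Fin s → ℂ)) × (ℂ × ℂ) → (Fin s → ℂ) × (Fin s → ℂ) := fun q =>
    (Complex.exp (q.2.1 + Complex.I * q.2.2) • q.1.1,
      (((starRingEnd ℂ) (cdot q.1.1 q.1.2))⁻¹ * Complex.exp (-q.2.1 + Complex.I * q.2.2)) • q.1.2)
  have hΨc : ContinuousAt Ψ ((zs, p), (0, 0)) := by
    refine ContinuousAt.prodMk ?_ ?_
    · exact Continuous.continuousAt (by fun_prop)
    · refine ContinuousAt.fun_smul (ContinuousAt.fun_mul (ContinuousAt.inv₀ ?_ ?_) ?_) ?_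
      · refine Complex.continuous_conj.continuousAt.comp ?_
        exact (cont_cdot (by fun_prop) (by fun_prop)).continuousAt
      · simp [hzsp]
      · exact Continuous.continuousAt (by fun_prop)
      · exact Continuous.continuousAt (by fun_prop)
  have hΨ0 : Ψ ((zs, p), (0, 0)) = (zs, p) := by simp [Ψ, hzsp]
  have hev := hΨc.tendsto
  rw [hΨ0] at hev
  have hev2 := hev.eventually (hG.and e4)
  rw [nhds_prod_eq, Filter.eventually_prod_iff] at hev2
  obtain ⟨pa, hpa, pb, hpb, hab⟩ := hev2
  rw [Metric.eventually_nhds_iff_ball] at hpb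
  obtain ⟨η, hη, hpb⟩ := hpb
  have hmain : ∀ᶠ q in 𝓝 (zs, p), h q = 0 := by
    have hcd : ContinuousAt (fun q : (Fin s → ℂ) × (Fin s → ℂ) => (starRingEnd ℂ) (cdot q.1 q.2)) (zs, p) :=
      (Complex.continuous_conj.comp (cont_cdot continuous_fst continuous_snd)).continuousAt
    have hlog : ContinuousAt (fun q : (Fin s → ℂ) × (Fin s → ℂ) =>
        Complex.log ((starRingEnd ℂ) (cdot q.1 q.2)) / 2) (zs, p) := by
      refine ContinuousAt.div_const (ContinuousAt.clog hcd ?_) _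
      simp [hzsp]
    have hsm : ∀ᶠ q in 𝓝 (zs, p), Complex.log ((starRingEnd ℂ) (cdot q.1 q.2)) / 2 ∈ Metric.ball (0 : ℂ) η := by
      refine hlog.eventually (Metric.isOpen_ball.mem_nhds ?_)
      simp [hzsp, hη]
    have hne : ∀ᶠ q in 𝓝 (zs, p), (starRingEnd ℂ) (cdot q.1 q.2) ≠ 0 :=
      hcd.eventually_ne (by simp [hzsp])
    filter_upwards [hpa, hsm, hne] with q hq hql hqne
    have hne' : cdot q.1 q.2 ≠ 0 := by
      intro h'; apply hqne; rw [h']; simp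
    have hball : ∀ x ∈ Metric.ball (0 : ℂ) η, ∀ y ∈ Metric.ball (0 : ℂ) η,
        (cdot (Ψ (q, (x, y))).1 (Ψ (q, (x, y))).2 = 1 → h (Ψ (q, (x, y))) = 0) ∧
        Ψ (q, (x, y)) ∈ V ×ˢ V := by
      intro x hx y hy
      refine hab hq (hpb (x, y) ?_)
      rw [← ball_prod_same]
      exact ⟨hx, hy⟩
    have hdx : ∀ y, Differentiable ℂ (fun x => Ψ (q, (x, y))) := by
      intro y
      refine Differentiable.prodMk ?_ ?_
      · refine Differentiable.smul_const ?_ q.1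
        fun_prop
      · have hd : Differentiable ℂ (fun x : ℂ => ((starRingEnd ℂ) (cdot q.1 q.2))⁻¹ *
            Complex.exp (-x + Complex.I * y)) := Differentiable.const_mul (by fun_prop) _
        exact hd.smul_const q.2
    have hdy : ∀ x, Differentiable ℂ (fun y => Ψ (q, (x, y))) := by
      intro x
      refine Differentiable.prodMk ?_ ?_
      · refine Differentiable.smul_const ?_ q.1
        fun_prop
      · have hd : Differentiable ℂ (fun y : ℂ => ((starRingEnd ℂ) (cdot q.1 q.2))⁻¹ *
            Complex.exp (-x + Complex.I * y)) := Differentiable.const_mul (by fun_prop) _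
        exact hd.smul_const q.2
    have hzero := exp_two hη (g := fun x y => h (Ψ (q, (x, y)))) ?_ ?_ ?_
    · have := hzero (-(Complex.log ((starRingEnd ℂ) (cdot q.1 q.2)) / 2)) (by simpa using hql)
        (-Complex.I * (Complex.log ((starRingEnd ℂ) (cdot q.1 q.2)) / 2)) (by simpa using hql)
      set c := (starRingEnd ℂ) (cdot q.1 q.2) with hc
      have e : Ψ (q, (-(Complex.log c / 2), -Complex.I * (Complex.log c / 2))) = q := by
        have a1 : -(Complex.log c / 2) + Complex.I * (-Complex.I * (Complex.log c / 2)) = 0 := by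
          linear_combination (-(Complex.log c) / 2) * Complex.I_mul_I
        have a2 : - -(Complex.log c / 2) + Complex.I * (-Complex.I * (Complex.log c / 2)) = Complex.log c := by
          linear_combination (-(Complex.log c) / 2) * Complex.I_mul_I
        simp only [Ψ, a1, a2, ← hc, Complex.exp_log hqne]
        simp [hqne]
      rw [e] at this
      exact this
    · intro y hy
      refine hh _ (fun x => Ψ (q, (x, y))) Metric.isOpen_ball ?_ (fun x hx => (hball x hx y hy).2)
      intro x hx
      exact ((hdx y) x).differentiableWithinAt
    · intro x hx
      refine hh _ (fun y => Ψ (q, (x, y))) Metric.isOpen_ball ?_ (fun y hy => (hball x hx y hy).2)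
      intro y hy
      exact ((hdy x) y).differentiableWithinAt
    · intro x y hx hy
      refine (hball x (by simpa using hx) y (by simpa using hy)).1 ?_
      simp only [Ψ, cdot_smul_left, cdot_smul_right, map_mul, map_inv₀, Complex.conj_conj]
      rw [← Complex.exp_conj]
      simp only [map_add, map_mul, map_neg, Complex.conj_ofReal, Complex.conj_I]
      have : Complex.exp (x + Complex.I * y) * Complex.exp (-x + -Complex.I * y) = 1 := by
        rw [← Complex.exp_add]; ring_nf; simp
      rw [show (-(x : ℂ) + -Complex.I * (y : ℂ)) = -x - Complex.I * y by ring] at this ⊢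
      field_simp
      linear_combination this
  exact hmain

lemma lemB {s : ℕ} (hs : 2 ≤ s) {V : Set (Fin s → ℂ)} (hV : IsOpen V)
    (hVc : Convex ℝ V) {p : Fin s → ℂ} (hp : p ∈ V) (hpn : cdot p p = 1)
    {h : (Fin s → ℂ) × (Fin s → ℂ) → ℂ} (hh : CH (V ×ˢ V) h)
    (h0 : ∀ z ∈ V, ∀ w ∈ V, cdot w w = 1 → cdot z w = 1 → h (z, w) = 0) :
    ∀ z ∈ V, ∀ w ∈ V, h (z, w) = 0 := by
  obtain ⟨ζ, hζ0, hζp⟩ := exists_orth hs p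
  have hpζ : cdot p ζ = 0 := by rw [← cdot_conj, hζp]; simp
  -- choose ε
  obtain ⟨ε, hε0, hεV⟩ : ∃ ε : ℝ, 0 < ε ∧ p + (ε : ℂ) • ζ ∈ V := by
    have : Tendsto (fun t : ℝ => p + (t : ℂ) • ζ) (𝓝 0) (𝓝 p) :=
      Continuous.tendsto' (by fun_prop) _ _ (by simp)
    have h1 : ∀ᶠ t : ℝ in 𝓝[>] 0, p + (t : ℂ) • ζ ∈ V :=
      (this.eventually (hV.mem_nhds hp)).filter_mono nhdsWithin_le_nhds
    have h2 : ∀ᶠ t : ℝ in 𝓝[>] 0, 0 < t := self_mem_nhdsWithin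
    obtain ⟨t, ht⟩ := (h2.and h1).exists
    exact ⟨t, ht.1, ht.2⟩
  set zs := p + (ε : ℂ) • ζ with hzs
  have hzsp : cdot zs p = 1 := by rw [hzs, cdot_add_left, cdot_smul_left, hζp, hpn]; simp
  have hzsn : nsq zs = 1 + ε ^ 2 * nsq ζ := by
    have : (nsq zs : ℂ) = ((1 + ε ^ 2 * nsq ζ : ℝ) : ℂ) := by
      rw [← cdot_self, hzs]
      simp only [cdot_add_left, cdot_add_right, cdot_smul_left, cdot_smul_right, hζp, hpζ, hpn,
        cdot_self ζ]
      simp; ring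
    exact_mod_cast this
  have hζn := nsq_pos hζ0
  have hzs1 : 1 < nsq zs := by rw [hzsn]; nlinarith [mul_pos (pow_pos hε0 2) hζn]
  have hzsne : (nsq zs : ℂ) ≠ 0 := by
    have : nsq zs ≠ 0 := by linarith
    exact_mod_cast this
  have hus : p - ((nsq zs : ℂ)⁻¹) • zs ≠ 0 := by
    intro hcon
    have : cdot (p - ((nsq zs : ℂ)⁻¹) • zs) p = 0 := by rw [hcon, cdot_zero_left]
    rw [cdot_sub_left, cdot_smul_left, hzsp, hpn, mul_one] at this
    have h2 : (nsq zs : ℂ) = 1 := by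
      have : (nsq zs : ℂ)⁻¹ = 1 := by linear_combination -this
      exact inv_eq_one.1 this
    have h3 : nsq zs = 1 := by exact_mod_cast h2
    linarith
  -- G condition
  set w0 : (Fin s → ℂ) × (Fin s → ℂ) → (Fin s → ℂ) := fun q =>
    ((nsq q.1 : ℂ)⁻¹) • q.1 +
      ((√((1 - (nsq q.1)⁻¹) / nsq (q.2 - ((nsq q.1 : ℂ)⁻¹) • q.1)) : ℝ) : ℂ) •
      (q.2 - ((nsq q.1 : ℂ)⁻¹) • q.1) with hw0
  have hG : ∀ᶠ q in 𝓝 (zs, p), cdot q.1 q.2 = 1 → h q = 0 := by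
    have c1 : ContinuousAt (fun q : (Fin s → ℂ) × (Fin s → ℂ) => nsq q.1) (zs, p) :=
      (continuous_nsq.comp continuous_fst).continuousAt
    have c2 : ContinuousAt (fun q : (Fin s → ℂ) × (Fin s → ℂ) => ((nsq q.1 : ℂ)⁻¹) • q.1) (zs, p) := by
      have c1' : ContinuousAt (fun q : (Fin s → ℂ) × (Fin s → ℂ) => (nsq q.1 : ℂ)) (zs, p) :=
        Complex.continuous_ofReal.continuousAt.comp c1
      exact (c1'.inv₀ hzsne).smul continuousAt_fst
    have c3 : ContinuousAt (fun q : (Fin s → ℂ) × (Fin s → ℂ) => q.2 - ((nsq q.1 : ℂ)⁻¹) • q.1)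
        (zs, p) := continuousAt_snd.sub c2
    have c4 : ContinuousAt w0 (zs, p) := by
      refine c2.add (ContinuousAt.fun_smul ?_ c3)
      refine Complex.continuous_ofReal.continuousAt.comp ?_
      refine Real.continuous_sqrt.continuousAt.comp ?_
      refine ContinuousAt.div ?_ ?_ (nsq_pos hus).ne'
      · exact continuousAt_const.sub (c1.inv₀ (by simp; linarith))
      · exact continuous_nsq.continuousAt.comp c3
    have hw0p : w0 (zs, p) = p := by
      have : (1 - (nsq zs)⁻¹) / nsq (p - ((nsq zs : ℂ)⁻¹) • zs) = 1 := by
        have hpz : cdot p zs = 1 := by rw [← cdot_conj, hzsp]; simp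
        have h1 : nsq (p - ((nsq zs : ℂ)⁻¹) • zs) = 1 - (nsq zs)⁻¹ := by
          have : (nsq (p - ((nsq zs : ℂ)⁻¹) • zs) : ℂ) = ((1 - (nsq zs)⁻¹ : ℝ) : ℂ) := by
            rw [← cdot_self]
            simp only [cdot_sub_left, cdot_sub_right, cdot_smul_left, cdot_smul_right, hzsp, hpn,
              hpz, cdot_self zs]
            simp [hzsne]
          exact_mod_cast this
        rw [h1, div_self]
        rw [← h1]; exact (nsq_pos hus).ne'
      simp only [hw0, this]
      simp
    have e1 : ∀ᶠ q in 𝓝 (zs, p), 1 < nsq q.1 := c1.eventually (lt_mem_nhds hzs1)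
    have e2 : ∀ᶠ q in 𝓝 (zs, p), q.2 - ((nsq q.1 : ℂ)⁻¹) • q.1 ≠ 0 := c3.eventually_ne hus
    have e3 : ∀ᶠ q in 𝓝 (zs, p), w0 q ∈ V := c4.eventually (hV.mem_nhds (by rw [hw0p]; exact hp))
    have e4 : ∀ᶠ q in 𝓝 (zs, p), q ∈ V ×ˢ V := (hV.prod hV).mem_nhds ⟨hεV, hp⟩
    filter_upwards [e1, e2, e3, e4] with q h1 h2 h3 h4 h5
    exact lemB1 hV hVc hh h0 h4.1 h4.2 h5 h1 h2 h3
  have e4 : ∀ᶠ q in 𝓝 (zs, p), q ∈ V ×ˢ V := (hV.prod hV).mem_nhds ⟨hεV, hp⟩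
  have hmain := lemB2 hzsp hh hG e4
  have hfin := CH.identity (hV.prod hV) ((hVc.prod hVc).isPreconnected) hh
    (x0 := (zs, p)) ⟨hεV, hp⟩ hmain
  intro z hz w hw
  exact hfin (z, w) ⟨hz, hw⟩

end part2

section part3
open Set Filter Topology

lemma deriv_param {O : Set (ℂ × ℂ)} (hO : IsOpen O) {g : ℂ × ℂ → ℂ} (hg : DifferentiableOn ℂ g O)
    {l0 : ℂ} (hl0 : (l0, (0 : ℂ)) ∈ O) :
    DifferentiableAt ℂ (fun l => deriv (fun t => g (l, t)) 0) l0 := by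
  have hc : ContinuousAt g (l0, 0) := (hg.continuousOn).continuousAt (hO.mem_nhds hl0)
  have hev : ∀ᶠ q in 𝓝 (l0, (0 : ℂ)), q ∈ O ∧ g q ∈ Metric.ball (g (l0, 0)) 1 :=
    (hO.eventually_mem hl0).and (hc.eventually (Metric.ball_mem_nhds _ one_pos))
  obtain ⟨ρ, hρ, hball⟩ := Metric.eventually_nhds_iff_ball.1 hev
  rw [← ball_prod_same] at hball
  have hmem : ∀ l ∈ Metric.ball l0 ρ, ∀ t ∈ Metric.ball (0 : ℂ) ρ, (l, t) ∈ O ∧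
      g (l, t) ∈ Metric.ball (g (l0, 0)) 1 := fun l hl t ht => hball (l, t) ⟨hl, ht⟩
  have h0m : (0 : ℂ) ∈ Metric.ball (0 : ℂ) ρ := by simpa using hρ
  have hd2 : ∀ l ∈ Metric.ball l0 ρ, DifferentiableOn ℂ (fun t => g (l, t)) (Metric.ball 0 ρ) := by
    intro l hl
    refine hg.comp (f := fun t : ℂ => (l, t)) (by fun_prop) (fun t ht => (hmem l hl t ht).1)
  have hd1 : ∀ t ∈ Metric.ball (0 : ℂ) ρ, DifferentiableOn ℂ (fun l => g (l, t)) (Metric.ball l0 ρ) := by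
    intro t ht
    refine hg.comp (f := fun l : ℂ => (l, t)) (by fun_prop) (fun l hl => (hmem l hl t ht).1)
  have hq : ∀ l ∈ Metric.ball l0 ρ, ∀ t ∈ Metric.ball (0 : ℂ) ρ,
      ‖dslope (fun t => g (l, t)) 0 t‖ ≤ 2 / ρ := by
    intro l hl t ht
    refine Complex.norm_dslope_le_div_of_mapsTo_ball (hd2 l hl) ?_ ht
    intro u hu
    have h1 := (hmem l hl u hu).2
    have h2 := (hmem l hl 0 h0m).2
    rw [Metric.mem_ball] at h1 h2
    rw [Metric.mem_closedBall]
    have := dist_triangle_right (g (l, u)) (g (l, 0)) (g (l0, 0))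
    linarith
  have hq2 : ∀ l ∈ Metric.ball l0 ρ, ∀ t ∈ Metric.ball (0 : ℂ) ρ,
      ‖dslope (fun t => g (l, t)) 0 t - deriv (fun t => g (l, t)) 0‖ ≤ (4 / ρ) / ρ * ‖t‖ := by
    intro l hl t ht
    have hdd : DifferentiableOn ℂ (dslope (fun t => g (l, t)) 0) (Metric.ball 0 ρ) :=
      (Complex.differentiableOn_dslope (Metric.isOpen_ball.mem_nhds h0m)).2 (hd2 l hl)
    have := Complex.dist_le_div_mul_dist_of_mapsTo_ball hdd (R₂ := 4 / ρ) ?_ ht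
    · simpa [dist_eq_norm] using this
    · intro u hu
      have h1 := hq l hl u hu
      have h2 := hq l hl 0 h0m
      rw [Metric.mem_closedBall, dist_eq_norm]
      have := norm_sub_le (dslope (fun t => g (l, t)) 0 u) (dslope (fun t => g (l, t)) 0 0)
      have e : 4 / ρ = 2 / ρ + 2 / ρ := by ring
      linarith
  have hu : TendstoUniformlyOn (fun (t : ℂ) l => dslope (fun t => g (l, t)) 0 t)
      (fun l => deriv (fun t => g (l, t)) 0) (𝓝[≠] 0) (Metric.ball l0 ρ) := by
    rw [Metric.tendstoUniformlyOn_iff]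
    intro ε hε
    have hlim : Tendsto (fun t : ℂ => (4 / ρ) / ρ * ‖t‖) (𝓝 0) (𝓝 0) :=
      Continuous.tendsto' (by fun_prop) _ _ (by simp)
    have e1 := (hlim.eventually (gt_mem_nhds hε)).filter_mono (nhdsWithin_le_nhds (s := {0}ᶜ))
    have e2 : ∀ᶠ t : ℂ in 𝓝[≠] 0, t ∈ Metric.ball (0 : ℂ) ρ :=
      (Metric.ball_mem_nhds _ hρ : _ ∈ 𝓝 (0 : ℂ)) |> fun h => mem_nhdsWithin_of_mem_nhds h
    filter_upwards [e1, e2] with t h1 h2 l hl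
    rw [dist_comm, dist_eq_norm]
    exact lt_of_le_of_lt (hq2 l hl t h2) h1
  have := hu.tendstoLocallyUniformlyOn.differentiableOn ?_ Metric.isOpen_ball
  · exact this.differentiableAt (Metric.ball_mem_nhds _ hρ)
  · have e2 : ∀ᶠ t : ℂ in 𝓝[≠] 0, t ∈ Metric.ball (0 : ℂ) ρ :=
      (Metric.ball_mem_nhds _ hρ : _ ∈ 𝓝 (0 : ℂ)) |> fun h => mem_nhdsWithin_of_mem_nhds h
    filter_upwards [e2, self_mem_nhdsWithin] with t ht htne
    have : (fun l => dslope (fun t => g (l, t)) 0 t) = fun l => t⁻¹ * (g (l, t) - g (l, 0)) := by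
      ext l
      rw [dslope_of_ne _ htne, slope_def_field]
      simp; ring
    show DifferentiableOn ℂ (fun l => dslope (fun t => g (l, t)) 0 t) _
    rw [this]
    exact ((hd1 t ht).sub (hd1 0 h0m)).const_mul _

/-- the derivative of `f` at `w` in direction `z - w`, as a function of `(z,w)` -/
lemma CH_deriv {s : ℕ} {V : Set (Fin s → ℂ)} (hV : IsOpen V) {f : (Fin s → ℂ) → ℂ}
    (hf : DifferentiableOn ℂ f V) :
    CH (V ×ˢ V) (fun q : (Fin s → ℂ) × (Fin s → ℂ) => deriv (fun t : ℂ => f (q.2 + t • (q.1 - q.2))) 0) := by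
  intro D γ hD hγ hm
  intro l0 hl0
  refine DifferentiableAt.differentiableWithinAt ?_
  set φ : ℂ × ℂ → (Fin s → ℂ) := fun q => (γ q.1).2 + q.2 • ((γ q.1).1 - (γ q.1).2) with hφ
  have hφd : DifferentiableOn ℂ φ (D ×ˢ univ) := by
    have h1 : DifferentiableOn ℂ (fun q : ℂ × ℂ => γ q.1) (D ×ˢ univ) :=
      hγ.comp (by fun_prop) (fun q hq => hq.1)
    exact h1.snd.add (DifferentiableOn.fun_smul differentiable_snd.differentiableOn (h1.fst.sub h1.snd))
  have hO : IsOpen ((D ×ˢ univ) ∩ φ ⁻¹' V) :=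
    hφd.continuousOn.isOpen_inter_preimage (hD.prod isOpen_univ) hV
  refine deriv_param (O := (D ×ˢ univ) ∩ φ ⁻¹' V) hO (g := fun q => f (φ q)) ?_ ?_
  · exact hf.comp (hφd.mono inter_subset_left) (fun q hq => hq.2)
  · exact ⟨⟨hl0, mem_univ _⟩, by simpa [hφ] using (hm hl0).2⟩

end part3

section part4
open Set Filter Topology Module

/-- vectors orthogonal to all elements of `S` -/
def orthS {n : ℕ} (S : Set (Fin n → ℂ)) : Submodule ℂ (Fin n → ℂ) where
  carrier := {y | ∀ w ∈ S, cdot y w = 0}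
  add_mem' := by
    intro a b ha hb w hw
    rw [cdot_add_left, ha w hw, hb w hw, add_zero]
  zero_mem' := by
    intro w _
    exact cdot_zero_left w
  smul_mem' := by
    intro c a ha w hw
    rw [cdot_smul_left, ha w hw, mul_zero]

lemma mem_orthS {n : ℕ} {S : Set (Fin n → ℂ)} {y : Fin n → ℂ} :
    y ∈ orthS S ↔ ∀ w ∈ S, cdot y w = 0 := Iff.rfl

lemma cdot_comm_zero {n : ℕ} {x y : Fin n → ℂ} (h : cdot x y = 0) : cdot y x = 0 := by
  rw [← cdot_conj, h, map_zero]

lemma orthS_disjoint {n : ℕ} (S : Set (Fin n → ℂ)) : Disjoint (Submodule.span ℂ S) (orthS S) := by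
  rw [Submodule.disjoint_def]
  intro x hx hy
  have : ∀ y ∈ Submodule.span ℂ S, cdot x y = 0 := by
    intro y hy'
    induction hy' using Submodule.span_induction with
    | mem y h => exact hy y h
    | zero => exact cdot_zero_right _
    | add a b _ _ ha hb => rw [cdot_add_right, ha, hb, add_zero]
    | smul c a _ ha => rw [cdot_smul_right, ha, mul_zero]
  exact cdot_self_eq_zero (this x hx)

/-- the functional `y ↦ cdot y w` -/
def cdotL {n : ℕ} (w : Fin n → ℂ) : (Fin n → ℂ) →ₗ[ℂ] ℂ where
  toFun := fun z => cdot z w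
  map_add' := fun x y => cdot_add_left x y w
  map_smul' := fun c x => cdot_smul_left c x w

lemma finrank_inf_orth {n : ℕ} (T : Submodule ℂ (Fin n → ℂ)) (w : Fin n → ℂ) :
    finrank ℂ T ≤ finrank ℂ (T ⊓ orthS {w} : Submodule ℂ (Fin n → ℂ)) + 1 := by
  have h1 := LinearMap.finrank_range_add_finrank_ker ((cdotL w).comp T.subtype)
  have h2 : finrank ℂ (LinearMap.range ((cdotL w).comp T.subtype)) ≤ 1 := by
    refine (Submodule.finrank_le _).trans (by simp)
  have h3 : finrank ℂ (LinearMap.ker ((cdotL w).comp T.subtype)) ≤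
      finrank ℂ (T ⊓ orthS {w} : Submodule ℂ (Fin n → ℂ)) := by
    have e : (T ⊓ orthS {w} : Submodule ℂ (Fin n → ℂ)) =
        (LinearMap.ker ((cdotL w).comp T.subtype)).map T.subtype := by
      ext x
      simp only [Submodule.mem_inf, mem_orthS, mem_singleton_iff, forall_eq, Submodule.mem_map,
        LinearMap.mem_ker]
      constructor
      · rintro ⟨hx, h⟩
        exact ⟨⟨x, hx⟩, h, rfl⟩
      · rintro ⟨y, h, rfl⟩
        exact ⟨y.2, h⟩
    rw [e, LinearEquiv.finrank_eq (Submodule.equivMapOfInjective T.subtype T.injective_subtype _)]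
  omega

lemma finrank_pair {m : ℕ} (H : Submodule ℂ (Fin m → ℂ)) {g1 g2 : Fin m → ℂ} (h1 : g1 ∈ H) (h2 : g2 ∈ H)
    {k l : Fin m} (hm : g1 k * g2 l - g1 l * g2 k ≠ 0) :
    finrank ℂ (H ⊓ orthS {g1, g2} : Submodule ℂ (Fin m → ℂ)) + 2 ≤ finrank ℂ H := by
  have hli : LinearIndependent ℂ ![g1, g2] := by
    rw [LinearIndependent.pair_iff]
    intro a b hab
    have ek := congrFun hab k
    have el := congrFun hab l
    simp at ek el
    constructor
    · have : a * (g1 k * g2 l - g1 l * g2 k) = 0 := by linear_combination g2 l * ek - g2 k * el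
      exact (mul_eq_zero.1 this).resolve_right hm
    · have : b * (g1 k * g2 l - g1 l * g2 k) = 0 := by linear_combination g1 k * el - g1 l * ek
      exact (mul_eq_zero.1 this).resolve_right hm
  have hr : finrank ℂ (Submodule.span ℂ {g1, g2}) = 2 := by
    have := finrank_span_eq_card hli
    rw [Matrix.range_cons, Matrix.range_cons, Matrix.range_empty, Set.union_empty, Set.singleton_union] at this
    simpa using this
  have hd : Disjoint (Submodule.span ℂ {g1, g2}) (H ⊓ orthS {g1, g2}) :=
    (orthS_disjoint _).mono_right inf_le_right
  have hle : Submodule.span ℂ {g1, g2} ⊔ (H ⊓ orthS {g1, g2}) ≤ H := by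
    refine sup_le (Submodule.span_le.2 ?_) inf_le_left
    rintro x (rfl | rfl)
    · exact h1
    · exact h2
  have e1 := Submodule.finrank_mono hle
  have e2 := Submodule.finrank_sup_add_finrank_inf_eq (Submodule.span ℂ {g1, g2}) (H ⊓ orthS {g1, g2})
  rw [hd.eq_bot, finrank_bot, hr] at e2
  omega

lemma dimcount {s m : ℕ} {Ω : Set (Fin s → ℂ)} (hΩ : IsOpen Ω) (hΩc : Convex ℝ Ω) (h0 : (0 : Fin s → ℂ) ∈ Ω)
    {G1 G2 : (Fin s → ℂ) → (Fin m → ℂ)} (hG1 : DifferentiableOn ℂ G1 Ω) (hG2 : DifferentiableOn ℂ G2 Ω)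
    (k l : Fin m) : ∀ (n : ℕ) (T : Submodule ℂ (Fin s → ℂ)) (H : Submodule ℂ (Fin m → ℂ)),
    n ≤ finrank ℂ T → (∀ ζ ∈ T, ζ ∈ Ω → G1 ζ ∈ H ∧ G2 ζ ∈ H) →
    (∀ ζ ∈ T, ζ ∈ Ω → ∀ ω ∈ T, ω ∈ Ω → cdot ζ ω = 0 → (cdot (G1 ζ) (G1 ω) = 0 ∧
      cdot (G1 ζ) (G2 ω) = 0) ∧ (cdot (G2 ζ) (G1 ω) = 0 ∧ cdot (G2 ζ) (G2 ω) = 0)) →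
    (∃ ζ ∈ T, ζ ∈ Ω ∧ G1 ζ k * G2 ζ l - G1 ζ l * G2 ζ k ≠ 0) → 2 * n ≤ finrank ℂ H := by
  have hmd : DifferentiableOn ℂ (fun ζ => G1 ζ k * G2 ζ l - G1 ζ l * G2 ζ k) Ω := by
    have a := differentiableOn_pi.1 hG1
    have b := differentiableOn_pi.1 hG2
    exact ((a k).mul (b l)).sub ((a l).mul (b k))
  intro n
  induction n with
  | zero => intros; omega
  | succ n ih =>
    intro T H hT hH horth ⟨ζ0, hζT, hζΩ, hζm⟩
    by_cases hn : n = 0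
    · have := finrank_pair H (hH ζ0 hζT hζΩ).1 (hH ζ0 hζT hζΩ).2 hζm
      omega
    -- choose ω0
    obtain ⟨ω1, hω1T, hω1ne⟩ : ∃ ω ∈ T ⊓ orthS {ζ0}, ω ≠ 0 := by
      apply (Submodule.ne_bot_iff _).1
      intro hb
      have := finrank_inf_orth T ζ0
      rw [hb, finrank_bot] at this
      omega
    obtain ⟨ε, hε0, hεΩ⟩ : ∃ ε : ℝ, 0 < ε ∧ (ε : ℂ) • ω1 ∈ Ω := by
      have : Tendsto (fun t : ℝ => (t : ℂ) • ω1) (𝓝 0) (𝓝 0) :=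
        Continuous.tendsto' (by fun_prop) _ _ (by simp)
      have h1 : ∀ᶠ t : ℝ in 𝓝[>] 0, (t : ℂ) • ω1 ∈ Ω :=
        (this.eventually (hΩ.mem_nhds h0)).filter_mono nhdsWithin_le_nhds
      have h2 : ∀ᶠ t : ℝ in 𝓝[>] 0, 0 < t := self_mem_nhdsWithin
      obtain ⟨t, ht⟩ := (h2.and h1).exists
      exact ⟨t, ht.1, ht.2⟩
    set ω0 := (ε : ℂ) • ω1 with hω0
    have hω0T : ω0 ∈ T := T.smul_mem _ hω1T.1
    have hω0ζ : cdot ζ0 ω0 = 0 := by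
      rw [hω0, cdot_smul_right, cdot_comm_zero (hω1T.2 ζ0 rfl), mul_zero]
    have hω0ne : ω0 ≠ 0 := smul_ne_zero (by exact_mod_cast hε0.ne') hω1ne
    have hω0n : cdot ω0 ω0 ≠ 0 := fun h => hω0ne (cdot_self_eq_zero h)
    -- perturb
    set om : ℂ → (Fin s → ℂ) := fun t => ω0 + t • (ζ0 - ω0) with hom
    have homd : Differentiable ℂ om := by intro x; fun_prop
    have hom0 : om 0 = ω0 := by simp [hom]
    set D := om ⁻¹' Ω with hD
    have hDo : IsOpen D := hΩ.preimage homd.continuous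
    have hDc : IsPreconnected D := (line_convex hΩc ω0 (ζ0 - ω0)).isPreconnected
    have hdm := (hmd.comp homd.differentiableOn (fun t (ht : t ∈ D) => ht)).analyticOnNhd hDo
    have h0D : (0 : ℂ) ∈ D := by simpa [hD, hom] using hεΩ
    have h1D : (1 : ℂ) ∈ D := by simpa [hD, hom] using hζΩ
    have ev1 : ∀ᶠ t in 𝓝[≠] (0 : ℂ), ((fun ζ => G1 ζ k * G2 ζ l - G1 ζ l * G2 ζ k) ∘ om) t ≠ 0 := by
      by_contra hcon
      have hfr : ∃ᶠ t in 𝓝[≠] (0 : ℂ), ((fun ζ => G1 ζ k * G2 ζ l - G1 ζ l * G2 ζ k) ∘ om) t = 0 := by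
        simpa [Filter.not_eventually] using hcon
      have := hdm.eqOn_zero_of_preconnected_of_frequently_eq_zero hDc h0D hfr h1D
      apply hζm
      simpa [hom] using this
    set zt : ℂ → (Fin s → ℂ) := fun t => ζ0 - (cdot ζ0 (om t) / cdot (om t) (om t)) • om t with hzt
    have hztc : ContinuousAt zt 0 := by
      refine continuousAt_const.sub (ContinuousAt.fun_smul (ContinuousAt.div ?_ ?_ ?_) ?_)
      · exact (cont_cdot continuous_const homd.continuous).continuousAt
      · exact (cont_cdot homd.continuous homd.continuous).continuousAt
      · rw [hom0]; exact hω0n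
      · exact homd.continuous.continuousAt
    have hzt0 : zt 0 = ζ0 := by simp [hzt, hom0, hω0ζ]
    have ev2 : ∀ᶠ t in 𝓝 (0 : ℂ), zt t ∈ Ω ∧ G1 (zt t) k * G2 (zt t) l - G1 (zt t) l * G2 (zt t) k ≠ 0 := by
      have hmc := (hmd.continuousOn).continuousAt (hΩ.mem_nhds hζΩ)
      have := ((hΩ.eventually_mem hζΩ).and (hmc.eventually_ne hζm))
      rw [← hzt0] at this
      exact hztc.eventually this
    have ev3 : ∀ᶠ t in 𝓝 (0 : ℂ), t ∈ D := hDo.eventually_mem h0D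
    have ev4 : ∀ᶠ t in 𝓝 (0 : ℂ), cdot (om t) (om t) ≠ 0 := by
      refine ContinuousAt.eventually_ne (cont_cdot homd.continuous homd.continuous).continuousAt ?_
      rw [hom0]; exact hω0n
    obtain ⟨t, h1, h2, h3, h4⟩ := (ev1.and ((ev2.and (ev3.and ev4)).filter_mono nhdsWithin_le_nhds)).exists
    have homT : om t ∈ T := T.add_mem hω0T (T.smul_mem _ (T.sub_mem hζT hω0T))
    have hp := finrank_pair H (hH (om t) homT h3).1 (hH (om t) homT h3).2 h1
    have hT' := finrank_inf_orth T (om t)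
    have := ih (T ⊓ orthS {om t}) (H ⊓ orthS {G1 (om t), G2 (om t)}) (by omega) ?_ ?_ ?_
    · omega
    · intro ζ hζ hζΩ
      have ho := horth ζ hζ.1 hζΩ (om t) homT h3 (hζ.2 _ rfl)
      refine ⟨⟨(hH ζ hζ.1 hζΩ).1, ?_⟩, ⟨(hH ζ hζ.1 hζΩ).2, ?_⟩⟩
      · rintro x (rfl | rfl)
        · exact ho.1.1
        · exact ho.1.2
      · rintro x (rfl | rfl)
        · exact ho.2.1
        · exact ho.2.2
    · intro ζ hζ hζΩ ω hω hωΩ h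
      exact horth ζ hζ.1 hζΩ ω hω.1 hωΩ h
    · refine ⟨zt t, ⟨?_, ?_⟩, h2.1, h2.2⟩
      · exact T.sub_mem hζT (T.smul_mem _ homT)
      · rintro x rfl
        simp only [hzt, cdot_sub_left, cdot_smul_left]
        field_simp
        simp

/-- Step A. -/
lemma stepA {s r' s' : ℕ} (hhigh : s' + 3 ≤ 2 * s + r')
    {V : Set (Fin s → ℂ)} (hV : IsOpen V) (hVc : Convex ℝ V)
    {F : (Fin s → ℂ) → Fin r' → Fin s' → ℂ} (hF : DifferentiableOn ℂ F V)
    (horth : ∀ z ∈ V, ∀ w ∈ V, cdot z w = 1 → ∀ i j, cdot (F z i) (F w j) = if i = j then 1 else 0)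
    {w z : Fin s → ℂ} (hw : w ∈ V) (hwn : cdot w w = 1) (hz : z ∈ V) (hzw : cdot z w = 1)
    (t : ℂ) (ht : w + t • (z - w) ∈ V) (i j : Fin r') (k l : Fin s') :
    (F z i k - F w i k) * (F (w + t • (z - w)) j l - F w j l) -
      (F z i l - F w i l) * (F (w + t • (z - w)) j k - F w j k) = 0 := by
  by_contra hm
  have hFi := differentiableOn_pi.1 hF
  set Ω : Set (Fin s → ℂ) := {ζ | w + ζ ∈ V ∧ w + t • ζ ∈ V} with hΩ
  have hΩo : IsOpen Ω := (hV.preimage (by fun_prop : Continuous fun ζ : Fin s → ℂ => w + ζ)).inter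
    (hV.preimage (by fun_prop : Continuous fun ζ : Fin s → ℂ => w + t • ζ))
  have hΩc : Convex ℝ Ω := by
    intro a ha b hb c d hc hd hcd
    have e : w = c • w + d • w := by rw [← add_smul, hcd, one_smul]
    constructor
    · have := hVc ha.1 hb.1 hc hd hcd
      have e2 : w + (c • a + d • b) = c • (w + a) + d • (w + b) := by
        nth_rewrite 1 [e]; simp only [smul_add]; abel
      rw [e2]; exact this
    · have := hVc ha.2 hb.2 hc hd hcd
      have e2 : w + t • (c • a + d • b) = c • (w + t • a) + d • (w + t • b) := by
        nth_rewrite 1 [e]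
        simp only [smul_add]
        rw [smul_comm t c, smul_comm t d]; abel
      rw [e2]; exact this
  have hG1 : DifferentiableOn ℂ (fun ζ => F (w + ζ) i - F w i) Ω :=
    ((hFi i).comp (f := fun ζ => w + ζ) (by fun_prop) (fun ζ hζ => hζ.1)).sub_const _
  have hG2 : DifferentiableOn ℂ (fun ζ => F (w + t • ζ) j - F w j) Ω :=
    ((hFi j).comp (f := fun ζ => w + t • ζ) (by fun_prop) (fun ζ hζ => hζ.2)).sub_const _
  have hww := horth w hw w hw hwn
  have hor1 : ∀ ζ, cdot ζ w = 0 → w + ζ ∈ V → ∀ i j,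
      cdot (F (w + ζ) i) (F w j) = (if i = j then 1 else 0) ∧
      cdot (F w i) (F (w + ζ) j) = (if i = j then 1 else 0) := by
    intro ζ hζ hζV i j
    refine ⟨horth _ hζV _ hw (by rw [cdot_add_left, hwn, hζ, add_zero]) i j,
      horth _ hw _ hζV (by rw [cdot_add_right, hwn, cdot_comm_zero hζ, add_zero]) i j⟩
  have hor2 : ∀ ζ ω, cdot ζ w = 0 → cdot ω w = 0 → cdot ζ ω = 0 → w + ζ ∈ V → w + ω ∈ V → ∀ i j,
      cdot (F (w + ζ) i - F w i) (F (w + ω) j - F w j) = 0 := by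
    intro ζ ω h1 h2 h3 h4 h5 i j
    have a1 := horth _ h4 _ h5 (by
      simp only [cdot_add_left, cdot_add_right, hwn, h1, h3, cdot_comm_zero h2]; ring) i j
    rw [cdot_sub_left, cdot_sub_right, cdot_sub_right, a1, (hor1 ζ h1 h4 i j).1,
      (hor1 ω h2 h5 i j).2, hww]
    ring
  have key := dimcount hΩo hΩc (by simp [hΩ, hw]) hG1 hG2 k l (s - 1) (orthS {w})
    (orthS (range (F w))) ?_ ?_ ?_ ?_
  · -- finrank of H
    have hd := orthS_disjoint (range (F w))
    have hli : LinearIndependent ℂ (F w) := by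
      rw [Fintype.linearIndependent_iff]
      intro g hg j
      have := congrArg (fun x => cdot x (F w j)) hg
      simp only [cdot_sum_left, cdot_smul_left, hww, cdot_zero_left] at this
      simpa using this
    have hr := finrank_span_eq_card hli
    rw [Fintype.card_fin] at hr
    have h2 := Submodule.finrank_add_finrank_le_of_disjoint hd
    rw [hr, finrank_fin_fun] at h2
    have hspos : 1 ≤ s := by
      rcases Nat.eq_zero_or_pos s with h | h
      · subst h; simp [cdot] at hwn
      · exact h
    omega
  · have := finrank_inf_orth (⊤ : Submodule ℂ (Fin s → ℂ)) w
    rw [top_inf_eq, finrank_top, finrank_fin_fun] at this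
    omega
  · intro ζ hζ hζΩ
    have h1 : cdot ζ w = 0 := hζ w rfl
    constructor
    · rintro _ ⟨a, rfl⟩
      rw [cdot_sub_left, (hor1 ζ h1 hζΩ.1 i a).1, hww, sub_self]
    · rintro _ ⟨a, rfl⟩
      rw [cdot_sub_left, (hor1 (t • ζ) (by rw [cdot_smul_left, h1, mul_zero]) hζΩ.2 j a).1, hww, sub_self]
  · intro ζ hζ hζΩ ω hω hωΩ h
    have h1 : cdot ζ w = 0 := hζ w rfl
    have h2 : cdot ω w = 0 := hω w rfl
    have h1' : cdot (t • ζ) w = 0 := by rw [cdot_smul_left, h1, mul_zero]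
    have h2' : cdot (t • ω) w = 0 := by rw [cdot_smul_left, h2, mul_zero]
    refine ⟨⟨hor2 _ _ h1 h2 h hζΩ.1 hωΩ.1 _ _, hor2 _ _ h1 h2' ?_ hζΩ.1 hωΩ.2 _ _⟩,
      hor2 _ _ h1' h2 ?_ hζΩ.2 hωΩ.1 _ _, hor2 _ _ h1' h2' ?_ hζΩ.2 hωΩ.2 _ _⟩ <;>
    simp [cdot_smul_left, cdot_smul_right, h]
  · refine ⟨z - w, ?_, ⟨by simpa using hz, ht⟩, ?_⟩
    · rintro x rfl
      rw [cdot_sub_left, hzw, hwn, sub_self]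
    · simpa using hm

end part4

section part5
open Set Filter Topology Module

lemma CH.sub {E : Type*} [NormedAddCommGroup E] [NormedSpace ℂ E] {V : Set E} {h g : E → ℂ}
    (hh : CH V h) (hg : CH V g) : CH V (fun x => h x - g x) :=
  fun D γ hD hγ hm => (hh D γ hD hγ hm).sub (hg D γ hD hγ hm)

lemma CH.const {E : Type*} [NormedAddCommGroup E] [NormedSpace ℂ E] {V : Set E} (c : ℂ) :
    CH V (fun _ : E => c) := CH.of_diff (differentiableOn_const c)

lemma CH.fst {s : ℕ} {V : Set (Fin s → ℂ)} {g : (Fin s → ℂ) → ℂ} (hg : DifferentiableOn ℂ g V) :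
    CH (V ×ˢ V) (fun q : (Fin s → ℂ) × (Fin s → ℂ) => g q.1) :=
  CH.of_diff (hg.comp differentiable_fst.differentiableOn (fun _ hq => hq.1))

lemma CH.snd {s : ℕ} {V : Set (Fin s → ℂ)} {g : (Fin s → ℂ) → ℂ} (hg : DifferentiableOn ℂ g V) :
    CH (V ×ˢ V) (fun q : (Fin s → ℂ) × (Fin s → ℂ) => g q.2) :=
  CH.of_diff (hg.comp differentiable_snd.differentiableOn (fun _ hq => hq.2))

lemma rank_one {m n : ℕ} {D : Fin m → Fin n → ℂ}
    (h : ∀ i j k l, D i k * D j l - D i l * D j k = 0) : ∃ (a : Fin m → ℂ) (b : Fin n → ℂ),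
    ∀ i k, D i k = a i * b k := by
  by_cases h0 : ∃ i k, D i k ≠ 0
  · obtain ⟨i0, k0, h0⟩ := h0
    refine ⟨fun i => D i k0, fun k => D i0 k / D i0 k0, fun i k => ?_⟩
    have := h i i0 k k0
    field_simp
    linear_combination this
  · push Not at h0
    exact ⟨0, 0, fun i k => by simp [h0]⟩

lemma row_ext {r' s' : ℕ} {A B : Fin r' → Fin s' → ℂ} (h : ∀ i k, A i k - B i k = 0) : A = B := by
  funext i k
  exact sub_eq_zero.1 (h i k)

lemma stepC {s r' s' : ℕ} (hs : 2 ≤ s) (hhigh : s' + 3 ≤ 2 * s + r')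
    {V : Set (Fin s → ℂ)} (hV : IsOpen V) (hVc : Convex ℝ V)
    {p0 : Fin s → ℂ} (hp0 : p0 ∈ V) (hp0n : cdot p0 p0 = 1)
    {F : (Fin s → ℂ) → Fin r' → Fin s' → ℂ} (hF : DifferentiableOn ℂ F V)
    (horth : ∀ z ∈ V, ∀ w ∈ V, cdot z w = 1 → ∀ i j, cdot (F z i) (F w j) = if i = j then 1 else 0)
    (hnc : ∃ z ∈ V, ∃ w ∈ V, F z ≠ F w) :
    ∃ α : Fin r' → ℂ, cdot α α = 1 ∧ ∃ p ∈ V, ∀ z ∈ V, ∀ β : Fin r' → ℂ, cdot β α = 0 →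
      ∀ k, ∑ i, β i * F z i k = ∑ i, β i * F p i k := by
  have hFi : ∀ i k, DifferentiableOn ℂ (fun z => F z i k) V := fun i k =>
    differentiableOn_pi.1 (differentiableOn_pi.1 hF i) k
  have hd : ∀ i k, CH (V ×ˢ V) (fun q : (Fin s → ℂ) × (Fin s → ℂ) => F q.1 i k - F q.2 i k) :=
    fun i k => (CH.fst (hFi i k)).sub (CH.snd (hFi i k))
  have hrank : ∀ z ∈ V, ∀ w ∈ V, ∀ i j k l, (F z i k - F w i k) * (F z j l - F w j l) -
      (F z i l - F w i l) * (F z j k - F w j k) = 0 := by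
    intro z hz w hw i j k l
    refine lemB hs hV hVc hp0 hp0n (((hd i k).mul (hd j l)).sub ((hd i l).mul (hd j k))) ?_ z hz w hw
    intro z hz w hw hwn hzw
    have := stepA hhigh hV hVc hF horth hw hwn hz hzw 1 (by simpa using hz) i j k l
    simpa using this
  obtain ⟨p, hp, hpn, z1, hz1, hz1p, hne⟩ : ∃ p ∈ V, cdot p p = 1 ∧ ∃ z1 ∈ V, cdot z1 p = 1 ∧
      F z1 ≠ F p := by
    by_contra hcon
    push Not at hcon
    obtain ⟨z, hz, w, hw, h⟩ := hnc
    apply h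
    apply row_ext
    intro i k
    refine lemB hs hV hVc hp0 hp0n (hd i k) ?_ z hz w hw
    intro z hz w hw hwn hzw
    simp [hcon w hw hwn z hz hzw]
  obtain ⟨a1, b1, hab1⟩ := rank_one (D := fun i k => F z1 i k - F p i k) (hrank z1 hz1 p hp)
  obtain ⟨i1, k1, hD1⟩ : ∃ i k, F z1 i k - F p i k ≠ 0 := by
    by_contra hcon
    push Not at hcon
    exact hne (row_ext hcon)
  have ha1 : a1 i1 ≠ 0 := fun h => hD1 (by rw [hab1, h, zero_mul])
  have hb1 : b1 k1 ≠ 0 := fun h => hD1 (by rw [hab1, h, mul_zero])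
  have hPQ : ∀ z ∈ V, ∀ i j k i' k' l', ((F z i k - F p i k) * a1 j - (F z j k - F p j k) * a1 i) *
      ((F z i' k' - F p i' k') * b1 l' - (F z i' l' - F p i' l') * b1 k') = 0 := by
    intro z hz i j k i' k' l'
    obtain ⟨a, b, hab⟩ := rank_one (D := fun i k => F z i k - F p i k) (hrank z hz p hp)
    have h2 := hrank z hz z1 hz1
    have e : ∀ i k, F z i k - F z1 i k = a i * b k - a1 i * b1 k := by
      intro i k
      rw [← hab, ← hab1]; ring
    simp only [e] at h2
    have h3 := h2 i j k' l'
    simp only [hab]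
    linear_combination -b k * a i' * h3
  have hPd : ∀ i j k, DifferentiableOn ℂ
      (fun z => (F z i k - F p i k) * a1 j - (F z j k - F p j k) * a1 i) V := fun i j k =>
    (((hFi i k).sub_const _).mul_const _).sub (((hFi j k).sub_const _).mul_const _)
  have hQd : ∀ i k l, DifferentiableOn ℂ
      (fun z => (F z i k - F p i k) * b1 l - (F z i l - F p i l) * b1 k) V := fun i k l =>
    (((hFi i k).sub_const _).mul_const _).sub (((hFi i l).sub_const _).mul_const _)
  by_cases hP : ∀ z ∈ V, ∀ i j k, (F z i k - F p i k) * a1 j - (F z j k - F p j k) * a1 i = 0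
  · -- type I
    have ha1n : a1 ≠ 0 := fun h => ha1 (by rw [h]; rfl)
    set N : ℝ := √(nsq a1) with hN
    have hNpos : 0 < N := Real.sqrt_pos.2 (nsq_pos ha1n)
    have hNne : (N : ℂ) ≠ 0 := by exact_mod_cast hNpos.ne'
    have hNsq : (N : ℂ) * N = nsq a1 := by
      have := Real.mul_self_sqrt (nsq_nonneg a1)
      rw [← hN] at this
      exact_mod_cast this
    refine ⟨fun i => (N : ℂ)⁻¹ * (starRingEnd ℂ) (a1 i), ?_, p, hp, ?_⟩
    · have : cdot (fun i => (N : ℂ)⁻¹ * (starRingEnd ℂ) (a1 i)) (fun i => (N : ℂ)⁻¹ * (starRingEnd ℂ) (a1 i))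
        = (N : ℂ)⁻¹ * (N : ℂ)⁻¹ * cdot a1 a1 := by
        simp only [cdot, Finset.mul_sum]
        refine Finset.sum_congr rfl fun i _ => ?_
        simp; ring
      rw [this, cdot_self, ← hNsq]
      field_simp
    · intro z hz β hβ k
      have hβ' : ∑ i, β i * a1 i = 0 := by
        have : cdot β (fun i => (N : ℂ)⁻¹ * (starRingEnd ℂ) (a1 i)) = (N : ℂ)⁻¹ * ∑ i, β i * a1 i := by
          simp only [cdot, Finset.mul_sum]
          refine Finset.sum_congr rfl fun i _ => ?_
          simp; ring
        rw [this] at hβ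
        exact (mul_eq_zero.1 hβ).resolve_left (inv_ne_zero hNne)
      have h2 : (∑ i, β i * (F z i k - F p i k)) * a1 i1 = (F z i1 k - F p i1 k) * ∑ i, β i * a1 i := by
        rw [Finset.sum_mul, Finset.mul_sum]
        refine Finset.sum_congr rfl fun i _ => ?_
        linear_combination β i * hP z hz i i1 k
      rw [hβ', mul_zero] at h2
      have h3 := (mul_eq_zero.1 h2).resolve_right ha1
      rw [← sub_eq_zero, ← Finset.sum_sub_distrib, ← h3]
      exact Finset.sum_congr rfl fun i _ => by ring
  · -- type II
    exfalso
    push Not at hP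
    obtain ⟨zs, hzs, i, j, k, hne0⟩ := hP
    have hQ : ∀ i' k' l', ∀ z ∈ V, (F z i' k' - F p i' k') * b1 l' - (F z i' l' - F p i' l') * b1 k' = 0 := by
      intro i' k' l'
      refine CH.identity hV hVc.isPreconnected (CH.of_diff (hQd i' k' l')) hzs ?_
      have hc := ((hPd i j k).continuousOn).continuousAt (hV.mem_nhds hzs)
      filter_upwards [hc.eventually_ne hne0, hV.eventually_mem hzs] with z h1 h2
      exact (mul_eq_zero.1 (hPQ z h2 i j k i' k' l')).resolve_left h1
    have hbF : ∀ j, cdot b1 (F p j) = 0 := by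
      intro j
      have h1 : cdot (F z1 i1 - F p i1) (F p j) = 0 := by
        rw [cdot_sub_left, horth z1 hz1 p hp hz1p, horth p hp p hp hpn, sub_self]
      have h2 : F z1 i1 - F p i1 = a1 i1 • b1 := by
        funext k
        simpa using hab1 i1 k
      rw [h2, cdot_smul_left] at h1
      exact (mul_eq_zero.1 h1).resolve_left ha1
    have hb1n : b1 ≠ 0 := fun h => hb1 (by rw [h]; rfl)
    have hnull : ∀ w ∈ V, cdot w w = 1 → ∀ i k, F w i k - F p i k = 0 := by
      intro w hw hwn i k
      set c := (F w i k1 - F p i k1) / b1 k1 with hc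
      have h2 : F w i = F p i + c • b1 := by
        funext k
        have := hQ i k k1 w hw
        simp only [Pi.add_apply, Pi.smul_apply, smul_eq_mul, hc]
        field_simp
        linear_combination this
      have h3 := horth w hw w hw hwn i i
      have h4 := horth p hp p hp hpn i i
      rw [h2] at h3
      simp only [cdot_add_left, cdot_add_right, cdot_smul_left, cdot_smul_right, hbF,
        cdot_comm_zero (hbF i), h4] at h3
      have h5 : c * (starRingEnd ℂ) c * cdot b1 b1 = 0 := by
        simp at h3 ⊢
        tauto
      have h6 : c = 0 := by
        rcases mul_eq_zero.1 h5 with h | h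
        · simpa using h
        · exact absurd (cdot_self_eq_zero h) hb1n
      rw [h2, h6]; simp
    apply hD1
    exact lemB hs hV hVc hp0 hp0n (h := fun q => F q.2 i1 k1 - F p i1 k1)
      ((CH.snd (hFi i1 k1)).sub (CH.const _))
      (fun z hz w hw hwn hzw => hnull w hw hwn i1 k1) p0 hp0 z1 hz1

end part5

section part6
open Set Filter Topology Module

/-- continuous linear version of `cdotL` -/
def cdotC {n : ℕ} (w : Fin n → ℂ) : (Fin n → ℂ) →L[ℂ] ℂ := (cdotL w).toContinuousLinearMap

lemma cdotC_apply {n : ℕ} (w z : Fin n → ℂ) : cdotC w z = cdot z w := rfl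

lemma diff_cdot {s n : ℕ} {V : Set (Fin s → ℂ)} {f : (Fin s → ℂ) → Fin n → ℂ}
    (hf : DifferentiableOn ℂ f V) (w : Fin n → ℂ) : DifferentiableOn ℂ (fun z => cdot (f z) w) V :=
  (cdotC w).differentiable.comp_differentiableOn hf

lemma hasDeriv_line {s n : ℕ} {f : (Fin s → ℂ) → Fin n → ℂ} {p : Fin s → ℂ}
    (hf : DifferentiableAt ℂ f p) (d : Fin s → ℂ) :
    HasDerivAt (fun t : ℂ => f (p + t • d)) (fderiv ℂ f p d) 0 := by
  have h1 : HasDerivAt (fun t : ℂ => p + t • d) d 0 := by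
    simpa using ((hasDerivAt_id (0 : ℂ)).smul_const d).const_add p
  have h2 : HasFDerivAt f (fderiv ℂ f p) (p + (0 : ℂ) • d) := by simpa using hf.hasFDerivAt
  exact h2.comp_hasDerivAt 0 h1

lemma line_eventually {s : ℕ} {V : Set (Fin s → ℂ)} (hV : IsOpen V) {p : Fin s → ℂ} (hp : p ∈ V)
    (d : Fin s → ℂ) : ∀ᶠ t : ℂ in 𝓝 0, p + t • d ∈ V := by
  have : Tendsto (fun t : ℂ => p + t • d) (𝓝 0) (𝓝 p) :=
    Continuous.tendsto' (by fun_prop) _ _ (by simp)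
  exact this.eventually (hV.mem_nhds hp)

lemma stepE1 {s n : ℕ} {V : Set (Fin s → ℂ)} (hV : IsOpen V)
    {f : (Fin s → ℂ) → Fin n → ℂ} (hf : DifferentiableOn ℂ f V)
    (horth : ∀ z ∈ V, ∀ w ∈ V, cdot z w = 1 → cdot (f z) (f w) = 1)
    {p z : Fin s → ℂ} (hp : p ∈ V) (hz : z ∈ V) (hpz : cdot p z = 1) (d : Fin s → ℂ) :
    cdot (fderiv ℂ f p d) (f z) = cdot d z * cdot (fderiv ℂ f p p) (f z) := by
  have key : ∀ d, cdot d z = 0 → cdot (fderiv ℂ f p d) (f z) = 0 := by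
    intro d hd
    have h1 := hasDeriv_line (hf.differentiableAt (hV.mem_nhds hp)) d
    have h2 : HasDerivAt (fun t : ℂ => cdot (f (p + t • d)) (f z)) (cdot (fderiv ℂ f p d) (f z)) 0 :=
      (cdotC (f z)).hasFDerivAt.comp_hasDerivAt 0 h1
    have h3 : HasDerivAt (fun t : ℂ => cdot (f (p + t • d)) (f z)) 0 0 := by
      refine (hasDerivAt_const (0 : ℂ) (1 : ℂ)).congr_of_eventuallyEq ?_
      filter_upwards [line_eventually hV hp d] with t ht
      exact horth _ ht _ hz (by rw [cdot_add_left, cdot_smul_left, hd, hpz]; ring)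
    exact h2.unique h3
  have h := key (d - cdot d z • p) (by rw [cdot_sub_left, cdot_smul_left, hpz]; ring)
  rw [map_sub, map_smul, cdot_sub_left, cdot_smul_left] at h
  linear_combination h

/-- local analysis on a line -/
lemma stepE2 {s n : ℕ} {V : Set (Fin s → ℂ)} (hV : IsOpen V)
    {f : (Fin s → ℂ) → Fin n → ℂ} (hf : DifferentiableOn ℂ f V)
    (horth : ∀ z ∈ V, ∀ w ∈ V, cdot z w = 1 → cdot (f z) (f w) = 1)
    (hcol : ∀ w ∈ V, ∀ z ∈ V, cdot w w = 1 → cdot z w = 1 → ∀ t : ℂ, w + t • (z - w) ∈ V → ∀ k l,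
      (f z k - f w k) * (f (w + t • (z - w)) l - f w l) -
      (f z l - f w l) * (f (w + t • (z - w)) k - f w k) = 0)
    {p ζ : Fin s → ℂ} (hp : p ∈ V) (hpn : cdot p p = 1) (hζp : cdot ζ p = 0)
    (hb : fderiv ℂ f p ζ ≠ 0) :
    (cdot (fderiv ℂ f p p) (f p)) * nsq ζ = nsq (fderiv ℂ f p ζ) ∧
    ∃ κ : ℂ, ∀ τ : ℂ, p + τ • ζ ∈ V → ∃ μ : ℂ, (1 - κ * τ) * μ = τ ∧
      f (p + τ • ζ) = f p + μ • fderiv ℂ f p ζ := by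
  set b := fderiv ℂ f p ζ with hbdef
  obtain ⟨k0, hk0⟩ : ∃ k, b k ≠ 0 := by
    by_contra hcon
    push Not at hcon
    exact hb (funext hcon)
  have hfp := hf.differentiableAt (hV.mem_nhds hp)
  set μ : ℂ → ℂ := fun τ => (f (p + τ • ζ) k0 - f p k0) / b k0 with hμ
  have hline := hasDeriv_line hfp ζ
  have hlinek : ∀ k, HasDerivAt (fun t : ℂ => f (p + t • ζ) k) (b k) 0 := fun k =>
    hasDerivAt_pi.1 hline k
  have hμf : ∀ τ : ℂ, p + τ • ζ ∈ V → f (p + τ • ζ) = f p + μ τ • b := by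
    intro τ hτ
    by_cases hτ0 : τ = 0
    · simp [hτ0, hμ]
    have hor : cdot (p + τ • ζ) p = 1 := by rw [cdot_add_left, cdot_smul_left, hζp, hpn]; ring
    have hm : ∀ k l, (f (p + τ • ζ) k - f p k) * b l - (f (p + τ • ζ) l - f p l) * b k = 0 := by
      intro k l
      have h1 : HasDerivAt (fun t : ℂ => (f (p + τ • ζ) k - f p k) * (f (p + t • ζ) l - f p l) -
          (f (p + τ • ζ) l - f p l) * (f (p + t • ζ) k - f p k))
          ((f (p + τ • ζ) k - f p k) * b l - (f (p + τ • ζ) l - f p l) * b k) 0 :=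
        (((hlinek l).sub_const _).const_mul _).sub (((hlinek k).sub_const _).const_mul _)
      refine h1.unique ?_
      refine (hasDerivAt_const (0 : ℂ) (0 : ℂ)).congr_of_eventuallyEq ?_
      filter_upwards [line_eventually hV hp ζ] with t ht
      have e : p + (t / τ) • (p + τ • ζ - p) = p + t • ζ := by
        rw [add_sub_cancel_left, smul_smul, div_mul_cancel₀ _ hτ0]
      have := hcol p hp (p + τ • ζ) hτ hpn hor (t / τ) (by rw [e]; exact ht) k l
      rw [e] at this
      exact this
    funext k
    have := hm k k0
    simp only [Pi.add_apply, Pi.smul_apply, smul_eq_mul, hμ]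
    field_simp
    linear_combination this
  have hbp : cdot b (f p) = 0 := by
    rw [hbdef, stepE1 hV hf horth hp hp hpn, hζp, zero_mul]
  have hrel : ∀ τ : ℂ, p + τ • ζ ∈ V → μ τ * nsq b = τ * nsq ζ *
      (cdot (f p) (fderiv ℂ f p p) + μ τ * cdot b (fderiv ℂ f p p)) := by
    intro τ hτ
    have h1 := stepE1 hV hf horth hp hτ
      (by rw [cdot_add_right, cdot_smul_right, cdot_comm_zero hζp, hpn]; ring) ζ
    rw [← hbdef, hμf τ hτ] at h1
    simp only [cdot_add_right, cdot_smul_right, hζp, hbp, cdot_self b, cdot_self ζ] at h1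
    have h2 := congrArg (starRingEnd ℂ) h1
    simp only [map_add, map_mul, Complex.conj_conj, Complex.conj_ofReal, cdot_conj, map_zero] at h2
    linear_combination h2
  have hμd : HasDerivAt μ 1 0 := by
    have := ((hlinek k0).sub_const (f p k0)).div_const (b k0)
    rwa [div_self hk0] at this
  have hμ0 : μ 0 = 0 := by simp [hμ]
  have hq : (nsq b : ℂ) = nsq ζ * cdot (f p) (fderiv ℂ f p p) := by
    have h1 : HasDerivAt (fun τ => μ τ * nsq b) (1 * nsq b) 0 := hμd.mul_const _
    have h2 : HasDerivAt (fun τ : ℂ => τ * nsq ζ *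
      (cdot (f p) (fderiv ℂ f p p) + μ τ * cdot b (fderiv ℂ f p p)))
      ((1 * nsq ζ) * (cdot (f p) (fderiv ℂ f p p) + μ 0 * cdot b (fderiv ℂ f p p)) +
        0 * nsq ζ * (1 * cdot b (fderiv ℂ f p p))) 0 :=
      ((hasDerivAt_id (0 : ℂ)).mul_const _).mul ((hμd.mul_const _).const_add _)
    have h3 := h1.unique (h2.congr_of_eventuallyEq (by
      filter_upwards [line_eventually hV hp ζ] with t ht using hrel t ht))
    rw [hμ0] at h3
    linear_combination h3
  have hbn : (nsq b : ℂ) ≠ 0 := by exact_mod_cast (nsq_pos hb).ne'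
  refine ⟨?_, cdot b (fderiv ℂ f p p) * nsq ζ / nsq b, fun τ hτ => ⟨μ τ, ?_, hμf τ hτ⟩⟩
  · have h2 := congrArg (starRingEnd ℂ) hq
    simp only [map_mul, Complex.conj_ofReal, cdot_conj] at h2
    linear_combination -h2
  · have := hrel τ hτ
    field_simp
    linear_combination this - τ * hq

lemma stepE3 {s n : ℕ} {V : Set (Fin s → ℂ)} (hV : IsOpen V) (hVc : Convex ℝ V)
    {f : (Fin s → ℂ) → Fin n → ℂ} (hf : DifferentiableOn ℂ f V)
    (horth : ∀ z ∈ V, ∀ w ∈ V, cdot z w = 1 → cdot (f z) (f w) = 1)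
    (hcol : ∀ w ∈ V, ∀ z ∈ V, cdot w w = 1 → cdot z w = 1 → ∀ t : ℂ, w + t • (z - w) ∈ V → ∀ k l,
      (f z k - f w k) * (f (w + t • (z - w)) l - f w l) -
      (f z l - f w l) * (f (w + t • (z - w)) k - f w k) = 0)
    {p z : Fin s → ℂ} (hp : p ∈ V) (hpn : cdot p p = 1) (hz : z ∈ V) (hzp : cdot z p = 1)
    (hb : fderiv ℂ f p (z - p) ≠ 0) :
    ∃ c : ℂ, c ≠ 0 ∧ ∀ w ∈ V, c * (cdot (f z) (f w) - 1) * (cdot p w - 1) =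
      (cdot (f p) (f w) - 1) * (cdot z w - 1) := by
  set ζ := z - p with hζ
  have hζp : cdot ζ p = 0 := by rw [hζ, cdot_sub_left, hzp, hpn, sub_self]
  obtain ⟨-, κ, hκ⟩ := stepE2 hV hf horth hcol hp hpn hζp hb
  set b := fderiv ℂ f p ζ with hbdef
  have hζ0 : ζ ≠ 0 := by
    intro h
    apply hb
    rw [hbdef, h, map_zero]
  have hY : ∀ w ∈ V, (cdot (f w) b - (starRingEnd ℂ) κ * (cdot (f w) (f p) - 1)) * (cdot w p - 1) -
      (cdot (f w) (f p) - 1) * cdot w ζ = 0 := by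
    have hid : DifferentiableOn ℂ (fun w : Fin s → ℂ => w) V := differentiableOn_id
    have hd : DifferentiableOn ℂ (fun w => (cdot (f w) b - (starRingEnd ℂ) κ * (cdot (f w) (f p) - 1)) *
        (cdot w p - 1) - (cdot (f w) (f p) - 1) * cdot w ζ) V :=
      (((diff_cdot hf b).sub (((diff_cdot hf (f p)).sub_const 1).const_mul _)).mul
        ((diff_cdot hid p).sub_const 1)).sub
        (((diff_cdot hf (f p)).sub_const 1).mul (diff_cdot hid ζ))
    obtain ⟨ε, hε0, hεV⟩ : ∃ ε : ℝ, 0 < ε ∧ p + (ε : ℂ) • ζ ∈ V := by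
      have : Tendsto (fun t : ℝ => p + (t : ℂ) • ζ) (𝓝 0) (𝓝 p) :=
        Continuous.tendsto' (by fun_prop) _ _ (by simp)
      have h1 : ∀ᶠ t : ℝ in 𝓝[>] 0, p + (t : ℂ) • ζ ∈ V :=
        (this.eventually (hV.mem_nhds hp)).filter_mono nhdsWithin_le_nhds
      have h2 : ∀ᶠ t : ℝ in 𝓝[>] 0, 0 < t := self_mem_nhdsWithin
      obtain ⟨t, ht⟩ := (h2.and h1).exists
      exact ⟨t, ht.1, ht.2⟩
    set w0 := p + (ε : ℂ) • ζ with hw0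
    refine CH.identity hV hVc.isPreconnected (CH.of_diff hd) hεV ?_
    have hw0ζ : cdot ζ w0 ≠ 0 := by
      rw [hw0, cdot_add_right, cdot_smul_right, hζp, zero_add, cdot_self]
      have := (nsq_pos hζ0).ne'
      simp only [Complex.conj_ofReal]
      exact mul_ne_zero (by exact_mod_cast hε0.ne') (by exact_mod_cast this)
    have hw0p : cdot p w0 = 1 := by
      rw [hw0, cdot_add_right, cdot_smul_right, hpn, cdot_comm_zero hζp]; ring
    have hc1 : ContinuousAt (fun w => cdot ζ w) w0 :=
      (cont_cdot continuous_const continuous_id).continuousAt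
    have hc2 : ContinuousAt (fun w => cdot p w) w0 :=
      (cont_cdot continuous_const continuous_id).continuousAt
    have hcσ : ContinuousAt (fun w => p + (-(cdot p w - 1) / cdot ζ w) • ζ) w0 := by
      refine continuousAt_const.add (ContinuousAt.fun_smul (ContinuousAt.div ?_ hc1 hw0ζ) continuousAt_const)
      exact (hc2.sub continuousAt_const).neg
    have hσ0 : p + (-(cdot p w0 - 1) / cdot ζ w0) • ζ = p := by simp [hw0p]
    have ev1 : ∀ᶠ w in 𝓝 w0, p + (-(cdot p w - 1) / cdot ζ w) • ζ ∈ V :=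
      hcσ.eventually (hV.mem_nhds (by simpa only [hσ0] using hp))
    filter_upwards [ev1, hV.eventually_mem hεV, hc1.eventually_ne hw0ζ] with w h1 h2 h3
    set σ := -(cdot p w - 1) / cdot ζ w with hσ
    obtain ⟨μ, hμ, hfμ⟩ := hκ σ h1
    have hβ : cdot p w - 1 = -(σ * cdot ζ w) := by rw [hσ]; field_simp
    have hB := horth _ h1 w h2 (by rw [cdot_add_left, cdot_smul_left]; linear_combination hβ)
    rw [hfμ, cdot_add_left, cdot_smul_left] at hB
    have hfin : (cdot b (f w) - κ * (cdot (f p) (f w) - 1)) * (cdot p w - 1) -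
      (cdot (f p) (f w) - 1) * cdot ζ w = 0 := by
      have hB' : cdot (f p) (f w) - 1 = -(μ * cdot b (f w)) := by linear_combination hB
      rw [hβ, hB']
      linear_combination cdot b (f w) * cdot ζ w * hμ
    have := congrArg (starRingEnd ℂ) hfin
    simpa only [map_sub, map_mul, map_one, map_zero, cdot_conj] using this
  have hzV : p + (1 : ℂ) • ζ ∈ V := by simpa [hζ] using hz
  obtain ⟨μ, hμ, hfμ⟩ := hκ 1 hzV
  refine ⟨1 - κ * 1, ?_, fun w hw => ?_⟩
  · intro h; rw [h, zero_mul] at hμ; exact zero_ne_one hμ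
  · have hzz : z = p + ζ := by simp [hζ]
    rw [one_smul, ← hzz] at hfμ
    have h := congrArg (starRingEnd ℂ) (hY w hw)
    simp only [map_sub, map_mul, map_one, map_zero, cdot_conj, Complex.conj_conj] at h
    rw [hfμ, cdot_add_left, cdot_smul_left]
    have h2 : cdot z w = cdot p w + cdot ζ w := by rw [← cdot_add_left, ← hzz]
    rw [h2]
    linear_combination h + cdot b (f w) * (cdot p w - 1) * hμ

lemma CH.mul_zero {E : Type*} [NormedAddCommGroup E] [NormedSpace ℂ E] {V : Set E} (hV : IsOpen V)
    (hVc : Convex ℝ V) {h g : E → ℂ} (hh : CH V h) (hg : CH V g) (h0 : ∀ x ∈ V, h x * g x = 0)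
    {x0 : E} (hx0 : x0 ∈ V) (hgx : g x0 ≠ 0) : ∀ x ∈ V, h x = 0 := by
  intro x hx
  set γ : ℂ → E := fun l => x0 + l • (x - x0) with hγ
  have hγd : Differentiable ℂ γ := by intro x; fun_prop
  set D := γ ⁻¹' V with hD
  have hDo : IsOpen D := hV.preimage hγd.continuous
  have hDc : IsPreconnected D := (line_convex hVc x0 (x - x0)).isPreconnected
  have hd1 := hh D γ hDo hγd.differentiableOn (fun l hl => hl)
  have hd2 := hg D γ hDo hγd.differentiableOn (fun l hl => hl)
  have h0D : (0 : ℂ) ∈ D := by simpa [hD, hγ] using hx0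
  have hz : (fun l => h (γ l)) =ᶠ[𝓝 0] 0 := by
    have hc := (hd2.continuousOn).continuousAt (hDo.mem_nhds h0D)
    have hne : g (γ 0) ≠ 0 := by simpa [hγ] using hgx
    filter_upwards [hc.eventually_ne hne, hDo.eventually_mem h0D] with l h1 h2
    exact (mul_eq_zero.1 (h0 _ h2)).resolve_right h1
  have := (hd1.analyticOnNhd hDo).eqOn_zero_of_preconnected_of_eventuallyEq_zero hDc h0D hz
      (x := 1) (by simpa [hD, hγ] using hx)
  simpa [hγ] using this

end part6

section part7
open Set Filter Topology Module

lemma stepE5 {s n : ℕ} {f : (Fin s → ℂ) → Fin n → ℂ} {p : Fin s → ℂ} (hf : DifferentiableAt ℂ f p)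
    (hfp : cdot (f p) (f p) = 1)
    (hq : 0 < (cdot (fderiv ℂ f p p) (f p)).re) :
    ∀ᶠ t : ℝ in 𝓝[>] 0, 1 < nsq (f (p + (t : ℂ) • p)) := by
  have h1 : ∀ i, HasDerivAt (fun t : ℝ => f (p + (t : ℂ) • p) i) (fderiv ℂ f p p i) 0 := by
    intro i
    have h := hasDerivAt_pi.1 (hasDeriv_line hf p) i
    have h' : HasDerivAt (fun t : ℂ => f (p + t • p) i) (fderiv ℂ f p p i) ((0 : ℝ) : ℂ) := by
      simpa using h
    exact h'.comp_ofReal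
  have h2 : HasDerivAt (fun t : ℝ => cdot (f (p + (t : ℂ) • p)) (f (p + (t : ℂ) • p)))
      (cdot (fderiv ℂ f p p) (f p) + cdot (f p) (fderiv ℂ f p p)) 0 := by
    unfold cdot
    rw [← Finset.sum_add_distrib]
    refine HasDerivAt.fun_sum fun i _ => ?_
    have hi := h1 i
    refine (hi.fun_mul hi.star).congr_deriv ?_
    simp
  have h3 : HasDerivAt (fun t : ℝ => nsq (f (p + (t : ℂ) • p)))
      (cdot (fderiv ℂ f p p) (f p) + cdot (f p) (fderiv ℂ f p p)).re 0 := by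
    have := Complex.reCLM.hasFDerivAt.comp_hasDerivAt 0 h2
    refine this.congr_of_eventuallyEq (Eventually.of_forall fun t => ?_)
    simp [cdot_self]
  have hpos : 0 < (cdot (fderiv ℂ f p p) (f p) + cdot (f p) (fderiv ℂ f p p)).re := by
    have : (cdot (f p) (fderiv ℂ f p p)).re = (cdot (fderiv ℂ f p p) (f p)).re := by
      rw [← cdot_conj]; simp
    rw [Complex.add_re, this]; linarith
  have h4 := (hasDerivAt_iff_tendsto_slope.1 h3).eventually (lt_mem_nhds hpos)
  have h5 : ∀ᶠ t : ℝ in 𝓝[>] 0, 0 < slope (fun t : ℝ => nsq (f (p + (t : ℂ) • p))) 0 t :=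
    h4.filter_mono (nhdsWithin_mono _ fun t ht => ne_of_gt ht)
  filter_upwards [h5, self_mem_nhdsWithin] with t ht ht0
  have ht0' : 0 < t := ht0
  rw [slope_def_field] at ht
  have h6 : nsq (f (p + ((0 : ℝ) : ℂ) • p)) = 1 := by
    simpa using nsq_eq_one hfp
  have h7 := (div_pos_iff_of_pos_right (by linarith : (0 : ℝ) < t - 0)).1 ht
  linarith

lemma stepE {s n : ℕ} (hs : 2 ≤ s) {V : Set (Fin s → ℂ)} (hV : IsOpen V) (hVc : Convex ℝ V)
    {p0 : Fin s → ℂ} (hp0 : p0 ∈ V) (hp0n : cdot p0 p0 = 1)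
    {f : (Fin s → ℂ) → Fin n → ℂ} (hf : DifferentiableOn ℂ f V)
    (horth : ∀ z ∈ V, ∀ w ∈ V, cdot z w = 1 → cdot (f z) (f w) = 1)
    (hcol : ∀ w ∈ V, ∀ z ∈ V, cdot w w = 1 → cdot z w = 1 → ∀ t : ℂ, w + t • (z - w) ∈ V → ∀ k l,
      (f z k - f w k) * (f (w + t • (z - w)) l - f w l) -
      (f z l - f w l) * (f (w + t • (z - w)) k - f w k) = 0)
    (hnc : ∃ z ∈ V, ∃ w ∈ V, f z ≠ f w) :
    ∃ (W : Set (Fin s → ℂ)) (o : Fin s → ℂ) (H : (Fin s → ℂ) → ℂ), IsOpen W ∧ o ∈ W ∧ W ⊆ V ∧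
      (∀ z ∈ W, H z ≠ 0) ∧ ∀ z ∈ W, ∀ w ∈ W,
      cdot (f z) (f w) - 1 = H z * (starRingEnd ℂ) (H w) * (cdot z w - 1) := by
  have hfk : ∀ k, DifferentiableOn ℂ (fun z => f z k) V := fun k => differentiableOn_pi.1 hf k
  have hid : DifferentiableOn ℂ (fun w : Fin s → ℂ => w) V := differentiableOn_id
  have hder : ∀ z, ∀ w ∈ V, ∀ k, deriv (fun t : ℂ => f (w + t • (z - w)) k) 0 = fderiv ℂ f w (z - w) k := by
    intro z w hw k
    exact (hasDerivAt_pi.1 (hasDeriv_line (hf.differentiableAt (hV.mem_nhds hw)) (z - w)) k).deriv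
  have hgCH : ∀ k, CH (V ×ˢ V) (fun q : (Fin s → ℂ) × (Fin s → ℂ) =>
      deriv (fun t : ℂ => f (q.2 + t • (q.1 - q.2)) k) 0) := fun k => CH_deriv hV (hfk k)
  -- nondegenerate point
  obtain ⟨z2, hz2, w2, hw2, k2, hg2⟩ : ∃ z ∈ V, ∃ w ∈ V, ∃ k,
      deriv (fun t : ℂ => f (w + t • (z - w)) k) 0 ≠ 0 := by
    by_contra hcon
    push Not at hcon
    obtain ⟨z, hz, w, hw, hzw⟩ := hnc
    apply hzw
    refine hV.is_const_of_fderiv_eq_zero hVc.isPreconnected hf ?_ hz hw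
    intro x hx
    ext d k
    obtain ⟨t, ht, ht0⟩ := (((line_eventually hV hx d).filter_mono
      (nhdsWithin_le_nhds (s := {0}ᶜ))).and self_mem_nhdsWithin).exists
    have h1 := hcon _ ht x hx k
    rw [hder _ x hx, add_sub_cancel_left, map_smul] at h1
    have : t ≠ 0 := ht0
    simpa [this] using h1
  -- X vanishes
  have hX : ∀ w ∈ V, ∀ w' ∈ V, ∀ z ∈ V, ∀ p ∈ V,
      (cdot (f z) (f w) - 1) * (cdot p w - 1) * ((cdot (f p) (f w') - 1) * (cdot z w' - 1)) -
      (cdot (f p) (f w) - 1) * (cdot z w - 1) * ((cdot (f z) (f w') - 1) * (cdot p w' - 1)) = 0 := by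
    intro w hw w' hw'
    have a1 := fun w => (diff_cdot hf (f w)).sub_const 1
    have a2 := fun w => (diff_cdot hid w).sub_const 1
    have hXCH : CH (V ×ˢ V) (fun q : (Fin s → ℂ) × (Fin s → ℂ) =>
      (cdot (f q.1) (f w) - 1) * (cdot q.2 w - 1) * ((cdot (f q.2) (f w') - 1) * (cdot q.1 w' - 1)) -
      (cdot (f q.2) (f w) - 1) * (cdot q.1 w - 1) * ((cdot (f q.1) (f w') - 1) * (cdot q.2 w' - 1))) :=
      (((CH.fst (a1 w)).mul (CH.snd (a2 w))).mul ((CH.snd (a1 w')).mul (CH.fst (a2 w')))).sub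
      (((CH.snd (a1 w)).mul (CH.fst (a2 w))).mul ((CH.fst (a1 w')).mul (CH.snd (a2 w'))))
    have hprod := lemB hs hV hVc hp0 hp0n (hXCH.mul (hgCH k2)) (by
      intro z hz p hp hpn hzp
      by_cases hb : fderiv ℂ f p (z - p) = 0
      · simp only [hder z p hp k2, hb]; simp
      · obtain ⟨c, hc0, hc⟩ := stepE3 hV hVc hf horth hcol hp hpn hz hzp hb
        have e1 := hc w hw
        have e2 := hc w' hw'
        apply mul_eq_zero_of_left
        apply (mul_eq_zero.1 _).resolve_left hc0
        simp only
        linear_combination (cdot (f p) (f w') - 1) * (cdot z w' - 1) * e1 -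
          (cdot (f p) (f w) - 1) * (cdot z w - 1) * e2)
    have := CH.mul_zero (hV.prod hV) (hVc.prod hVc) hXCH (hgCH k2)
      (fun q hq => hprod q.1 hq.1 q.2 hq.2) (x0 := (z2, w2)) ⟨hz2, hw2⟩ hg2
    intro z hz p hp
    exact this (z, p) ⟨hz, hp⟩
  -- the point o
  obtain ⟨p, hp, hpn, z, hz, hzp, hb⟩ : ∃ p ∈ V, cdot p p = 1 ∧ ∃ z ∈ V, cdot z p = 1 ∧
      fderiv ℂ f p (z - p) ≠ 0 := by
    by_contra hcon
    push Not at hcon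
    apply hg2
    refine lemB hs hV hVc hp0 hp0n (hgCH k2) ?_ z2 hz2 w2 hw2
    intro z hz p hp hpn hzp
    rw [hder z p hp, hcon p hp hpn z hz hzp]; rfl
  have hq : 0 < (cdot (fderiv ℂ f p p) (f p)).re := by
    have h1 := (stepE2 hV hf horth hcol hp hpn
      (by rw [cdot_sub_left, hzp, hpn, sub_self] : cdot (z - p) p = 0) hb).1
    have hζ0 : z - p ≠ 0 := by
      intro h; apply hb; rw [h, map_zero]
    have h2 := congrArg Complex.re h1
    rw [Complex.re_mul_ofReal, Complex.ofReal_re] at h2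
    have h3 := nsq_pos hb
    rw [← h2] at h3
    exact (pos_iff_pos_of_mul_pos h3).2 (nsq_pos hζ0)
  obtain ⟨o, hoV, hon, hfo⟩ : ∃ o ∈ V, 1 < nsq o ∧ 1 < nsq (f o) := by
    have e1 := stepE5 (hf.differentiableAt (hV.mem_nhds hp)) (horth p hp p hp hpn) hq
    have this : Tendsto (fun t : ℝ => p + (t : ℂ) • p) (𝓝 0) (𝓝 p) :=
      Continuous.tendsto' (by fun_prop) _ _ (by simp)
    have e2 : ∀ᶠ t : ℝ in 𝓝[>] 0, p + (t : ℂ) • p ∈ V :=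
      (this.eventually (hV.mem_nhds hp)).filter_mono nhdsWithin_le_nhds
    have e3 : ∀ᶠ t : ℝ in 𝓝[>] 0, 0 < t := self_mem_nhdsWithin
    obtain ⟨t, h1, h2, h3⟩ := (e1.and (e2.and e3)).exists
    refine ⟨_, h2, ?_, h1⟩
    have h4 : (nsq (p + (t : ℂ) • p) : ℂ) = (((1 + t) ^ 2 : ℝ) : ℂ) := by
      rw [← cdot_self]
      simp only [cdot_add_left, cdot_add_right, cdot_smul_left, cdot_smul_right, hpn]
      simp; ring
    have h5 : nsq (p + (t : ℂ) • p) = (1 + t) ^ 2 := by exact_mod_cast h4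
    rw [h5]; nlinarith
  have hβo : cdot o o - 1 ≠ 0 := by
    rw [cdot_self]
    have : nsq o - 1 ≠ 0 := by linarith
    exact_mod_cast this
  have hBo : cdot (f o) (f o) - 1 ≠ 0 := by
    rw [cdot_self]
    have : nsq (f o) - 1 ≠ 0 := by linarith
    exact_mod_cast this
  have c1 : ContinuousOn (fun z => cdot (f z) (f o) - 1) V := ((diff_cdot hf (f o)).sub_const 1).continuousOn
  have c2 : ContinuousOn (fun z => cdot z o - 1) V := ((diff_cdot hid o).sub_const 1).continuousOn
  set c : ℝ := √((nsq o - 1) / (nsq (f o) - 1)) with hc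
  have hcpos : 0 < c := Real.sqrt_pos.2 (div_pos (by linarith) (by linarith))
  have hcsq : (c : ℂ) * c * (cdot (f o) (f o) - 1) = cdot o o - 1 := by
    have h1 : c * c * (nsq (f o) - 1) = nsq o - 1 := by
      rw [hc, Real.mul_self_sqrt (div_nonneg (by linarith) (by linarith))]
      have : nsq (f o) - 1 ≠ 0 := by linarith
      field_simp
    rw [cdot_self, cdot_self]
    exact_mod_cast h1
  refine ⟨(V ∩ (fun z => cdot (f z) (f o) - 1) ⁻¹' {0}ᶜ) ∩ (V ∩ (fun z => cdot z o - 1) ⁻¹' {0}ᶜ), o,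
    fun z => c * (cdot (f z) (f o) - 1) / (cdot z o - 1),
    (c1.isOpen_inter_preimage hV isOpen_compl_singleton).inter
      (c2.isOpen_inter_preimage hV isOpen_compl_singleton),
    ⟨⟨hoV, hBo⟩, ⟨hoV, hβo⟩⟩, fun z hz => hz.1.1, ?_, ?_⟩
  · intro z hz
    have h1 : cdot (f z) (f o) - 1 ≠ 0 := hz.1.2
    have h2 : cdot z o - 1 ≠ 0 := hz.2.2
    exact div_ne_zero (mul_ne_zero (by exact_mod_cast hcpos.ne') h1) h2
  · intro z hz w hw
    have h1 : cdot (f z) (f o) - 1 ≠ 0 := hz.1.2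
    have h2 : cdot z o - 1 ≠ 0 := hz.2.2
    have h3 : cdot w o - 1 ≠ 0 := hw.2.2
    have h3' : cdot o w - 1 ≠ 0 := by
      intro h
      apply h3
      have := congrArg (starRingEnd ℂ) h
      simpa [cdot_conj] using this
    have hx := hX w hw.1.1 o hoV z hz.1.1 o hoV
    simp only [map_div₀, map_mul, map_sub, map_one, cdot_conj, Complex.conj_ofReal]
    rw [← hcsq] at hx
    have hx' : (cdot (f o) (f o) - 1) * ((cdot (f z) (f w) - 1) * (cdot o w - 1) * (cdot z o - 1) -
      c * c * (cdot (f o) (f w) - 1) * (cdot z w - 1) * (cdot (f z) (f o) - 1)) = 0 := by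
      linear_combination hx
    have hx'' := (mul_eq_zero.1 hx').resolve_left hBo
    field_simp
    linear_combination hx''

end part7

section part8
open Set Filter Topology Module

/-- first block -/
def fstB {a b : ℕ} (x : Fin (a + b) → ℂ) : Fin a → ℂ := fun i => x (Fin.castAdd b i)
/-- second block -/
def sndB {a b : ℕ} (x : Fin (a + b) → ℂ) : Fin b → ℂ := fun i => x (Fin.natAdd a i)

/-- the indefinite Hermitian form -/
def hfm {a b : ℕ} (x y : Fin (a + b) → ℂ) : ℂ := cdot (fstB x) (fstB y) - cdot (sndB x) (sndB y)

lemma hfm_add_left {a b : ℕ} (x y w : Fin (a + b) → ℂ) : hfm (x + y) w = hfm x w + hfm y w := by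
  have h1 : fstB (x + y) = fstB x + fstB y := rfl
  have h2 : sndB (x + y) = sndB x + sndB y := rfl
  rw [hfm, hfm, hfm, h1, h2, cdot_add_left, cdot_add_left]; ring

lemma hfm_sub_left {a b : ℕ} (x y w : Fin (a + b) → ℂ) : hfm (x - y) w = hfm x w - hfm y w := by
  have h1 : fstB (x - y) = fstB x - fstB y := rfl
  have h2 : sndB (x - y) = sndB x - sndB y := rfl
  rw [hfm, hfm, hfm, h1, h2, cdot_sub_left, cdot_sub_left]; ring

lemma hfm_smul_left {a b : ℕ} (c : ℂ) (x w : Fin (a + b) → ℂ) : hfm (c • x) w = c * hfm x w := by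
  have h1 : fstB (c • x) = c • fstB x := rfl
  have h2 : sndB (c • x) = c • sndB x := rfl
  rw [hfm, hfm, h1, h2, cdot_smul_left, cdot_smul_left]; ring

lemma hfm_conj {a b : ℕ} (x w : Fin (a + b) → ℂ) : (starRingEnd ℂ) (hfm x w) = hfm w x := by
  rw [hfm, map_sub, cdot_conj, cdot_conj]; rfl

lemma hfm_zero_left {a b : ℕ} (w : Fin (a + b) → ℂ) : hfm 0 w = 0 := by
  have := hfm_smul_left 0 0 w
  simpa using this

lemma hfm_sum_left {a b : ℕ} {ι : Type*} (S : Finset ι) (x : ι → Fin (a + b) → ℂ) (w : Fin (a + b) → ℂ) :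
    hfm (∑ i ∈ S, x i) w = ∑ i ∈ S, hfm (x i) w := by
  classical
  induction S using Finset.induction_on with
  | empty => simp [hfm_zero_left]
  | insert a S ha ih => simp [Finset.sum_insert ha, hfm_add_left, ih]

lemma hfm_comm_zero {a b : ℕ} {x y : Fin (a + b) → ℂ} (h : hfm x y = 0) : hfm y x = 0 := by
  rw [← hfm_conj, h, map_zero]

lemma hfm_add_right {a b : ℕ} (x y w : Fin (a + b) → ℂ) : hfm w (x + y) = hfm w x + hfm w y := by
  rw [← hfm_conj, hfm_add_left, map_add, hfm_conj, hfm_conj]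

lemma hfm_sub_right {a b : ℕ} (x y w : Fin (a + b) → ℂ) : hfm w (x - y) = hfm w x - hfm w y := by
  rw [← hfm_conj, hfm_sub_left, map_sub, hfm_conj, hfm_conj]

lemma hfm_smul_right {a b : ℕ} (c : ℂ) (x w : Fin (a + b) → ℂ) :
    hfm w (c • x) = (starRingEnd ℂ) c * hfm w x := by
  rw [← hfm_conj, hfm_smul_left, map_mul, hfm_conj]

lemma hfm_sum_right {a b : ℕ} {ι : Type*} (S : Finset ι) (x : ι → Fin (a + b) → ℂ) (w : Fin (a + b) → ℂ) :
    hfm w (∑ i ∈ S, x i) = ∑ i ∈ S, hfm w (x i) := by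
  rw [← hfm_conj, hfm_sum_left, map_sum]
  exact Finset.sum_congr rfl fun i _ => hfm_conj _ _

lemma hfm_append {a b : ℕ} (u u' : Fin a → ℂ) (v v' : Fin b → ℂ) :
    hfm (Fin.append u v) (Fin.append u' v') = cdot u u' - cdot v v' := by
  simp [hfm, cdot, fstB, sndB]

lemma ext_blocks {a b : ℕ} {x y : Fin (a + b) → ℂ} (h1 : fstB x = fstB y) (h2 : sndB x = sndB y) : x = y := by
  funext i
  refine Fin.addCases (fun i => ?_) (fun i => ?_) i
  · exact congrFun h1 i
  · exact congrFun h2 i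

lemma positivity_lemma {a b : ℕ} {ι : Type*} [Fintype ι] [DecidableEq ι] (hι : Fintype.card ι = a)
    {P : ι → Fin (a + b) → ℂ} (hP : ∀ i j, hfm (P i) (P j) = if i = j then 1 else 0)
    {u : Fin (a + b) → ℂ} (hu : ∀ i, hfm u (P i) = 0) (huu : 0 ≤ (hfm u u).re) : u = 0 := by
  let L : (ι → ℂ) × ℂ →ₗ[ℂ] (Fin a → ℂ) :=
    { toFun := fun c => fstB (∑ i, c.1 i • P i + c.2 • u)
      map_add' := by
        intro x y
        funext k
        simp [fstB, add_mul, Finset.sum_add_distrib]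
        ring
      map_smul' := by
        intro c x
        funext k
        simp [fstB, Finset.mul_sum, mul_add, mul_assoc] }
  have hker : LinearMap.ker L ≠ ⊥ := LinearMap.ker_ne_bot_of_finrank_lt (by simp [hι])
  obtain ⟨⟨c, d⟩, hx, hx0⟩ := (Submodule.ne_bot_iff _).1 hker
  set y := ∑ i, c i • P i + d • u with hy
  have hy1 : fstB y = 0 := hx
  have hyy : hfm y y = ((-(nsq (sndB y)) : ℝ) : ℂ) := by
    rw [hfm, hy1, cdot_zero_left, cdot_self]; simp
  have hyP : ∀ j, hfm y (P j) = c j := by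
    intro j
    simp [hy, hfm_add_left, hfm_sum_left, hfm_smul_left, hP, hu]
  have hyu : hfm y u = d * hfm u u := by
    simp [hy, hfm_add_left, hfm_sum_left, hfm_smul_left, hfm_comm_zero (hu _)]
  have hyy2 : hfm y y = ∑ i, (starRingEnd ℂ) (c i) * c i + (starRingEnd ℂ) d * (d * hfm u u) := by
    have : hfm y y = hfm y (∑ i, c i • P i + d • u) := by rw [← hy]
    rw [this, hfm_add_right, hfm_sum_right, hfm_smul_right, hyu]
    simp only [hfm_smul_right, hyP]
  have hre : ∑ i, ‖c i‖ ^ 2 + ‖d‖ ^ 2 * (hfm u u).re = -(nsq (sndB y)) := by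
    have h1 := congrArg Complex.re (hyy2.symm.trans hyy)
    have e1 : ∑ i, (starRingEnd ℂ) (c i) * c i = ((∑ i, ‖c i‖ ^ 2 : ℝ) : ℂ) := by
      push_cast
      exact Finset.sum_congr rfl fun i _ => Complex.conj_mul' (c i)
    rw [e1, ← mul_assoc, Complex.conj_mul', Complex.ofReal_re, Complex.add_re, Complex.ofReal_re] at h1
    rw [← h1, ← Complex.ofReal_pow, Complex.re_ofReal_mul]
  have hs1 : 0 ≤ ∑ i, ‖c i‖ ^ 2 := Finset.sum_nonneg fun i _ => by positivity
  have hs2 : 0 ≤ ‖d‖ ^ 2 * (hfm u u).re := mul_nonneg (by positivity) huu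
  have hs3 := nsq_nonneg (sndB y)
  have hc : ∀ i, c i = 0 := by
    have : ∑ i, ‖c i‖ ^ 2 = 0 := by linarith
    rw [Finset.sum_eq_zero_iff_of_nonneg (fun i _ => by positivity)] at this
    intro i
    simpa using this i (Finset.mem_univ _)
  have hy0 : y = 0 := by
    refine ext_blocks hy1 (nsq_eq_zero (by linarith))
  have hdu : d • u = 0 := by
    rw [← hy0, hy]; simp [hc]
  rcases smul_eq_zero.1 hdu with h | h
  · exfalso
    apply hx0
    rw [h]
    have : c = 0 := funext hc
    rw [this]; rfl
  · exact h

lemma neg_extend {a b : ℕ} {ι : Type*} [Fintype ι] [DecidableEq ι] (hι : Fintype.card ι = a)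
    {P : ι → Fin (a + b) → ℂ} (hP : ∀ i j, hfm (P i) (P j) = if i = j then 1 else 0)
    {q : ℕ} {Q : Fin q → Fin (a + b) → ℂ} (hQ : ∀ i j, hfm (Q i) (Q j) = if i = j then -1 else 0)
    (hQP : ∀ i j, hfm (Q i) (P j) = 0) : ∀ k, q + k ≤ b → ∃ Q' : Fin (q + k) → Fin (a + b) → ℂ,
      (∀ i j, hfm (Q' i) (Q' j) = if i = j then -1 else 0) ∧ (∀ i j, hfm (Q' i) (P j) = 0) ∧
      ∀ i, Q' (Fin.castAdd k i) = Q i := by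
  intro k
  induction k with
  | zero => intro _; exact ⟨Q, hQ, hQP, fun i => rfl⟩
  | succ k ih =>
    intro hk
    obtain ⟨Q', h1, h2, h3⟩ := ih (by omega)
    let L : (Fin (a + b) → ℂ) →ₗ[ℂ] (ι → ℂ) × (Fin (q + k) → ℂ) :=
      { toFun := fun u => (fun i => hfm u (P i), fun i => hfm u (Q' i))
        map_add' := by
          intro x y
          simp only [hfm_add_left]; rfl
        map_smul' := by
          intro c x
          simp only [hfm_smul_left]; rfl }
    have hker : LinearMap.ker L ≠ ⊥ := LinearMap.ker_ne_bot_of_finrank_lt (by simp [hι]; omega)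
    obtain ⟨u, hx, hx0⟩ := (Submodule.ne_bot_iff _).1 hker
    have hx' : L u = 0 := hx
    have huP : ∀ i, hfm u (P i) = 0 := fun i => congrFun (congrArg Prod.fst hx') i
    have huQ : ∀ i, hfm u (Q' i) = 0 := fun i => congrFun (congrArg Prod.snd hx') i
    have hneg : (hfm u u).re < 0 := by
      by_contra h
      exact hx0 (positivity_lemma hι hP huP (not_lt.1 h))
    have hreal : hfm u u = (((hfm u u).re : ℝ) : ℂ) := (Complex.conj_eq_iff_re.1 (hfm_conj u u)).symm
    set N : ℝ := √(-(hfm u u).re) with hN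
    have hNpos : 0 < N := Real.sqrt_pos.2 (by linarith)
    have hNsq : (N : ℂ) * N = -hfm u u := by
      rw [hreal]
      have := Real.mul_self_sqrt (by linarith : 0 ≤ -(hfm u u).re)
      rw [← hN] at this
      exact_mod_cast this
    have hNne : (N : ℂ) ≠ 0 := by exact_mod_cast hNpos.ne'
    set v := (N : ℂ)⁻¹ • u with hv
    have hvv : hfm v v = -1 := by
      rw [hv, hfm_smul_left, hfm_smul_right]
      have : hfm u u = -((N : ℂ) * N) := by rw [hNsq]; ring
      rw [this]
      simp
      field_simp
    have hvP : ∀ i, hfm v (P i) = 0 := fun i => by rw [hv, hfm_smul_left, huP, mul_zero]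
    have hvQ : ∀ i, hfm v (Q' i) = 0 := fun i => by rw [hv, hfm_smul_left, huQ, mul_zero]
    refine ⟨Fin.snoc (α := fun _ => Fin (a + b) → ℂ) Q' v, ?_, ?_, ?_⟩
    · intro i j
      refine Fin.lastCases ?_ (fun i => ?_) i
      · refine Fin.lastCases ?_ (fun j => ?_) j
        · simp [hvv]
        · have : Fin.last (q + k) ≠ Fin.castSucc j := (Fin.castSucc_lt_last j).ne'
          simp [hvQ, this]
      · refine Fin.lastCases ?_ (fun j => ?_) j
        · have : Fin.castSucc i ≠ Fin.last (q + k) := (Fin.castSucc_lt_last i).ne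
          simp [hfm_comm_zero (hvQ i), this]
        · simp [h1]
    · intro i j
      refine Fin.lastCases ?_ (fun i => ?_) i
      · simp [hvP]
      · simp [h2]
    · intro i
      rw [← h3 i]
      have : Fin.castAdd (k + 1) i = Fin.castSucc (Fin.castAdd k i) := rfl
      rw [this, Fin.snoc_castSucc]

end part8

section part9
open Set Filter Topology Module

lemma cdot_single {s : ℕ} (z : Fin s → ℂ) (k : Fin s) : cdot z (Pi.single k 1) = z k := by
  simp [cdot, Pi.single_apply, apply_ite]

lemma stepF {s r b : ℕ} {W : Set (Fin s → ℂ)} (hW : IsOpen W) {o : Fin s → ℂ} (ho : o ∈ W)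
    {y : (Fin s → ℂ) → Fin (r + 1 + b) → ℂ} (hy : ∀ z ∈ W, ∀ w ∈ W, hfm (y z) (y w) = 1 - cdot z w)
    {B : Fin r → Fin (r + 1 + b) → ℂ} (hB : ∀ i j, hfm (B i) (B j) = if i = j then 1 else 0)
    (hyB : ∀ z ∈ W, ∀ i, hfm (y z) (B i) = 0) :
    ∃ (J0 : Fin (r + 1 + b) → ℂ) (J : Fin s → Fin (r + 1 + b) → ℂ),
      hfm J0 J0 = 1 ∧ (∀ k, hfm (J k) J0 = 0) ∧ (∀ k l, hfm (J k) (J l) = if k = l then -1 else 0) ∧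
      (∀ c, (∀ z ∈ W, hfm (y z) c = 0) → hfm J0 c = 0 ∧ ∀ k, hfm (J k) c = 0) ∧
      ∀ z ∈ W, y z = J0 + ∑ k, z k • J k := by
  obtain ⟨ε, hε0, hεW⟩ : ∃ ε : ℝ, 0 < ε ∧ ∀ k : Fin s, o + (ε : ℂ) • (Pi.single k 1 : Fin s → ℂ) ∈ W := by
    have h1 : ∀ᶠ t : ℝ in 𝓝[>] 0, ∀ k : Fin s, o + (t : ℂ) • (Pi.single k 1 : Fin s → ℂ) ∈ W := by
      rw [eventually_all]
      intro k
      have : Tendsto (fun t : ℝ => o + (t : ℂ) • (Pi.single k 1 : Fin s → ℂ)) (𝓝 0) (𝓝 o) :=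
        Continuous.tendsto' (by fun_prop) _ _ (by simp)
      exact (this.eventually (hW.mem_nhds ho)).filter_mono nhdsWithin_le_nhds
    have h2 : ∀ᶠ t : ℝ in 𝓝[>] 0, 0 < t := self_mem_nhdsWithin
    obtain ⟨t, ht⟩ := (h2.and h1).exists
    exact ⟨t, ht.1, ht.2⟩
  have hεc : (ε : ℂ) ≠ 0 := by exact_mod_cast hε0.ne'
  obtain ⟨J, hJ⟩ : ∃ J : Fin s → Fin (r + 1 + b) → ℂ, ∀ k, J k =
    (ε : ℂ)⁻¹ • (y (o + (ε : ℂ) • (Pi.single k 1 : Fin s → ℂ)) - y o) := ⟨_, fun k => rfl⟩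
  obtain ⟨J0, hJ0⟩ : ∃ J0, J0 = y o - ∑ k, o k • J k := ⟨_, rfl⟩
  have hyJ : ∀ z ∈ W, ∀ k, hfm (y z) (J k) = - z k := by
    intro z hz k
    rw [hJ, hfm_smul_right, hfm_sub_right, hy z hz _ (hεW k), hy z hz o ho, cdot_add_right,
      cdot_smul_right, cdot_single]
    simp only [map_inv₀, Complex.conj_ofReal]
    field_simp
    ring
  have hyJ0 : ∀ z ∈ W, hfm (y z) J0 = 1 := by
    intro z hz
    rw [hJ0, hfm_sub_right, hfm_sum_right, hy z hz o ho]
    simp only [hfm_smul_right, hyJ z hz]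
    simp only [cdot, mul_neg, Finset.sum_neg_distrib]
    simp only [mul_comm]
    ring
  have lin : ∀ c, (∀ z ∈ W, hfm (y z) c = 0) → hfm J0 c = 0 ∧ ∀ k, hfm (J k) c = 0 := by
    intro c hc
    have h1 : ∀ k, hfm (J k) c = 0 := by
      intro k
      rw [hJ, hfm_smul_left, hfm_sub_left, hc _ (hεW k), hc o ho]; simp
    refine ⟨?_, h1⟩
    rw [hJ0, hfm_sub_left, hfm_sum_left, hc o ho]
    simp [hfm_smul_left, h1]
  have hJJ0 : ∀ k, hfm (J k) J0 = 0 := by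
    intro k
    rw [hJ, hfm_smul_left, hfm_sub_left, hyJ0 _ (hεW k), hyJ0 o ho]; simp
  have hJ00 : hfm J0 J0 = 1 := by
    conv_lhs => rw [hJ0, hfm_sub_left, ← hJ0]
    rw [hfm_sum_left, hyJ0 o ho]
    simp [hfm_smul_left, hJJ0]
  have hJJ : ∀ k l, hfm (J k) (J l) = if k = l then -1 else 0 := by
    intro k l
    rw [hJ k, hfm_smul_left, hfm_sub_left, hyJ _ (hεW k), hyJ o ho]
    simp only [Pi.add_apply, Pi.smul_apply, Pi.single_apply, smul_eq_mul]
    rcases eq_or_ne k l with h | h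
    · subst h; simp; field_simp
    · simp [h, h.symm]
  refine ⟨J0, J, hJ00, hJJ0, hJJ, lin, ?_⟩
  intro z hz
  have hBl : ∀ i, hfm J0 (B i) = 0 ∧ ∀ k, hfm (J k) (B i) = 0 := fun i => lin _ fun z hz => hyB z hz i
  have huJ0 : hfm (y z - (J0 + ∑ k, z k • J k)) J0 = 0 := by
    rw [hfm_sub_left, hfm_add_left, hfm_sum_left, hyJ0 z hz, hJ00]
    simp [hfm_smul_left, hJJ0]
  have huJ : ∀ l, hfm (y z - (J0 + ∑ k, z k • J k)) (J l) = 0 := by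
    intro l
    rw [hfm_sub_left, hfm_add_left, hfm_sum_left, hyJ z hz, hfm_comm_zero (hJJ0 l)]
    simp [hfm_smul_left, hJJ]
  have huB : ∀ i, hfm (y z - (J0 + ∑ k, z k • J k)) (B i) = 0 := by
    intro i
    rw [hfm_sub_left, hfm_add_left, hfm_sum_left, hyB z hz, (hBl i).1]
    simp [hfm_smul_left, (hBl i).2]
  have hyu : hfm (y z - (J0 + ∑ k, z k • J k)) (y z) = 0 := by
    rw [hfm_sub_left, hfm_add_left, hfm_sum_left, hy z hz z hz, ← hfm_conj, hyJ0 z hz]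
    simp only [← hfm_conj (y z), hfm_smul_right, hyJ z hz]
    simp [cdot]
    ring
  have huu : hfm (y z - (J0 + ∑ k, z k • J k)) (y z - (J0 + ∑ k, z k • J k)) = 0 := by
    rw [hfm_sub_right (y z), hyu, hfm_add_right, hfm_sum_right, huJ0]
    simp [hfm_smul_right, huJ]
  have := positivity_lemma (ι := Option (Fin r)) (a := r + 1) (b := b) (by simp)
    (P := fun i => i.elim J0 B) (u := y z - (J0 + ∑ k, z k • J k)) (by
      rintro (_ | i) (_ | j)
      · simpa using hJ00
      · simpa using (hBl j).1
      · simpa using hfm_comm_zero (hBl i).1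
      · simpa using hB i j) (by
      rintro (_ | i)
      · exact huJ0
      · exact huB i) (by rw [huu]; simp)
  exact sub_eq_zero.1 this

end part9

section part10
open Set Filter Topology Module

lemma chart_mul_row {m n : ℕ} (G : Matrix (Fin m) (Fin m) ℂ) (Z : Fin m → Fin n → ℂ) (i : Fin m) :
    (G * chartMat m n (Matrix.of Z)) i = Fin.append (G i) (fun k => ∑ l, G i l * Z l k) := by
  funext j
  rw [Matrix.mul_apply]
  refine Fin.addCases (fun j => ?_) (fun j => ?_) j
  · rw [Fin.append_left, Finset.sum_eq_single j]
    · simp [chartMat]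
    · intro b _ hb
      have : (b : ℕ) ≠ j := fun h => hb (Fin.ext h)
      simp [chartMat, this]
    · simp
  · rw [Fin.append_right]
    simp [chartMat]

lemma Phi_mul_row_castSucc {r s k n : ℕ} (v : Fin (1 + s) → ℂ)
    (P : Fin (r + 1) → Fin n → ℂ) (Q : Fin (r + s + k) → Fin n → ℂ) (i : Fin r) :
    (Phi (r + 1) (r + s + k) s v * Matrix.of (Fin.append P Q)) i.castSucc =
      P i.castSucc + Q (Fin.castAdd k (Fin.castAdd s i)) := by
  funext c
  rw [Matrix.mul_apply, Fin.sum_univ_add, Fin.sum_univ_castSucc, Fin.sum_univ_add, Fin.sum_univ_add]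
  have h1 : ∀ j : Fin r, Phi (r + 1) (r + s + k) s v i.castSucc (Fin.castAdd (r + s + k) j.castSucc) =
      if i = j then 1 else 0 := by
    intro j
    simp [Phi, Fin.ext_iff]
  have h2 : Phi (r + 1) (r + s + k) s v i.castSucc (Fin.castAdd (r + s + k) (Fin.last r)) = 0 := by
    simp [Phi]
  have h3 : ∀ j : Fin r, Phi (r + 1) (r + s + k) s v i.castSucc
      (Fin.natAdd (r + 1) (Fin.castAdd k (Fin.castAdd s j))) = if i = j then 1 else 0 := by
    intro j
    have := j.2
    have e1 : ¬ (r + 1 + (j : ℕ) < r) := by omega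
    have e2 : r + 1 + (j : ℕ) < 2 * (r + 1) - 1 := by omega
    simp [Phi, Fin.ext_iff, e1, e2]
    intro h; omega
  have h4 : ∀ j : Fin s, Phi (r + 1) (r + s + k) s v i.castSucc
      (Fin.natAdd (r + 1) (Fin.castAdd k (Fin.natAdd r j))) = 0 := by
    intro j
    have e1 : ¬ (r + 1 + (r + (j : ℕ)) < r) := by omega
    have e2 : ¬ (r + 1 + (r + (j : ℕ)) < 2 * (r + 1) - 1) := by omega
    simp [Phi, e1, e2]
  have h5 : ∀ j : Fin k, Phi (r + 1) (r + s + k) s v i.castSucc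
      (Fin.natAdd (r + 1) (Fin.natAdd (r + s) j)) = 0 := by
    intro j
    have e1 : ¬ (r + 1 + (r + s + (j : ℕ)) < r) := by omega
    have e2 : ¬ (r + 1 + (r + s + (j : ℕ)) < 2 * (r + 1) - 1) := by omega
    simp [Phi, e1, e2]
  simp [h1, h2, h3, h4, h5]

lemma Phi_mul_row_last {r s k n : ℕ} (z : Fin s → ℂ)
    (P : Fin (r + 1) → Fin n → ℂ) (Q : Fin (r + s + k) → Fin n → ℂ) :
    (Phi (r + 1) (r + s + k) s (onecons z) * Matrix.of (Fin.append P Q)) (Fin.last r) =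
      P (Fin.last r) + ∑ j, z j • Q (Fin.castAdd k (Fin.natAdd r j)) := by
  funext c
  rw [Matrix.mul_apply, Fin.sum_univ_add, Fin.sum_univ_castSucc, Fin.sum_univ_add, Fin.sum_univ_add]
  have h1 : ∀ j : Fin r, Phi (r + 1) (r + s + k) s (onecons z) (Fin.last r)
      (Fin.castAdd (r + s + k) j.castSucc) = 0 := by
    intro j
    have := j.2
    have e1 : ¬ ((j : ℕ) = r) := by omega
    simp [Phi, e1]
    intro h; omega
  have h2 : Phi (r + 1) (r + s + k) s (onecons z) (Fin.last r)
      (Fin.castAdd (r + s + k) (Fin.last r)) = 1 := by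
    simp [Phi, onecons]
  have h3 : ∀ j : Fin r, Phi (r + 1) (r + s + k) s (onecons z) (Fin.last r)
      (Fin.natAdd (r + 1) (Fin.castAdd k (Fin.castAdd s j))) = 0 := by
    intro j
    have := j.2
    have e1 : ¬ (r + 1 + (j : ℕ) = r) := by omega
    simp [Phi, e1]
    intro h; omega
  have h4 : ∀ j : Fin s, Phi (r + 1) (r + s + k) s (onecons z) (Fin.last r)
      (Fin.natAdd (r + 1) (Fin.castAdd k (Fin.natAdd r j))) = z j := by
    intro j
    have := j.2
    have e1 : ¬ (r + 1 + (r + (j : ℕ)) = r) := by omega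
    have e2 : (2 * (r + 1) - 1 ≤ r + 1 + (r + (j : ℕ))) := by omega
    have e3 : r + 1 + (r + (j : ℕ)) < (2 * (r + 1) - 1 + s) := by omega
    have e4 : r + 1 + (r + (j : ℕ)) - (2 * (r + 1) - 1) = j := by omega
    simp [Phi, e1, e3, e4, onecons]
    intro h; omega
  have h5 : ∀ j : Fin k, Phi (r + 1) (r + s + k) s (onecons z) (Fin.last r)
      (Fin.natAdd (r + 1) (Fin.natAdd (r + s) j)) = 0 := by
    intro j
    have e1 : ¬ (r + 1 + (r + s + (j : ℕ)) = r) := by omega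
    have e2 : ¬ (r + 1 + (r + s + (j : ℕ)) < 2 * (r + 1) - 1 + s) := by omega
    simp [Phi, e1, e2]
  simp [h1, h2, h3, h4, h5]

lemma rowSpan_mul_le {m n : ℕ} (G : Matrix (Fin m) (Fin m) ℂ) (A : Matrix (Fin m) (Fin n) ℂ) :
    rowSpan (G * A) ≤ rowSpan A := by
  rw [rowSpan, Submodule.span_le]
  rintro _ ⟨i, rfl⟩
  have : (G * A) i = ∑ l, G i l • A l := by
    funext c
    simp [Matrix.mul_apply]
  change (G * A) i ∈ rowSpan A
  rw [this]
  exact Submodule.sum_mem _ fun l _ => Submodule.smul_mem _ _ (Submodule.subset_span ⟨l, rfl⟩)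

lemma rowSpan_mul {m n : ℕ} (G G' : Matrix (Fin m) (Fin m) ℂ) (hG : G' * G = 1)
    (A : Matrix (Fin m) (Fin n) ℂ) : rowSpan (G * A) = rowSpan A := by
  refine le_antisymm (rowSpan_mul_le _ _) ?_
  have := rowSpan_mul_le G' (G * A)
  rwa [← Matrix.mul_assoc, hG, Matrix.one_mul] at this

lemma sigMat_sq (a b : ℕ) : sigMat a b * sigMat a b = 1 := by
  rw [sigMat, Matrix.diagonal_mul_diagonal, ← Matrix.diagonal_one]
  congr 1
  funext i
  split_ifs <;> simp

lemma sigMat_conj (a b : ℕ) : (sigMat a b)ᴴ = sigMat a b := by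
  rw [sigMat, Matrix.diagonal_conjTranspose]
  congr 1
  funext i
  rw [Pi.star_apply]
  split_ifs <;> simp

lemma gram_entry {a b m : ℕ} (R : Fin m → Fin (a + b) → ℂ) (i j : Fin m) :
    (Matrix.of R * sigMat a b * (Matrix.of R)ᴴ) i j = hfm (R i) (R j) := by
  rw [Matrix.mul_apply, Fin.sum_univ_add]
  simp only [sigMat, Matrix.mul_diagonal, Matrix.conjTranspose_apply]
  simp [hfm, cdot, fstB, sndB, sub_eq_add_neg]

lemma stepG {r s k : ℕ} (O : Fin (r + 1) → Fin (r + 1) → ℂ)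
    (hO : ∀ i j, cdot (O i) (O j) = if i = j then 1 else 0)
    (C : Fin r → Fin (r + s + k) → ℂ) (hC : ∀ i j, cdot (C i) (C j) = if i = j then 1 else 0)
    (J0 : Fin (r + 1 + (r + s + k)) → ℂ) (J : Fin s → Fin (r + 1 + (r + s + k)) → ℂ)
    (hJ00 : hfm J0 J0 = 1) (hJJ0 : ∀ k, hfm (J k) J0 = 0)
    (hJJ : ∀ k l, hfm (J k) (J l) = if k = l then -1 else 0)
    (hB : ∀ i : Fin r, hfm J0 (Fin.append (O i.castSucc) 0) = 0 ∧
      ∀ k, hfm (J k) (Fin.append (O i.castSucc) 0) = 0)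
    (hD : ∀ i : Fin r, hfm J0 (Fin.append 0 (C i)) = 0 ∧ ∀ k, hfm (J k) (Fin.append 0 (C i)) = 0) :
    ∃ M' : Matrix (Fin (r + 1 + (r + s + k))) (Fin (r + 1 + (r + s + k))) ℂ, IsUnit M' ∧
      M' * sigMat (r + 1) (r + s + k) * M'ᴴ = sigMat (r + 1) (r + s + k) ∧
      ∀ (z : Fin s → ℂ) (Z : Fin (r + 1) → Fin (r + s + k) → ℂ) (c : ℂ), c ≠ 0 →
        (∀ i : Fin r, (fun l => ∑ m, O i.castSucc m * Z m l) = C i) →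
        (c • Fin.append (O (Fin.last r)) (fun l => ∑ m, O (Fin.last r) m * Z m l) = J0 + ∑ k, z k • J k) →
        rowSpan (chartMat (r + 1) (r + s + k) (Matrix.of Z) * M') =
          rowSpan (Phi (r + 1) (r + s + k) s (onecons z)) := by
  obtain ⟨P, hP1, hP2⟩ : ∃ P : Fin (r + 1) → Fin (r + 1 + (r + s + k)) → ℂ,
      (∀ i : Fin r, P i.castSucc = Fin.append (O i.castSucc) 0) ∧ P (Fin.last r) = J0 :=
    ⟨Fin.snoc (fun i => Fin.append (O i.castSucc) 0) J0, fun i => by simp, by simp⟩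
  have hPP : ∀ i j, hfm (P i) (P j) = if i = j then 1 else 0 := by
    intro i j
    refine Fin.lastCases ?_ (fun i => ?_) i <;> refine Fin.lastCases ?_ (fun j => ?_) j
    · simp [hP2, hJ00]
    · rw [hP2, hP1, (hB j).1, if_neg (Fin.castSucc_lt_last j).ne']
    · rw [hP2, hP1, hfm_comm_zero (hB i).1, if_neg (Fin.castSucc_lt_last i).ne]
    · rw [hP1, hP1, hfm_append, hO, cdot_zero_left, sub_zero]
  obtain ⟨Q, hQ1, hQ2⟩ : ∃ Q : Fin (r + s) → Fin (r + 1 + (r + s + k)) → ℂ,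
      (∀ i, Q (Fin.castAdd s i) = Fin.append 0 (C i)) ∧ ∀ i, Q (Fin.natAdd r i) = J i :=
    ⟨Fin.append (fun i => Fin.append 0 (C i)) J, fun i => by simp, fun i => by simp⟩
  have hQQ : ∀ i j, hfm (Q i) (Q j) = if i = j then -1 else 0 := by
    intro i j
    refine Fin.addCases (fun i => ?_) (fun i => ?_) i <;> refine Fin.addCases (fun j => ?_) (fun j => ?_) j
    · rw [hQ1, hQ1, hfm_append, hC, cdot_zero_left]
      simp only [Fin.castAdd_inj]
      split_ifs <;> simp
    · rw [hQ1, hQ2, hfm_comm_zero ((hD i).2 j), if_neg]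
      intro h; have := congrArg Fin.val h; simp at this; omega
    · rw [hQ1, hQ2, (hD j).2 i, if_neg]
      intro h; have := congrArg Fin.val h; simp at this; omega
    · rw [hQ2, hQ2, hJJ]; simp
  have hQP : ∀ i j, hfm (Q i) (P j) = 0 := by
    intro i j
    refine Fin.addCases (fun i => ?_) (fun i => ?_) i <;> refine Fin.lastCases ?_ (fun j => ?_) j
    · rw [hQ1, hP2, hfm_comm_zero (hD i).1]
    · rw [hQ1, hP1, hfm_append, cdot_zero_left, cdot_zero_right, sub_zero]
    · rw [hQ2, hP2, hJJ0]
    · rw [hQ2, hP1, (hB j).2]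
  obtain ⟨Q', hQ'Q', hQ'P, hQ'⟩ := neg_extend (by simp) hPP hQQ hQP k le_rfl
  obtain ⟨R, hR⟩ : ∃ R : Matrix (Fin (r + 1 + (r + s + k))) (Fin (r + 1 + (r + s + k))) ℂ,
    R = Matrix.of (Fin.append P Q') := ⟨_, rfl⟩
  obtain ⟨S, hS⟩ : ∃ S, S = sigMat (r + 1) (r + s + k) := ⟨_, rfl⟩
  have hSS : S * S = 1 := by rw [hS, sigMat_sq]
  have hSc : Sᴴ = S := by rw [hS, sigMat_conj]
  have hRR : R * S * Rᴴ = S := by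
    ext i j
    rw [hR, hS, gram_entry, sigMat, Matrix.diagonal_apply]
    refine Fin.addCases (fun i => ?_) (fun i => ?_) i <;> refine Fin.addCases (fun j => ?_) (fun j => ?_) j
    · have : (i : ℕ) ≤ r := by omega
      simp [hPP, this]
    · have : Fin.castAdd (r + s + k) i ≠ Fin.natAdd (r + 1) j := by
        intro h; have := congrArg Fin.val h; simp at this; omega
      simp [hfm_comm_zero (hQ'P j i), this]
    · have : Fin.natAdd (r + 1) i ≠ Fin.castAdd (r + s + k) j := by
        intro h; have := congrArg Fin.val h; simp at this; omega
      simp [hQ'P i j, this]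
    · have : ¬ (r + 1 + (i : ℕ) ≤ r) := by omega
      simp [hQ'Q', this]
  have hRM : R * (S * Rᴴ * S) = 1 := by
    rw [← hSS]; nth_rewrite 3 [← hRR]; simp only [Matrix.mul_assoc]
  have hMR : (S * Rᴴ * S) * R = 1 := mul_eq_one_comm.1 hRM
  refine ⟨S * Rᴴ * S, ⟨⟨_, R, hMR, hRM⟩, rfl⟩, ?_, ?_⟩
  · rw [← hS]
    have e : (S * Rᴴ * S)ᴴ = S * R * S := by
      simp [Matrix.conjTranspose_mul, hSc, Matrix.mul_assoc]
    rw [e]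
    calc S * Rᴴ * S * S * (S * R * S) = S * Rᴴ * (S * S) * S * R * S := by simp only [Matrix.mul_assoc]
      _ = (S * Rᴴ * S * R) * S := by rw [hSS]; simp only [Matrix.mul_assoc, Matrix.one_mul]
      _ = S := by rw [hMR, Matrix.one_mul]
  · intro z Z c hc h1 h2
    obtain ⟨d, hd1, hd2⟩ : ∃ d : Fin (r + 1) → ℂ, (∀ i : Fin r, d i.castSucc = 1) ∧ d (Fin.last r) = c :=
      ⟨Fin.snoc (fun _ => 1) c, fun i => by simp, by simp⟩
    have hd0 : ∀ i, d i ≠ 0 := by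
      intro i
      refine Fin.lastCases ?_ (fun i => ?_) i
      · rwa [hd2]
      · rw [hd1]; exact one_ne_zero
    have hOO : Matrix.of O * (Matrix.of O)ᴴ = 1 := by
      ext i j
      rw [Matrix.one_apply, ← hO, Matrix.mul_apply]
      rfl
    have hOO' := mul_eq_one_comm.1 hOO
    have key : Phi (r + 1) (r + s + k) s (onecons z) * R =
        (Matrix.diagonal d * Matrix.of O) * chartMat (r + 1) (r + s + k) (Matrix.of Z) := by
      funext i
      rw [chart_mul_row, hR]
      have eG : ∀ i, (Matrix.diagonal d * Matrix.of O) i = d i • O i := by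
        intro i; funext j; simp [Matrix.diagonal_mul]
      refine Fin.lastCases ?_ (fun i => ?_) i
      · rw [Phi_mul_row_last, hP2]
        simp only [hQ', hQ2]
        rw [← h2, eG, hd2]
        funext j
        refine Fin.addCases (fun j => ?_) (fun j => ?_) j
        · simp
        · simp [Finset.mul_sum, mul_assoc]
      · rw [Phi_mul_row_castSucc, hP1, hQ', hQ1, eG, hd1, ← h1 i]
        funext j
        refine Fin.addCases (fun j => ?_) (fun j => ?_) j
        · simp
        · simp
    have key2 : Phi (r + 1) (r + s + k) s (onecons z) =
        (Matrix.diagonal d * Matrix.of O) * (chartMat (r + 1) (r + s + k) (Matrix.of Z) * (S * Rᴴ * S)) := by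
      rw [← Matrix.mul_assoc, ← key, Matrix.mul_assoc, hRM, Matrix.mul_one]
    rw [key2]
    refine (rowSpan_mul _ ((Matrix.of O)ᴴ * Matrix.diagonal d⁻¹) ?_ _).symm
    calc (Matrix.of O)ᴴ * Matrix.diagonal d⁻¹ * (Matrix.diagonal d * Matrix.of O)
        = (Matrix.of O)ᴴ * (Matrix.diagonal d⁻¹ * Matrix.diagonal d) * Matrix.of O := by
          simp only [Matrix.mul_assoc]
      _ = 1 := by
        rw [Matrix.diagonal_mul_diagonal]
        have : (fun i => d⁻¹ i * d i) = fun _ => 1 := by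
          funext i; simp [hd0 i]
        rw [this, Matrix.diagonal_one, Matrix.mul_one, hOO']

end part10

section part11
open Set Filter Topology Module

lemma exists_onb {r : ℕ} (α : Fin (r + 1) → ℂ) (hα : cdot α α = 1) :
    ∃ O : Fin (r + 1) → Fin (r + 1) → ℂ, (∀ i j, cdot (O i) (O j) = if i = j then 1 else 0) ∧
      O (Fin.last r) = α := by
  have hin : ∀ x y : EuclideanSpace ℂ (Fin (r + 1)), cdot (fun i => x i) (fun i => y i) = inner ℂ y x := by
    intro x y
    simp [cdot, PiLp.inner_apply]
  have hv : Orthonormal ℂ (({Fin.last r} : Set (Fin (r + 1))).domRestrict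
      (fun _ => (WithLp.toLp 2 α : EuclideanSpace ℂ (Fin (r + 1))))) := by
    rw [orthonormal_iff_ite]
    rintro ⟨i, hi⟩ ⟨j, hj⟩
    have e : i = j := (Set.mem_singleton_iff.1 hi).trans (Set.mem_singleton_iff.1 hj).symm
    subst e
    simp only [if_true, Set.domRestrict_apply]
    rw [← hin]
    exact hα
  obtain ⟨b, hb⟩ := hv.exists_orthonormalBasis_extension_of_card_eq (by simp)
  refine ⟨fun i m => b i m, fun i j => ?_, ?_⟩
  · rw [hin, orthonormal_iff_ite.1 b.orthonormal]
    simp only [eq_comm]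
  · funext m
    change (b (Fin.last r)).ofLp m = α m
    rw [hb _ rfl]

lemma cdot_comb {m n : ℕ} (β γ : Fin m → ℂ) (X Y : Fin m → Fin n → ℂ)
    (h : ∀ i j, cdot (X i) (Y j) = if i = j then 1 else 0) :
    cdot (fun l => ∑ i, β i * X i l) (fun l => ∑ i, γ i * Y i l) = cdot β γ := by
  have e : ∀ (β : Fin m → ℂ) (X : Fin m → Fin n → ℂ), (fun l => ∑ i, β i * X i l) = ∑ i, β i • X i := by
    intro β X; funext l; simp
  rw [e, e, cdot_sum_left]
  simp only [cdot_sum_right, cdot_smul_left, cdot_smul_right, h]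
  simp [cdot, mul_comm]

lemma main_core (s r k : ℕ) (hs : 2 ≤ s) (hhigh : (r + s + k) + 3 ≤ 2 * s + (r + 1))
    (U : Set (Fin s → ℂ)) (hopen : IsOpen U) (hconn : IsPreconnected U)
    (hnull : ∃ z ∈ U, cdot z z = 1)
    (F : (Fin s → ℂ) → Fin (r + 1) → Fin (r + s + k) → ℂ)
    (hF : DifferentiableOn ℂ F U)
    (horth : ∀ z ∈ U, ∀ w ∈ U, cdot z w = 1 → ∀ i j, cdot (F z i) (F w j) = if i = j then 1 else 0)
    (hnonconst : ∃ z ∈ U, ∃ w ∈ U, F z ≠ F w) :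
    ∃ M' : Matrix (Fin (r + 1 + (r + s + k))) (Fin (r + 1 + (r + s + k))) ℂ, IsUnit M' ∧
      M' * sigMat (r + 1) (r + s + k) * M'ᴴ = sigMat (r + 1) (r + s + k) ∧
      ∀ z ∈ U, rowSpan (chartMat (r + 1) (r + s + k) (Matrix.of (F z)) * M') =
          rowSpan (Phi (r + 1) (r + s + k) s (onecons z)) := by
  obtain ⟨p0, hp0U, hp0n⟩ := hnull
  obtain ⟨δ, hδ, hball⟩ := Metric.isOpen_iff.1 hopen p0 hp0U
  obtain ⟨V, hVdef⟩ : ∃ V, V = Metric.ball p0 δ := ⟨_, rfl⟩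
  rw [← hVdef] at hball
  have hV : IsOpen V := hVdef ▸ Metric.isOpen_ball
  have hVc : Convex ℝ V := hVdef ▸ convex_ball p0 δ
  have hp0 : p0 ∈ V := hVdef ▸ Metric.mem_ball_self hδ
  have hFV := hF.mono hball
  have horthV : ∀ z ∈ V, ∀ w ∈ V, cdot z w = 1 → ∀ i j, cdot (F z i) (F w j) = if i = j then 1 else 0 :=
    fun z hz w hw => horth z (hball hz) w (hball hw)
  have hFi : ∀ i l, DifferentiableOn ℂ (fun z => F z i l) U := fun i l =>
    differentiableOn_pi.1 (differentiableOn_pi.1 hF i) l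
  have hncV : ∃ z ∈ V, ∃ w ∈ V, F z ≠ F w := by
    by_contra hcon
    push Not at hcon
    have h1 : ∀ z ∈ U, F z = F p0 := by
      intro z hz
      funext i l
      have := CH.identity hopen hconn (CH.of_diff ((hFi i l).sub_const (F p0 i l))) hp0U
        (by filter_upwards [hV.mem_nhds hp0] with x hx; rw [hcon x hx p0 hp0, sub_self]) z hz
      exact sub_eq_zero.1 this
    obtain ⟨z, hz, w, hw, h⟩ := hnonconst
    exact h ((h1 z hz).trans (h1 w hw).symm)
  obtain ⟨α, hα, p, hp, hconst⟩ := stepC hs hhigh hV hVc hp0 hp0n hFV horthV hncV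
  obtain ⟨O, hO, hOα⟩ := exists_onb α hα
  obtain ⟨f, hf⟩ : ∃ f : (Fin s → ℂ) → Fin (r + s + k) → ℂ, ∀ z, f z = fun l => ∑ m, α m * F z m l :=
    ⟨_, fun z => rfl⟩
  obtain ⟨C, hC⟩ : ∃ C : Fin r → Fin (r + s + k) → ℂ, ∀ i, C i = fun l => ∑ m, O i.castSucc m * F p m l :=
    ⟨_, fun z => rfl⟩
  have hCV : ∀ z ∈ V, ∀ i, (fun l => ∑ m, O (Fin.castSucc i) m * F z m l) = C i := by
    intro z hz i
    rw [hC]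
    funext l
    refine hconst z hz _ ?_ l
    rw [← hOα, hO, if_neg (Fin.castSucc_lt_last i).ne]
  have hfU : DifferentiableOn ℂ f U := by
    have : f = fun z l => ∑ m, α m * F z m l := funext hf
    rw [this, differentiableOn_pi]
    intro l
    exact DifferentiableOn.fun_sum fun m _ => (hFi m l).const_mul _
  have hCU : ∀ z ∈ U, ∀ i, (fun l => ∑ m, O (Fin.castSucc i) m * F z m l) = C i := by
    intro z hz i
    funext l
    have hd : DifferentiableOn ℂ (fun z => ∑ m, O (Fin.castSucc i) m * F z m l - C i l) U :=
      (DifferentiableOn.fun_sum fun m _ => (hFi m l).const_mul _).sub_const _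
    have := CH.identity hopen hconn (CH.of_diff hd) hp0U
      (by filter_upwards [hV.mem_nhds hp0] with x hx; rw [← hCV x hx i, sub_self]) z hz
    exact sub_eq_zero.1 this
  have hCC : ∀ i j, cdot (C i) (C j) = if i = j then 1 else 0 := by
    intro i j
    rw [← hCV p0 hp0 i, ← hCV p0 hp0 j, cdot_comb _ _ _ _ (horthV p0 hp0 p0 hp0 hp0n), hO]
    simp
  have hfC : ∀ z ∈ V, ∀ i, cdot (f z) (C i) = 0 := by
    intro z hz i
    refine lemB hs hV hVc hp0 hp0n (h := fun q => cdot (f q.1) (C i))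
      (CH.fst (diff_cdot (hfU.mono hball) (C i))) ?_ z hz z hz
    intro z hz w hw _ hzw
    change cdot (f z) (C i) = 0
    rw [hf, ← hCV w hw i, cdot_comb _ _ _ _ (horthV z hz w hw hzw), ← hOα, hO,
      if_neg (Fin.castSucc_lt_last i).ne']
  have horthf : ∀ z ∈ V, ∀ w ∈ V, cdot z w = 1 → cdot (f z) (f w) = 1 := by
    intro z hz w hw hzw
    rw [hf, hf, cdot_comb _ _ _ _ (horthV z hz w hw hzw), hα]
  have hncf : ∃ z ∈ V, ∃ w ∈ V, f z ≠ f w := by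
    by_contra hcon
    push Not at hcon
    obtain ⟨z, hz, w, hw, h⟩ := hncV
    apply h
    have e : Matrix.of O * Matrix.of (F z) = Matrix.of O * Matrix.of (F w) := by
      ext i l
      simp only [Matrix.mul_apply, Matrix.of_apply]
      refine Fin.lastCases ?_ (fun i => ?_) i
      · have := congrFun (hcon z hz w hw) l
        rw [hf, hf] at this
        rw [hOα]; exact this
      · exact congrFun ((hCV z hz i).trans (hCV w hw i).symm) l
    have hOO : Matrix.of O * (Matrix.of O)ᴴ = 1 := by
      ext i j
      rw [Matrix.one_apply, ← hO, Matrix.mul_apply]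
      rfl
    have hOO' := mul_eq_one_comm.1 hOO
    have e2 := congrArg (fun X => (Matrix.of O)ᴴ * X) e
    simp only [← Matrix.mul_assoc, hOO', Matrix.one_mul] at e2
    exact Matrix.of.injective e2
  have hcol : ∀ w ∈ V, ∀ z ∈ V, cdot w w = 1 → cdot z w = 1 → ∀ t : ℂ, w + t • (z - w) ∈ V → ∀ k l,
      (f z k - f w k) * (f (w + t • (z - w)) l - f w l) -
      (f z l - f w l) * (f (w + t • (z - w)) k - f w k) = 0 := by
    intro w hw z hz hwn hzw t ht k l
    have hA := fun i j => stepA hhigh hV hVc hFV horthV hw hwn hz hzw t ht i j k l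
    simp only [hf, ← Finset.sum_sub_distrib, ← mul_sub]
    rw [Finset.sum_mul_sum, Finset.sum_mul_sum, ← Finset.sum_sub_distrib]
    refine Finset.sum_eq_zero fun i _ => ?_
    rw [← Finset.sum_sub_distrib]
    refine Finset.sum_eq_zero fun j _ => ?_
    linear_combination α i * α j * hA i j
  obtain ⟨W, o, H, hW, ho, hWV, hH0, hH⟩ := stepE hs hV hVc hp0 hp0n (hfU.mono hball) horthf hcol hncf
  obtain ⟨y, hy⟩ : ∃ y : (Fin s → ℂ) → Fin (r + 1 + (r + s + k)) → ℂ,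
    ∀ z, y z = (H z)⁻¹ • Fin.append α (f z) := ⟨_, fun z => rfl⟩
  have hyy : ∀ z ∈ W, ∀ w ∈ W, hfm (y z) (y w) = 1 - cdot z w := by
    intro z hz w hw
    have h1 := hH0 z hz
    have h2 : (starRingEnd ℂ) (H w) ≠ 0 := by simpa using hH0 w hw
    rw [hy, hy, hfm_smul_left, hfm_smul_right, hfm_append, hα, map_inv₀]
    have := hH z hz w hw
    field_simp
    linear_combination -this
  have hyB : ∀ z ∈ W, ∀ i : Fin r, hfm (y z) (Fin.append (O i.castSucc) 0) = 0 := by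
    intro z hz i
    rw [hy, hfm_smul_left, hfm_append, cdot_zero_right, ← hOα, hO, if_neg (Fin.castSucc_lt_last i).ne']
    simp
  have hyD : ∀ z ∈ W, ∀ i : Fin r, hfm (y z) (Fin.append 0 (C i)) = 0 := by
    intro z hz i
    rw [hy, hfm_smul_left, hfm_append, cdot_zero_right, hfC z (hWV hz)]
    simp
  obtain ⟨J0, J, hJ00, hJJ0, hJJ, hlin, hyJ⟩ := stepF hW ho hyy
    (B := fun i => Fin.append (O i.castSucc) 0)
    (fun i j => by rw [hfm_append, hO, cdot_zero_left]; simp) hyB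
  obtain ⟨M', hM1, hM2, hM3⟩ := stepG O hO C hCC J0 J hJ00 hJJ0 hJJ
    (fun i => hlin _ fun z hz => hyB z hz i) (fun i => hlin _ fun z hz => hyD z hz i)
  refine ⟨M', hM1, hM2, fun z hz => ?_⟩
  obtain ⟨ℓ, hℓ⟩ : ∃ ℓ : (Fin s → ℂ) → ℂ, ∀ z, ℓ z = cdot (fstB J0) α + ∑ k, z k * cdot (fstB (J k)) α :=
    ⟨_, fun z => rfl⟩
  have hℓd : Differentiable ℂ ℓ := by
    have : ℓ = fun z => cdot (fstB J0) α + ∑ k, z k * cdot (fstB (J k)) α := funext hℓ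
    rw [this]
    fun_prop
  have hℓW : ∀ z ∈ W, ℓ z • Fin.append α (f z) = J0 + ∑ k, z k • J k := by
    intro z hz
    have e1 := hyJ z hz
    have e2 : ℓ z = (H z)⁻¹ := by
      have h1 : ℓ z = hfm (J0 + ∑ k, z k • J k) (Fin.append α 0) := by
        have hx : ∀ x : Fin (r + 1 + (r + s + k)) → ℂ, hfm x (Fin.append α 0) = cdot (fstB x) α := by
          intro x
          simp [hfm, cdot, fstB, sndB]
        rw [hfm_add_left, hfm_sum_left, hℓ]
        simp only [hfm_smul_left]
        simp only [hx]
      rw [h1, ← e1, hy, hfm_smul_left, hfm_append, hα, cdot_zero_right]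
      simp
    rw [e2, ← e1, hy]
  have hℓU : ∀ z ∈ U, ℓ z • Fin.append α (f z) = J0 + ∑ k, z k • J k := by
    intro z hz
    funext l
    have hd1 : DifferentiableOn ℂ (fun z => (Fin.append α (f z) : Fin (r + 1 + (r + s + k)) → ℂ) l) U := by
      refine Fin.addCases (fun l => ?_) (fun l => ?_) l
      · simp only [Fin.append_left]; exact differentiableOn_const _
      · simp only [Fin.append_right]; exact differentiableOn_pi.1 hfU l
    have hd2 : Differentiable ℂ (fun z : Fin s → ℂ => J0 l + ∑ k, z k * J k l) := by fun_prop
    have := CH.identity hopen hconn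
      (CH.of_diff ((hℓd.differentiableOn.mul hd1).sub hd2.differentiableOn)) (hball (hWV ho))
      (by
        filter_upwards [hW.mem_nhds ho] with x hx
        have := congrFun (hℓW x hx) l
        simp only [Pi.smul_apply, Pi.add_apply, Finset.sum_apply, smul_eq_mul] at this
        simp [this]) z hz
    have := sub_eq_zero.1 this
    simpa using this
  have hℓ0 : ℓ z ≠ 0 := by
    intro h0
    have h1 := hℓU z hz
    rw [h0, zero_smul] at h1
    have h2 : hfm (J0 + ∑ k, z k • J k) J0 = 1 := by
      rw [hfm_add_left, hfm_sum_left, hJ00]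
      simp [hfm_smul_left, hJJ0]
    rw [← h1, hfm_zero_left] at h2
    exact zero_ne_one h2
  refine hM3 z (F z) (ℓ z) hℓ0 (hCU z hz) ?_
  rw [hOα, ← hf, hℓU z hz]

end part11

/-- Let `s ≥ 2`, `2 ≤ r' ≤ s'` with `s − 1 ≤ s' − r' < 2s − 2`, and let
`F` be a nonconstant local orthogonal map in chart form from `𝒢(1,s)` to `𝒢(r',s')`.
Then there exist a `(1,s)`-unitary `M ∈ GL(1+s,ℂ)` and an `(r',s')`-unitary
`M' ∈ GL(r'+s',ℂ)` with
`rowSpan([I_{r'} | F(z)]·M') = rowSpan(Φ((1,z)·M))` for all `z ∈ U`; i.e. after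
composing with automorphisms on both sides, `F` is the standard linear embedding. -/
theorem rigidity_linear_embedding
    (s r' s' : ℕ) (hs : 2 ≤ s) (hr' : 2 ≤ r') (hr's' : r' ≤ s')
    (hlow : (s : ℤ) - 1 ≤ (s' : ℤ) - (r' : ℤ))
    (hhigh : (s' : ℤ) - (r' : ℤ) < 2 * (s : ℤ) - 2)
    (U : Set (Fin s → ℂ)) (hopen : IsOpen U) (hconn : IsPreconnected U)
    (hnull : ∃ z ∈ U, cdot z z = 1)
    (F : (Fin s → ℂ) → Fin r' → Fin s' → ℂ)
    (hF : DifferentiableOn ℂ F U)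
    (horth : ∀ z ∈ U, ∀ w ∈ U, cdot z w = 1 →
      Matrix.of (F z) * (Matrix.of (F w))ᴴ = (1 : Matrix (Fin r') (Fin r') ℂ))
    (hnonconst : ∃ z ∈ U, ∃ w ∈ U, F z ≠ F w) :
    ∃ M : Matrix (Fin (1 + s)) (Fin (1 + s)) ℂ,
      ∃ M' : Matrix (Fin (r' + s')) (Fin (r' + s')) ℂ,
        IsUnit M ∧ IsUnit M' ∧
        M * sigMat 1 s * Mᴴ = sigMat 1 s ∧
        M' * sigMat r' s' * M'ᴴ = sigMat r' s' ∧
        ∀ z ∈ U,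
          rowSpan (chartMat r' s' (Matrix.of (F z)) * M') =
            rowSpan (Phi r' s' s (Matrix.vecMul (onecons z) M)) := by
  obtain ⟨r, rfl⟩ : ∃ r, r' = r + 1 := ⟨r' - 1, by omega⟩
  obtain ⟨k, rfl⟩ : ∃ k, s' = r + s + k := ⟨s' - (r + s), by omega⟩
  obtain ⟨M', h1, h2, h3⟩ := main_core s r k hs (by omega) U hopen hconn hnull F hF (by
    intro z hz w hw hzw i j
    have := congrFun (congrFun (horth z hz w hw hzw) i) j
    rw [Matrix.one_apply, Matrix.mul_apply] at this
    rw [← this]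
    rfl) hnonconst
  refine ⟨1, M', isUnit_one, h1, by simp, h2, fun z hz => ?_⟩
  rw [Matrix.vecMul_one]
  exact h3 z hz
end
end

section
/- Let s ≥ 2 and 2 ≤ r' ≤ s' be integers with s' − r' < s − 1. Let U ⊆ ℂ^s be a connected open set with U ∩ S(Ω_{1,s}) ≠ ∅, and let F : U → ℂ^{r'×s'} be a holomorphic map such that F(z)·F(z)ᴴ = I_{r'} for every z ∈ U ∩ S(Ω_{1,s}). Then F is constant on U. -/
open scoped BigOperators
open Matrix

noncomputable section

section helpers
open Filter Topology Metric Set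
open scoped InnerProductSpace

variable {E G : Type*} [NormedAddCommGroup E] [InnerProductSpace ℂ E]
  [NormedAddCommGroup G] [InnerProductSpace ℂ G]

lemma aux_exists_re_nonneg (k : ℂ → ℂ) (ε : ℝ) (hε : 0 < ε)
    (hk : DifferentiableOn ℂ k (closedBall 0 ε)) (h0 : k 0 = 0) :
    ∃ ζ : ℂ, ‖ζ‖ = ε ∧ 0 ≤ (k ζ).re := by
  have hd : DiffContOnCl ℂ (fun z => Complex.exp (k z)) (ball 0 ε) := by
    have := hk.cexp
    rw [← closure_ball _ hε.ne'] at this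
    exact this.diffContOnCl
  obtain ⟨z, hz, hm⟩ := Complex.exists_mem_frontier_isMaxOn_norm isBounded_ball
    ⟨0, mem_ball_self hε⟩ hd
  rw [frontier_ball _ hε.ne'] at hz
  refine ⟨z, by simpa using hz, ?_⟩
  have := hm (subset_closure (mem_ball_self hε))
  simp only [mem_ofPred_eq, Function.comp, h0, Complex.norm_exp] at this
  simpa using this

/-- identity theorem along a real curve -/
lemma aux_identity [CompleteSpace G] (g : ℂ → G) (V : Set ℂ) (hV : IsOpen V) (hc : IsPreconnected V)
    (hg : DifferentiableOn ℂ g V) (γ : ℝ → ℂ) (γ' : ℂ) (t₀ : ℝ) (hγ : HasDerivAt γ γ' t₀)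
    (hne : γ' ≠ 0) (hmem : γ t₀ ∈ V) (c : G) (hz : ∀ᶠ t in 𝓝 t₀, g (γ t) = c) :
    ∀ z ∈ V, g z = c := by
  have h1 : Tendsto γ (𝓝[≠] t₀) (𝓝[≠] (γ t₀)) := hγ.tendsto_nhdsNE hne
  have h2 : ∃ᶠ z in 𝓝[≠] (γ t₀), g z = (fun _ => c) z := 
    h1.frequently (hz.filter_mono nhdsWithin_le_nhds).frequently
  exact (hg.analyticOnNhd hV).eqOn_of_preconnected_of_frequently_eq
    analyticOnNhd_const hc hmem h2

lemma aux_sphere_curve {p v : E} (hp : ‖p‖ = 1) (hv : ‖v‖ = 1) (hpv : ⟪p, v⟫_ℂ = 0)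
    (a b : ℂ) (h : ‖a‖ ^ 2 + ‖b‖ ^ 2 = 1) : ‖a • p + b • v‖ = 1 := by
  have h1 : ‖a • p + b • v‖ * ‖a • p + b • v‖ = 1 := by
    rw [norm_add_sq_eq_norm_sq_add_norm_sq_of_inner_eq_zero (𝕜 := ℂ)]
    · rw [norm_smul, norm_smul, hp, hv]; linarith
    · simp [inner_smul_left, inner_smul_right, hpv]
  nlinarith [norm_nonneg (a • p + b • v)]

lemma aux_geod_deriv (p v : E) (t : ℝ) :
    HasDerivAt (fun t : ℝ => ((Real.cos t : ℝ) : ℂ) • p + ((Real.sin t : ℝ) : ℂ) • v)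
      ((-(Real.sin t : ℂ)) • p + ((Real.cos t : ℝ) : ℂ) • v) t := by
  have h1 := ((Real.hasDerivAt_cos t).ofReal_comp).smul_const p
  have h2 := ((Real.hasDerivAt_sin t).ofReal_comp).smul_const v
  have h3 := h1.add h2
  simp only [Complex.ofReal_neg] at h3
  exact h3

lemma aux_geod_norm {p v : E} (hp : ‖p‖ = 1) (hv : ‖v‖ = 1) (hpv : ⟪p, v⟫_ℂ = 0) (t : ℝ) :
    ‖((Real.cos t : ℝ) : ℂ) • p + ((Real.sin t : ℝ) : ℂ) • v‖ = 1 := by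
  apply aux_sphere_curve hp hv hpv
  rw [Complex.norm_real, Complex.norm_real]
  simp

variable {ι : Type*} 

/-- first order orthogonality -/
lemma aux_first {U : Set E} (hU : IsOpen U) (f g : E → G) 
    (hf : DifferentiableOn ℂ f U) (hg : DifferentiableOn ℂ g U) (c : ℂ)
    (h : ∀ z ∈ U, ‖z‖ = 1 → ⟪g z, f z⟫_ℂ = c) {p v : E} (hpU : p ∈ U)
    (hp : ‖p‖ = 1) (hv : ‖v‖ = 1) (hpv : ⟪p, v⟫_ℂ = 0) :
    ⟪g p, fderiv ℂ f p v⟫_ℂ = 0 := by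
  have key : ∀ w : E, ‖w‖ = 1 → ⟪p, w⟫_ℂ = 0 →
      ⟪g p, fderiv ℂ f p w⟫_ℂ + ⟪fderiv ℂ g p w, f p⟫_ℂ = 0 := by
    intro w hw hpw
    have hc := aux_geod_deriv p w 0
    set γ : ℝ → E := fun t : ℝ => ((Real.cos t : ℝ) : ℂ) • p + ((Real.sin t : ℝ) : ℂ) • w with hγ
    have hγ0 : γ 0 = p := by simp [hγ]
    have hc' : HasDerivAt γ w 0 := by simpa using hc
    have hfd : HasFDerivAt f (fderiv ℂ f p) (γ 0) := by
      rw [hγ0]; exact (hf.differentiableAt (hU.mem_nhds hpU)).hasFDerivAt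
    have hgd : HasFDerivAt g (fderiv ℂ g p) (γ 0) := by
      rw [hγ0]; exact (hg.differentiableAt (hU.mem_nhds hpU)).hasFDerivAt
    have h1 : HasDerivAt (fun t => f (γ t)) (fderiv ℂ f p w) 0 :=
      (hfd.restrictScalars ℝ).comp_hasDerivAt 0 hc'
    have h2 : HasDerivAt (fun t => g (γ t)) (fderiv ℂ g p w) 0 :=
      (hgd.restrictScalars ℝ).comp_hasDerivAt 0 hc'
    have h3 := h2.inner ℂ h1
    have h4 : (fun t => ⟪g (γ t), f (γ t)⟫_ℂ) =ᶠ[𝓝 0] fun _ => c := by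
      have : ∀ᶠ t in 𝓝 0, γ t ∈ U := hc'.continuousAt.eventually_mem (by rw [hγ0]; exact hU.mem_nhds hpU)
      filter_upwards [this] with t ht
      exact h _ ht (aux_geod_norm hp hw hpw t)
    have h5 := h3.unique ((hasDerivAt_const (0:ℝ) c).congr_of_eventuallyEq h4)
    rwa [hγ0] at h5
  have k1 := key v hv hpv
  have k2 := key (Complex.I • v) (by simp [norm_smul, hv]) (by simp [inner_smul_right, hpv])
  simp only [map_smul, inner_smul_left, inner_smul_right, Complex.conj_I] at k2
  linear_combination (1/2 : ℂ) * k1 - (1/2 : ℂ) * Complex.I * k2 + (1/2:ℂ) * (⟪g p, fderiv ℂ f p v⟫_ℂ - ⟪fderiv ℂ g p v, f p⟫_ℂ) * Complex.I_sq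

/-- comparison of derivatives in tangential directions. -/
lemma aux_second {U : Set E} (hU : IsOpen U) (f : E → G) 
    (hf : DifferentiableOn ℂ f U)
    (h : ∀ z ∈ U, ‖z‖ = 1 → ‖f z‖ = 1) {p v v₀ : E} (hpU : p ∈ U)
    (hp : ‖p‖ = 1) (hv : ‖v‖ = 1) (hpv : ⟪p, v⟫_ℂ = 0) (hv₀ : ‖v₀‖ = 1) (hpv₀ : ⟪p, v₀⟫_ℂ = 0)
    (h0 : fderiv ℂ f p v₀ = 0) : fderiv ℂ f p v = 0 := by
  rw [← norm_le_zero_iff]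
  apply le_of_forall_pos_le_add
  intro η hη
  have hfd : HasFDerivAt f (fderiv ℂ f p) p := (hf.differentiableAt (hU.mem_nhds hpU)).hasFDerivAt
  have hlo := hfd.isLittleO.def (show 0 < η / 8 by positivity)
  obtain ⟨δ, hδ, hb⟩ := Metric.eventually_nhds_iff_ball.1 (hlo.and (hU.mem_nhds hpU))
  obtain ⟨ε, hε, hε1, hεδ⟩ : ∃ ε : ℝ, 0 < ε ∧ ε < 1 ∧ 2 * ε < δ := 
    ⟨min (1/2) (δ/4), by positivity, by linarith [min_le_left (1/2) (δ/4)], by linarith [min_le_right (1/2) (δ/4)]⟩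
  set a : ℝ := √(1 - ε ^ 2) with ha
  have ha2 : a ^ 2 = 1 - ε ^ 2 := Real.sq_sqrt (by nlinarith)
  have ha0 : 0 ≤ a := Real.sqrt_nonneg _
  have ha1 : a ≤ 1 := by nlinarith
  have haε : 1 - a ≤ ε := by nlinarith
  have hnear : ∀ w : E, ‖w‖ = 1 → ∀ ζ : ℂ, ‖ζ‖ ≤ ε → ‖((a : ℂ) • p + ζ • w) - p‖ ≤ 2 * ε := by
    intro w hw ζ hζ
    have : ((a : ℂ) • p + ζ • w) - p = ((a - 1 : ℝ) : ℂ) • p + ζ • w := by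
      push_cast; rw [sub_smul, one_smul]; abel
    rw [this]
    refine (norm_add_le _ _).trans ?_
    rw [norm_smul, norm_smul, hp, hw, Complex.norm_real, Real.norm_eq_abs, abs_of_nonpos (by linarith)]
    linarith
  have hball : ∀ w : E, ‖w‖ = 1 → ∀ ζ : ℂ, ‖ζ‖ ≤ ε → ((a : ℂ) • p + ζ • w) ∈ ball p δ := by
    intro w hw ζ hζ
    rw [mem_ball_iff_norm]; linarith [hnear w hw ζ hζ]
  have hap : ‖((a : ℂ) • p) - p‖ ≤ 2 * ε := by simpa using hnear v hv 0 (by simp [hε.le])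
  have hapb : ((a : ℂ) • p) ∈ ball p δ := by simpa using hball v hv 0 (by simp [hε.le])
  -- linear approximation
  have happ : ∀ w : E, ‖w‖ = 1 → ∀ ζ : ℂ, ‖ζ‖ = ε →
      ‖f ((a : ℂ) • p + ζ • w) - f ((a : ℂ) • p) - ζ • fderiv ℂ f p w‖ ≤ η / 2 * ε := by
    intro w hw ζ hζ
    have e1 := (hb _ (hball w hw ζ hζ.le)).1
    have e2 := (hb _ hapb).1
    have : f ((a : ℂ) • p + ζ • w) - f ((a : ℂ) • p) - ζ • fderiv ℂ f p w = 
      (f ((a : ℂ) • p + ζ • w) - f p - fderiv ℂ f p ((a : ℂ) • p + ζ • w - p)) - 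
      (f ((a : ℂ) • p) - f p - fderiv ℂ f p ((a : ℂ) • p - p)) := by
      simp only [map_sub, map_add, map_smul]; abel
    rw [this]
    refine (norm_sub_le _ _).trans ?_
    have n1 := hnear w hw ζ hζ.le
    nlinarith
  -- the holomorphic comparison
  have hk : ∀ w : E, ‖w‖ = 1 → DifferentiableOn ℂ
      (fun ζ : ℂ => ⟪f ((a : ℂ) • p), f ((a : ℂ) • p + ζ • w) - f ((a : ℂ) • p)⟫_ℂ) (closedBall 0 ε) := by
    intro w hw
    have : DifferentiableOn ℂ (fun ζ : ℂ => f ((a : ℂ) • p + ζ • w) - f ((a : ℂ) • p)) (closedBall 0 ε) := by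
      refine DifferentiableOn.sub_const (𝕜 := ℂ) (f := fun ζ : ℂ => f ((a : ℂ) • p + ζ • w)) ?_ _
      refine hf.comp (by fun_prop) ?_
      intro ζ hζ
      exact (hb _ (hball w hw ζ (by simpa using hζ))).2
    exact (innerSL ℂ (f ((a : ℂ) • p)) : G →L[ℂ] ℂ).differentiable.comp_differentiableOn this
  have hid : ∀ w : E, ‖w‖ = 1 → ⟪p, w⟫_ℂ = 0 → ∀ ζ : ℂ, ‖ζ‖ = ε →
      2 * (⟪f ((a : ℂ) • p), f ((a : ℂ) • p + ζ • w) - f ((a : ℂ) • p)⟫_ℂ).re = 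
        1 - ‖f ((a : ℂ) • p)‖ ^ 2 - ‖f ((a : ℂ) • p + ζ • w) - f ((a : ℂ) • p)‖ ^ 2 := by
    intro w hw hpw ζ hζ
    have hn : ‖f ((a : ℂ) • p + ζ • w)‖ = 1 := by
      apply h _ (hb _ (hball w hw ζ hζ.le)).2
      apply aux_sphere_curve hp hw hpw
      rw [hζ, Complex.norm_real, Real.norm_eq_abs, sq_abs]; linarith
    have := norm_add_sq (𝕜 := ℂ) (f ((a : ℂ) • p)) (f ((a : ℂ) • p + ζ • w) - f ((a : ℂ) • p))
    rw [add_sub_cancel, hn] at this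
    simp only [RCLike.re_to_complex] at this
    linarith
  obtain ⟨ζ₁, hζ₁, hr₁⟩ := aux_exists_re_nonneg _ ε hε (hk v hv) (by simp)
  obtain ⟨ζ₂, hζ₂, hr₂⟩ := aux_exists_re_nonneg _ ε hε (hk v₀ hv₀).neg (by simp)
  have i1 := hid v hv hpv ζ₁ hζ₁
  have i2 := hid v₀ hv₀ hpv₀ ζ₂ hζ₂
  simp only [Pi.neg_apply, Complex.neg_re] at hr₂
  have hle : ‖f ((a : ℂ) • p + ζ₁ • v) - f ((a : ℂ) • p)‖ ≤ ‖f ((a : ℂ) • p + ζ₂ • v₀) - f ((a : ℂ) • p)‖ := by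
    apply (sq_le_sq₀ (norm_nonneg _) (norm_nonneg _)).1
    linarith
  have a1 := happ v hv ζ₁ hζ₁
  have a2 := happ v₀ hv₀ ζ₂ hζ₂
  rw [h0, smul_zero, sub_zero] at a2
  have a3 : ‖ζ₁ • fderiv ℂ f p v‖ ≤ η * ε := by
    have := norm_sub_le (f ((a : ℂ) • p + ζ₁ • v) - f ((a : ℂ) • p)) 
      (f ((a : ℂ) • p + ζ₁ • v) - f ((a : ℂ) • p) - ζ₁ • fderiv ℂ f p v)
    rw [sub_sub_cancel] at this
    linarith
  rw [norm_smul, hζ₁, mul_comm] at a3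
  rw [zero_add]
  exact le_of_mul_le_mul_right a3 hε

lemma aux_local [CompleteSpace G] {U : Set E} (hU : IsOpen U) (f : E → G)
    (hf : DifferentiableOn ℂ f U)
    (h : ∀ z ∈ U, ‖z‖ = 1 → ∀ v, ‖v‖ = 1 → ⟪z, v⟫_ℂ = 0 → fderiv ℂ f z v = 0)
    {p : E} (hpU : p ∈ U) (hp : ‖p‖ = 1) {v₀ : E} (hv₀ : ‖v₀‖ = 1) (hpv₀ : ⟪p, v₀⟫_ℂ = 0) :
    ∀ᶠ z in 𝓝 p, f z = f p := by
  obtain ⟨R, hR, hRU⟩ := Metric.isOpen_iff.1 hU p hpU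
  obtain ⟨δ, hδ, hδR⟩ : ∃ δ : ℝ, 0 < δ ∧ 2 * δ ≤ R := ⟨R / 2, by positivity, by linarith⟩
  have hin : ∀ v : E, ‖v‖ = 1 → ∀ α ∈ ball (1 : ℂ) δ, ∀ ζ ∈ ball (0 : ℂ) δ, α • p + ζ • v ∈ U := by
    intro v hv α hα ζ hζ
    apply hRU
    rw [mem_ball_iff_norm] at hα hζ ⊢
    have : α • p + ζ • v - p = (α - 1) • p + ζ • v := by rw [sub_smul, one_smul]; abel
    rw [this]
    refine (norm_add_le _ _).trans_lt ?_
    rw [norm_smul, norm_smul, hp, hv]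
    rw [sub_zero] at hζ
    linarith
  have hev : ∀ᶠ t : ℝ in 𝓝 0, ((Real.cos t : ℝ) : ℂ) ∈ ball (1 : ℂ) δ ∧
      ((Real.sin t : ℝ) : ℂ) ∈ ball (0 : ℂ) δ := by
    apply Filter.Eventually.and
    · have : ContinuousAt (fun t : ℝ => ((Real.cos t : ℝ) : ℂ)) 0 := by fun_prop
      exact this.eventually_mem (by simpa using ball_mem_nhds _ hδ)
    · have : ContinuousAt (fun t : ℝ => ((Real.sin t : ℝ) : ℂ)) 0 := by fun_prop
      exact this.eventually_mem (by simpa using ball_mem_nhds _ hδ)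
  obtain ⟨t₁, ht₁, htb⟩ := Metric.eventually_nhds_iff_ball.1 hev
  have hgeo : ∀ v : E, ‖v‖ = 1 → ⟪p, v⟫_ℂ = 0 → ∀ t ∈ ball (0 : ℝ) t₁,
      f (((Real.cos t : ℝ) : ℂ) • p + ((Real.sin t : ℝ) : ℂ) • v) = f p := by
    intro v hv hpv t ht
    have hder : ∀ t ∈ ball (0 : ℝ) t₁, HasDerivAt
        (fun t : ℝ => f (((Real.cos t : ℝ) : ℂ) • p + ((Real.sin t : ℝ) : ℂ) • v)) 0 t := by
      intro t ht
      have hm := hin v hv _ (htb t ht).1 _ (htb t ht).2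
      have hd := ((hf.differentiableAt (hU.mem_nhds hm)).hasFDerivAt.restrictScalars
        ℝ).comp_hasDerivAt t (aux_geod_deriv p v t)
      have hz : fderiv ℂ f (((Real.cos t : ℝ) : ℂ) • p + ((Real.sin t : ℝ) : ℂ) • v)
          ((-(Real.sin t : ℂ)) • p + ((Real.cos t : ℝ) : ℂ) • v) = 0 := by
        apply h _ hm (aux_geod_norm hp hv hpv t)
        · apply aux_sphere_curve hp hv hpv
          rw [norm_neg, Complex.norm_real, Complex.norm_real]
          simp
        · have hvp : ⟪v, p⟫_ℂ = 0 := inner_eq_zero_symm.1 hpv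
          simp only [inner_add_left, inner_add_right, inner_smul_left, inner_smul_right, hpv, hvp,
            inner_self_eq_norm_sq_to_K, hp, hv, Complex.conj_ofReal]
          simp
          ring
      have hd2 : HasDerivAt
        (fun t : ℝ => f (((Real.cos t : ℝ) : ℂ) • p + ((Real.sin t : ℝ) : ℂ) • v))
        (fderiv ℂ f (((Real.cos t : ℝ) : ℂ) • p + ((Real.sin t : ℝ) : ℂ) • v)
          ((-(Real.sin t : ℂ)) • p + ((Real.cos t : ℝ) : ℂ) • v)) t := hd
      rwa [hz] at hd2
    have := isOpen_ball.is_const_of_deriv_eq_zero (convex_ball (0 : ℝ) t₁).isPreconnected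
      (fun t ht => (hder t ht).differentiableAt.differentiableWithinAt)
      (fun t ht => (hder t ht).deriv) ht (mem_ball_self ht₁)
    simpa using this
  -- extend in ζ
  have hζ : ∀ v : E, ‖v‖ = 1 → ⟪p, v⟫_ℂ = 0 → ∀ t : ℝ, t ∈ ball (0 : ℝ) t₁ → Real.sin t ≠ 0 →
      ∀ ζ ∈ ball (0 : ℂ) δ, f (((Real.cos t : ℝ) : ℂ) • p + ζ • v) = f p := by
    intro v hv hpv t ht hst
    have hγ : HasDerivAt (fun θ : ℝ => ((Real.sin t : ℝ) : ℂ) * Complex.exp (θ * Complex.I))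
        (((Real.sin t : ℝ) : ℂ) * Complex.I) 0 := by
      have h1 : HasDerivAt (fun θ : ℂ => Complex.exp (θ * Complex.I)) Complex.I ((0 : ℝ) : ℂ) := by
        simpa using ((hasDerivAt_id ((0 : ℝ) : ℂ)).mul_const Complex.I).cexp
      exact h1.comp_ofReal.const_mul _
    apply aux_identity (fun ζ => f (((Real.cos t : ℝ) : ℂ) • p + ζ • v)) (ball 0 δ) isOpen_ball
      (convex_ball _ _).isPreconnected _ _ _ _ hγ
    · exact mul_ne_zero (by exact_mod_cast hst) Complex.I_ne_zero
    · simpa using (htb t ht).2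
    · refine Filter.Eventually.of_forall fun θ => ?_
      have := hgeo (Complex.exp (θ * Complex.I) • v)
        (by rw [norm_smul, Complex.norm_exp_ofReal_mul_I, hv, one_mul])
        (by rw [inner_smul_right, hpv, mul_zero]) t ht
      simpa [smul_smul] using this
    · refine hf.comp (by fun_prop) ?_
      intro ζ hζ
      exact hin v hv _ (htb t ht).1 _ hζ
  have hα : ∀ v : E, ‖v‖ = 1 → ⟪p, v⟫_ℂ = 0 → ∀ ζ ∈ ball (0 : ℂ) δ, ∀ α ∈ ball (1 : ℂ) δ,
      f (α • p + ζ • v) = f p := by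
    intro v hv hpv ζ hζm
    obtain ⟨t₀, ht0, ht01, ht0pi⟩ : ∃ t₀ : ℝ, 0 < t₀ ∧ t₀ < t₁ ∧ t₀ < 1 :=
      ⟨min (t₁ / 2) (1 / 2), by positivity, by linarith [min_le_left (t₁ / 2) (1 / 2)],
        by linarith [min_le_right (t₁ / 2) (1 / 2)]⟩
    have hpi := Real.pi_gt_three
    have hs0 : Real.sin t₀ ≠ 0 := (Real.sin_pos_of_pos_of_lt_pi ht0 (by linarith)).ne'
    have htm : t₀ ∈ ball (0 : ℝ) t₁ := by simp [abs_of_pos ht0, ht01]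
    apply aux_identity (fun α => f (α • p + ζ • v)) (ball 1 δ) isOpen_ball
      (convex_ball _ _).isPreconnected _ _ _ t₀ ((Real.hasDerivAt_cos t₀).ofReal_comp)
    · exact_mod_cast neg_ne_zero.2 hs0
    · exact (htb t₀ htm).1
    · have e1 : ∀ᶠ t in 𝓝 t₀, t ∈ ball (0 : ℝ) t₁ := isOpen_ball.mem_nhds htm
      have e2 : ∀ᶠ t in 𝓝 t₀, Real.sin t ≠ 0 := Real.continuous_sin.continuousAt.eventually_ne hs0
      filter_upwards [e1, e2] with t h1 h2
      exact hζ v hv hpv t h1 h2 ζ hζm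
    · refine hf.comp (by fun_prop) ?_
      intro α hα
      exact hin v hv _ hα _ hζm
  have hpp : ⟪p, p⟫_ℂ = 1 := by simp [inner_self_eq_norm_sq_to_K, hp]
  have c1 : ContinuousAt (fun z : E => ⟪p, z⟫_ℂ) p := by fun_prop
  have c2 : ContinuousAt (fun z : E => ‖z - ⟪p, z⟫_ℂ • p‖) p := by fun_prop
  have e1 : ∀ᶠ z in 𝓝 p, ⟪p, z⟫_ℂ ∈ ball (1 : ℂ) δ :=
    c1.eventually_mem (by rw [hpp]; exact ball_mem_nhds _ hδ)
  have e2 : ∀ᶠ z in 𝓝 p, ‖z - ⟪p, z⟫_ℂ • p‖ < δ :=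
    c2.eventually_lt continuousAt_const (by rw [hpp, one_smul, sub_self, norm_zero]; exact hδ)
  filter_upwards [e1, e2] with z h1 h2
  by_cases hw : z - ⟪p, z⟫_ℂ • p = 0
  · have := hα v₀ hv₀ hpv₀ 0 (mem_ball_self hδ) _ h1
    rw [zero_smul, add_zero, ← sub_eq_zero.1 hw] at this
    exact this
  · have hn : ‖z - ⟪p, z⟫_ℂ • p‖ ≠ 0 := norm_ne_zero_iff.2 hw
    have := hα (((‖z - ⟪p, z⟫_ℂ • p‖⁻¹ : ℝ) : ℂ) • (z - ⟪p, z⟫_ℂ • p))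
      (by rw [norm_smul, Complex.norm_real, norm_inv, norm_norm, inv_mul_cancel₀ hn])
      (by rw [inner_smul_right, inner_sub_right, inner_smul_right, hpp]; simp)
      ((‖z - ⟪p, z⟫_ℂ • p‖ : ℝ) : ℂ) (by simpa using h2) _ h1
    rw [smul_smul, ← Complex.ofReal_mul, mul_inv_cancel₀ hn, Complex.ofReal_one, one_smul,
      add_sub_cancel] at this
    exact this

lemma aux_global [CompleteSpace G] {U : Set E} (hU : IsOpen U) (hc : IsPreconnected U) (f : E → G)
    (hf : DifferentiableOn ℂ f U) (c : G) {p : E} (hpU : p ∈ U) (hp : ∀ᶠ z in 𝓝 p, f z = c) :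
    ∀ z ∈ U, f z = c := by
  have hS : IsOpen {z | ∀ᶠ x in 𝓝 z, f x = c} := isOpen_setOfPred_eventually_nhds
  have : U ⊆ {z | ∀ᶠ x in 𝓝 z, f x = c} := by
    apply hc.subset_of_closure_inter_subset hS ⟨p, hpU, hp⟩
    rintro z ⟨hz, hzU⟩
    obtain ⟨R, hR, hRU⟩ := Metric.isOpen_iff.1 hU z hzU
    obtain ⟨w, hw, hwb⟩ := Metric.mem_closure_iff.1 hz R hR
    have hwb' : w ∈ ball z R := by rwa [mem_ball, dist_comm]
    refine Filter.eventually_of_mem (ball_mem_nhds z hR) ?_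
    intro x hx
    have hV : IsOpen {ζ : ℂ | w + ζ • (x - w) ∈ ball z R} :=
      isOpen_ball.preimage (by fun_prop)
    have hVc : Convex ℝ {ζ : ℂ | w + ζ • (x - w) ∈ ball z R} := by
      intro ζ hζ ξ hξ a b ha hb hab
      have := convex_ball z R hζ hξ ha hb hab
      show w + (a • ζ + b • ξ) • (x - w) ∈ ball z R
      convert this using 1
      have hw1 : w = a • w + b • w := by rw [← add_smul, hab, one_smul]
      rw [smul_add, smul_add, add_smul, smul_assoc, smul_assoc]
      nth_rewrite 1 [hw1]
      abel
    have hγ : HasDerivAt (fun t : ℝ => (t : ℂ)) 1 0 := by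
      simpa using (hasDerivAt_id (0 : ℝ)).ofReal_comp
    have key := aux_identity (fun ζ : ℂ => f (w + ζ • (x - w))) _ hV hVc.isPreconnected
      (hf.comp (by fun_prop) (fun ζ hζ => hRU hζ)) _ _ 0 hγ one_ne_zero
      (by show w + ((0 : ℝ) : ℂ) • (x - w) ∈ ball z R; simpa using hwb') c (by
        have hcont : ContinuousAt (fun t : ℝ => w + (t : ℂ) • (x - w)) 0 := by fun_prop
        have : ∀ᶠ y in 𝓝 (w + ((0 : ℝ) : ℂ) • (x - w)), f y = c := by simpa using hw
        exact hcont.eventually this) 1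
      (by show w + (1 : ℂ) • (x - w) ∈ ball z R; simpa using hx)
    simpa using key
  intro z hz
  exact (this hz).self_of_nhds

lemma aux_main [FiniteDimensional ℂ E] [FiniteDimensional ℂ G] {ι : Type*} [Fintype ι]
    (hdim : Module.finrank ℂ G + 1 < Module.finrank ℂ E + Fintype.card ι)
    {U : Set E} (hU : IsOpen U) (hc : IsPreconnected U) (f : ι → E → G)
    (hf : ∀ i, DifferentiableOn ℂ (f i) U)
    (h : ∀ z ∈ U, ‖z‖ = 1 → Orthonormal ℂ (fun i => f i z))
    {p : E} (hpU : p ∈ U) (hp : ‖p‖ = 1) (i : ι) : ∀ z ∈ U, f i z = f i p := by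
  have hker : ∀ q ∈ U, ‖q‖ = 1 → ∃ v, ‖v‖ = 1 ∧ ⟪q, v⟫_ℂ = 0 ∧ fderiv ℂ (f i) q v = 0 := by
    intro q hqU hq
    have horth : ∀ v ∈ (ℂ ∙ q)ᗮ, ∀ j, ⟪f j q, fderiv ℂ (f i) q v⟫_ℂ = 0 := by
      intro v hv j
      rw [Submodule.mem_orthogonal_singleton_iff_inner_right] at hv
      by_cases hv0 : v = 0
      · simp [hv0]
      have hn : ‖v‖ ≠ 0 := norm_ne_zero_iff.2 hv0
      classical
      have := aux_first hU (f i) (f j) (hf i) (hf j) (if j = i then 1 else 0)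
        (fun z hz hz1 => (orthonormal_iff_ite.1 (h z hz hz1)) j i) hqU hq
        (v := ((‖v‖⁻¹ : ℝ) : ℂ) • v)
        (by rw [norm_smul, Complex.norm_real, norm_inv, norm_norm, inv_mul_cancel₀ hn])
        (by rw [inner_smul_right, hv, mul_zero])
      rw [map_smul, inner_smul_right, mul_eq_zero] at this
      rcases this with h' | h'
      · exact absurd h' (by exact_mod_cast inv_ne_zero hn)
      · exact h'
    let W : Submodule ℂ G := (Submodule.span ℂ (Set.range fun j => f j q))ᗮ
    let L : (ℂ ∙ q)ᗮ →ₗ[ℂ] W :=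
      ((fderiv ℂ (f i) q : E →ₗ[ℂ] G).comp (Submodule.subtype _)).codRestrict W (by
        intro v
        rw [Submodule.mem_orthogonal]
        intro u hu
        induction hu using Submodule.span_induction with
        | mem x hx => obtain ⟨j, rfl⟩ := hx; exact horth v v.2 j
        | zero => simp
        | add x y _ _ hx hy => rw [inner_add_left, hx, hy, add_zero]
        | smul a x _ hx => rw [inner_smul_left, hx, mul_zero])
    have d1 : Module.finrank ℂ (Submodule.span ℂ (Set.range fun j => f j q)) = Fintype.card ι :=
      finrank_span_eq_card (h q hqU hq).linearIndependent
    have d2 := (Submodule.span ℂ (Set.range fun j => f j q)).finrank_add_finrank_orthogonal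
    have hq0 : q ≠ 0 := by rintro rfl; simp at hq
    have d3 := (ℂ ∙ q).finrank_add_finrank_orthogonal
    rw [finrank_span_singleton hq0] at d3
    have hlt : Module.finrank ℂ W < Module.finrank ℂ (ℂ ∙ q)ᗮ := by
      show Module.finrank ℂ (Submodule.span ℂ (Set.range fun j => f j q))ᗮ < _
      omega
    obtain ⟨v, hvm, hv0⟩ := Submodule.exists_mem_ne_zero_of_ne_bot (L.ker_ne_bot_of_finrank_lt hlt)
    have hLv : fderiv ℂ (f i) q (v : E) = 0 := by
      have := congrArg Subtype.val (LinearMap.mem_ker.1 hvm)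
      exact this
    have hn : ‖(v : E)‖ ≠ 0 := by simpa using hv0
    have hvo := (Submodule.mem_orthogonal_singleton_iff_inner_right).1 v.2
    exact ⟨((‖(v : E)‖⁻¹ : ℝ) : ℂ) • (v : E),
      by rw [norm_smul, Complex.norm_real, norm_inv, norm_norm, inv_mul_cancel₀ hn],
      by rw [inner_smul_right, hvo, mul_zero], by rw [map_smul, hLv, smul_zero]⟩
  have : CompleteSpace G := FiniteDimensional.complete ℂ G
  obtain ⟨v₀, h1, h2, -⟩ := hker p hpU hp
  refine aux_global hU hc (f i) (hf i) (f i p) hpU (aux_local hU (f i) (hf i) ?_ hpU hp h1 h2)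
  intro z hz hz1 v hv hzv
  obtain ⟨v₁, k1, k2, k3⟩ := hker z hz hz1
  exact aux_second hU (f i) (hf i) (fun z hz hz1 => (h z hz hz1).1 i) hz hz1 hv hzv k1 k2 k3

lemma aux_cdot {n : ℕ} (z w : Fin n → ℂ) :
    cdot z w = ⟪(WithLp.toLp 2 w : EuclideanSpace ℂ (Fin n)), WithLp.toLp 2 z⟫_ℂ := by
  rw [EuclideanSpace.inner_toLp_toLp]
  rfl

end helpers

/-- Let `s ≥ 2` and `2 ≤ r' ≤ s'` with `s' − r' < s − 1`.  Let `U ⊆ ℂ^s`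
be open, connected, meeting the unit sphere `S(Ω_{1,s})`, and let `F : U → ℂ^{r'×s'}` be
holomorphic with `F(z)·F(z)ᴴ = I_{r'}` for every `z ∈ U ∩ S(Ω_{1,s})`.  Then `F` is
constant on `U`. -/
theorem constancy_small_codim_shilov
    (s r' s' : ℕ) (hs : 2 ≤ s) (hr' : 2 ≤ r') (hr's' : r' ≤ s')
    (hcodim : (s' : ℤ) - (r' : ℤ) < (s : ℤ) - 1)
    (U : Set (Fin s → ℂ)) (hopen : IsOpen U) (hconn : IsPreconnected U)
    (hmeets : ∃ z ∈ U, cdot z z = 1)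
    (F : (Fin s → ℂ) → Fin r' → Fin s' → ℂ)
    (hF : DifferentiableOn ℂ F U)
    (hshilov : ∀ z ∈ U, cdot z z = 1 →
      Matrix.of (F z) * (Matrix.of (F z))ᴴ = (1 : Matrix (Fin r') (Fin r') ℂ)) :
    ∀ z ∈ U, ∀ w ∈ U, F z = F w := by
  have hu : ∀ x : EuclideanSpace ℂ (Fin s), ‖x‖ = 1 ↔ cdot x.ofLp x.ofLp = 1 := by
    intro x
    rw [aux_cdot, WithLp.toLp_ofLp, inner_self_eq_norm_sq_to_K]
    change ‖x‖ = 1 ↔ ((‖x‖ : ℝ) : ℂ) ^ 2 = 1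
    norm_cast
    exact (pow_eq_one_iff_of_nonneg (norm_nonneg x) two_ne_zero).symm
  let e := EuclideanSpace.equiv (Fin s) ℂ
  have hUo : IsOpen (e ⁻¹' U) := hopen.preimage e.continuous
  have hUc : IsPreconnected (e ⁻¹' U) := by
    have := hconn.image e.symm e.symm.continuous.continuousOn
    rwa [ContinuousLinearEquiv.image_symm_eq_preimage] at this
  let e' := EuclideanSpace.equiv (Fin s') ℂ
  obtain ⟨p, hpU, hp⟩ := hmeets
  have key := fun i => aux_main (E := EuclideanSpace ℂ (Fin s)) (G := EuclideanSpace ℂ (Fin s'))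
    (ι := Fin r') (by simp; omega) hUo hUc (fun i x => e'.symm (F (e x) i))
    (fun i => by
      have h1 : DifferentiableOn ℂ (fun x => F (e x)) (e ⁻¹' U) :=
        hF.comp e.differentiable.differentiableOn (fun x hx => hx)
      exact e'.symm.differentiable.comp_differentiableOn ((differentiableOn_pi.1 h1) i))
    (fun z hz hz1 => by
      rw [orthonormal_iff_ite]
      intro j k
      have h1 := congrFun (congrFun (hshilov (e z) hz ((hu z).1 hz1)) k) j
      have h2 : (Matrix.of (F (e z)) * (Matrix.of (F (e z)))ᴴ) k j = cdot (F (e z) k) (F (e z) j) := rfl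
      rw [h2, aux_cdot, Matrix.one_apply] at h1
      simp only [eq_comm (a := j)]
      exact h1)
    (p := e.symm p) (by simpa using hpU) ((hu _).2 hp) i
  have key2 : ∀ z ∈ U, F z = F p := by
    intro z hz
    funext i
    have := key i (e.symm z) (by simpa using hz)
    simpa using this
  intro z hz w hw
  rw [key2 z hz, key2 w hw]
end
end
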